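/- arXiv:2102.07714 — 2 statements merged into one kernel-verified Lean document; each statement's English description precedes it below -/
import Mathlib

section
/- For every real λ with 1/2 < λ < 1, the Hausdorff dimension of the Bernoulli convolution measure μ_λ is at least 0.96399; that is, every Borel set X ⊆ ℝ with μ_λ(X) = 1 satisfies dim_H(X) ≥ 0.96399. -/
open MeasureTheory
open scoped ENNReal
open Filter Set Topology

/-!
If the integrals of `x ↦ μ (closedBall x (c * l ^ n))` against `μ` are `O(l ^ (α * n))`, that is, if
`μ` has correlation dimension at least `α`, then for `s < α` these ball measures, weighted by
`l ^ (-s * n)`, have an integrable sum over `n`, and by the mass distribution principle every set of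
positive `μ`-measure has Hausdorff dimension at least `s`. For a Bernoulli convolution the integrals
measure how close two independent `μ`-random points `u`, `v` are. Applying the self-similarity of
`μ` to both points replaces `u - v` by `l * (u - v) + η`, where `η` is `0`, `2`, `-2` with
probabilities `1/2`, `1/4`, `1/4`, so the integrals are controlled by the iterates of the transfer
operator of this random walk. They decay like `l ^ (α * n)` as soon as there is a bounded
supersolution that is at least `1` near `0`: a function `h` with `transfer l h ≤ l ^ α * h`.

Step functions that are supersolutions for all `l` in a short interval at once are found
numerically and verified in integer arithmetic; they cover `1 / 2 ≤ l ≤ 0.7072`. The remaining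
parameters are reached by taking square roots: two steps with parameter `l` are one step with
parameter `l ^ 2`, up to an averaging that cannot increase suprema.
-/

theorem exists_measure_inter_forall_le_mul_pow_ne_zero {Ω : Type*} [MeasurableSpace Ω]
    {μ : Measure Ω} {E : Set Ω} {f : ℕ → Ω → ℝ≥0∞} {a b C : ℝ≥0∞} (hE : μ E ≠ 0)
    (hf : ∀ n, AEMeasurable (f n) μ) (hC : C ≠ ⊤) (hba : b < a) (ha : a ≠ ⊤)
    (H : ∀ n, ∫⁻ x, f n x ∂μ ≤ C * b ^ n) :
    ∃ M : ℕ, μ (E ∩ {x | ∀ n, f n x ≤ M * a ^ n}) ≠ 0 := by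
  have ha0 : a ≠ 0 := hba.ne_bot
  have hg : ∀ n, AEMeasurable (fun x => (a ^ n)⁻¹ * f n x) μ := fun n => (hf n).const_mul _
  have integral_ne_top : ∫⁻ x, ∑' n, (a ^ n)⁻¹ * f n x ∂μ ≠ ⊤ := by
    refine ne_top_of_le_ne_top (b := ∑' n, C * (b / a) ^ n) ?_ ?_
    · rw [ENNReal.tsum_mul_left, ENNReal.tsum_geometric]
      exact ENNReal.mul_ne_top hC (ENNReal.inv_ne_top.2
        (tsub_pos_of_lt ((ENNReal.div_lt_iff (.inl ha0) (.inl ha)).2 (by rwa [one_mul]))).ne')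
    · rw [lintegral_tsum hg]
      gcongr with n
      rw [lintegral_const_mul'' _ (hf n), div_eq_mul_inv, mul_pow, ENNReal.inv_pow, mul_comm,
        ← mul_assoc]
      gcongr
      exact H n
  by_contra! h
  have null : μ (E ∩ {x | ∑' n, (a ^ n)⁻¹ * f n x < ⊤}) = 0 := by
    refine measure_mono_null (fun x hx => ?_) (measure_iUnion_null h)
    obtain ⟨M, hM⟩ := ENNReal.exists_nat_gt (mem_ofPred.1 hx.2).ne
    refine mem_iUnion.2 ⟨M, hx.1, fun n => ?_⟩
    rw [mul_comm, ← ENNReal.inv_mul_le_iff (pow_ne_zero n ha0) (ENNReal.pow_ne_top ha)]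
    exact (ENNReal.le_tsum n).trans hM.le
  exact hE ((measure_inter_conull
    (ae_lt_top' (AEMeasurable.tsum hg) integral_ne_top)).symm.trans null)

section Dimension

open Metric

variable {X : Type*} [MetricSpace X] [MeasurableSpace X] {μ : Measure X} {E : Set X} {s : ℝ}

theorem measure_inter_le_mul_ediam_rpow {δ : ℝ} {K : ℝ≥0∞} (hK : K ≠ ⊤)
    (H : ∀ x ∈ E, ∀ r, 0 < r → r ≤ δ → μ (closedBall x r) ≤ K * ENNReal.ofReal r ^ s)
    {t : Set X} (ht : ediam t < ENNReal.ofReal δ) : μ (t ∩ E) ≤ K * ediam t ^ s := by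
  rcases eq_empty_or_nonempty (t ∩ E) with h | ⟨x, hxt, hxE⟩
  · simp [h]
  have diam_lt : (ediam t).toReal < δ := ENNReal.toReal_lt_of_lt_ofReal ht
  have bound : ∀ᶠ r in 𝓝[>] (ediam t).toReal, μ (t ∩ E) ≤ K * ENNReal.ofReal r ^ s := by
    filter_upwards [Ioc_mem_nhdsGT diam_lt] with r hr
    refine (measure_mono fun y hy => ?_).trans
      (H x hxE r (ENNReal.toReal_nonneg.trans_lt hr.1) hr.2)
    rw [mem_closedBall, dist_edist]
    exact (ENNReal.toReal_mono ht.ne_top (edist_le_ediam_of_mem hy.1 hxt)).trans hr.1.le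
  have limit : Tendsto (fun r => K * ENNReal.ofReal r ^ s) (𝓝[>] (ediam t).toReal)
      (𝓝 (K * ediam t ^ s)) := by
    have h : Tendsto (fun r => ENNReal.ofReal r ^ s) (𝓝 (ediam t).toReal) (𝓝 (ediam t ^ s)) := by
      conv_rhs => rw [← ENNReal.ofReal_toReal ht.ne_top]
      exact ENNReal.continuous_rpow_const.continuousAt.comp ENNReal.continuous_ofReal.continuousAt
    exact ENNReal.Tendsto.const_mul (h.mono_left nhdsWithin_le_nhds) (Or.inr hK)
  exact ge_of_tendsto limit bound

theorem ofReal_le_dimH_of_measure_closedBall_le [BorelSpace X] {δ : ℝ} {K : ℝ≥0∞}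
    (hE : μ E ≠ 0) (hδ : 0 < δ) (hK : K ≠ ⊤)
    (H : ∀ x ∈ E, ∀ r, 0 < r → r ≤ δ → μ (closedBall x r) ≤ K * ENNReal.ofReal r ^ s) :
    ENNReal.ofReal s ≤ dimH E := by
  rcases le_total s 0 with hs | hs
  · simp [ENNReal.ofReal_of_nonpos hs]
  have hK' : K + 1 ≠ ⊤ := by simp [hK]
  have key : (K + 1)⁻¹ • μ.restrict E ≤ Measure.hausdorffMeasure s := by
    refine Measure.le_hausdorffMeasure s _ (ENNReal.ofReal (δ / 2)) (by simpa) fun t ht => ?_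
    have ht' : ediam (closure t) < ENNReal.ofReal δ := by
      rw [ediam_closure]
      exact ht.trans_lt ((ENNReal.ofReal_lt_ofReal_iff hδ).2 (half_lt_self hδ))
    rw [Measure.smul_apply, smul_eq_mul, ENNReal.inv_mul_le_iff (by simp) hK']
    calc μ.restrict E t ≤ μ.restrict E (closure t) := measure_mono subset_closure
      _ = μ (closure t ∩ E) := Measure.restrict_apply isClosed_closure.measurableSet
      _ ≤ K * ediam t ^ s := by
        rw [← ediam_closure t]
        exact measure_inter_le_mul_ediam_rpow hK H ht'
      _ ≤ (K + 1) * ediam t ^ s := by gcongr; exact le_self_add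
  have hausdorff_ne_zero : Measure.hausdorffMeasure s E ≠ 0 := by
    refine (lt_of_lt_of_le ?_ (key E)).ne'
    rw [Measure.smul_apply, smul_eq_mul, Measure.restrict_apply_self]
    exact ENNReal.mul_pos (ENNReal.inv_ne_zero.2 hK') hE
  exact le_dimH_of_hausdorffMeasure_ne_zero (d := s.toNNReal) (by rwa [Real.coe_toNNReal s hs])

theorem measure_closedBall_le_of_geometric {x : X} {c q r : ℝ} {M : ℝ≥0∞} (hs : 0 ≤ s)
    (hq : 0 < q) (hq1 : q < 1)
    (H : ∀ n : ℕ, μ (closedBall x (c * q ^ n)) ≤ M * (ENNReal.ofReal q ^ s) ^ n)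
    (hr : 0 < r) (hrc : r ≤ c) :
    μ (closedBall x r) ≤ M * (ENNReal.ofReal (c * q) ^ s)⁻¹ * ENNReal.ofReal r ^ s := by
  have hc : 0 < c := hr.trans_le hrc
  obtain ⟨n, hn, hn'⟩ :=
    exists_nat_pow_near_of_lt_one (div_pos hr hc) ((div_le_one hc).2 hrc) hq hq1
  rw [lt_div_iff₀' hc] at hn
  rw [div_le_iff₀' hc] at hn'
  have hcq : ENNReal.ofReal (c * q) ^ s ≠ 0 := by
    simp [ENNReal.rpow_eq_zero_iff, mul_pos hc hq, hs.not_gt]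
  have hcq' : ENNReal.ofReal (c * q) ^ s ≠ ⊤ :=
    ENNReal.rpow_ne_top_of_nonneg hs ENNReal.ofReal_ne_top
  calc μ (closedBall x r) ≤ M * (ENNReal.ofReal q ^ s) ^ n :=
        (measure_mono (closedBall_subset_closedBall hn')).trans (H n)
    _ ≤ M * ((ENNReal.ofReal (c * q) ^ s)⁻¹ * ENNReal.ofReal r ^ s) := by
        gcongr
        rw [mul_comm, ← div_eq_mul_inv, ENNReal.le_div_iff_mul_le (.inl hcq) (.inl hcq'),
          ← ENNReal.rpow_mul_natCast, mul_comm s, ENNReal.rpow_natCast_mul,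
          ← ENNReal.mul_rpow_of_nonneg _ _ hs,
          ← ENNReal.ofReal_pow hq.le, ← ENNReal.ofReal_mul (by positivity)]
        gcongr
        exact (show q ^ n * (c * q) = c * q ^ (n + 1) by ring).trans_le hn.le
    _ = _ := (mul_assoc _ _ _).symm

theorem measurable_measure_closedBall [OpensMeasurableSpace X] [SecondCountableTopology X]
    [SFinite μ] (r : ℝ) : Measurable fun x => μ (closedBall x r) :=
  measurable_measure_prodMk_left (s := {p : X × X | dist p.2 p.1 ≤ r})
    (isClosed_le (by fun_prop) (by fun_prop)).measurableSet

theorem le_dimH_of_lintegral_measure_closedBall_le [BorelSpace X] [SecondCountableTopology X]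
    [SFinite μ] {c q α : ℝ} {C : ℝ≥0∞} (hE : μ E ≠ 0) (hc : 0 < c) (hq : 0 < q) (hq1 : q < 1)
    (hC : C ≠ ⊤)
    (H : ∀ n : ℕ, ∫⁻ x, μ (closedBall x (c * q ^ n)) ∂μ ≤ C * (ENNReal.ofReal q ^ α) ^ n) :
    ENNReal.ofReal α ≤ dimH E := by
  have hq1' : ENNReal.ofReal q < 1 := by simpa
  suffices h : ∀ s < α, ENNReal.ofReal s ≤ dimH E from
    le_of_tendsto (ENNReal.continuous_ofReal.continuousAt.mono_left nhdsWithin_le_nhds)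
      (eventually_nhdsWithin_of_forall (s := Iio α) h)
  intro s hsα
  rcases le_total s 0 with hs | hs
  · simp [ENNReal.ofReal_of_nonpos hs]
  obtain ⟨M, hM⟩ := exists_measure_inter_forall_le_mul_pow_ne_zero hE
    (fun n => (measurable_measure_closedBall (c * q ^ n)).aemeasurable) hC
    (ENNReal.rpow_lt_rpow_of_exponent_gt (by simpa) hq1' hsα)
    (ENNReal.rpow_ne_top_of_nonneg hs ENNReal.ofReal_ne_top) H
  refine (ofReal_le_dimH_of_measure_closedBall_le
    (K := M * (ENNReal.ofReal (c * q) ^ s)⁻¹) hM hc ?_ fun x hx r hr hrc =>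
      measure_closedBall_le_of_geometric hs hq hq1 hx.2 hr hrc).trans (dimH_mono inter_subset_left)
  refine ENNReal.mul_ne_top (ENNReal.natCast_ne_top M) (ENNReal.inv_ne_top.2 ?_)
  simp [ENNReal.rpow_eq_zero_iff, mul_pos hc hq, hs.not_gt]

end Dimension

section Transfer

variable {l s t α : ℝ} {g h : ℝ → ℝ≥0∞} {M : ℝ≥0∞}

/-- The Markov operator of the symmetric lazy random walk on `ℝ` with steps `0`, `s`, `-s` of
probabilities `1/2`, `1/4`, `1/4`. This is the law of the difference of two independent uniform
variables on `{-s / 2, s / 2}`. -/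
noncomputable def lazyAverage (s : ℝ) (h : ℝ → ℝ≥0∞) (x : ℝ) : ℝ≥0∞ :=
  4⁻¹ * (2 * h x + h (x - s) + h (x + s))

/-- The transfer operator of the difference of two independent points of the Bernoulli convolution
with parameter `l`: if `u` and `v` are such points, then `l * (u - v) + η` has the law of `u - v`,
where `η` takes a step of the walk in `lazyAverage 2`. -/
noncomputable def transfer (l : ℝ) (h : ℝ → ℝ≥0∞) : ℝ → ℝ≥0∞ :=
  lazyAverage 2 fun x => h (x / l)

theorem lazyAverage_mono : Monotone (lazyAverage s) := fun g h hgh x => by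
  simp only [lazyAverage]
  gcongr <;> apply hgh

theorem transfer_mono : Monotone (transfer l) := fun _ _ hgh =>
  lazyAverage_mono fun x => hgh (x / l)

theorem lazyAverage_const (M : ℝ≥0∞) : lazyAverage s (fun _ => M) = fun _ => M := by
  funext x
  rw [lazyAverage, show 2 * M + M + M = 4 * M by ring, ← mul_assoc,
    ENNReal.inv_mul_cancel (by norm_num) (by norm_num), one_mul]

theorem lazyAverage_le_const (H : ∀ x, h x ≤ M) (x : ℝ) : lazyAverage s h x ≤ M :=
  (lazyAverage_mono H x).trans_eq (congrFun (lazyAverage_const M) x)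

theorem transfer_iterate_le_const (H : ∀ x, h x ≤ M) (n : ℕ) (x : ℝ) :
    (transfer l)^[n] h x ≤ M := by
  have fixed : transfer l (fun _ => M) = fun _ => M := lazyAverage_const M
  exact (transfer_mono.iterate n H x).trans_eq (congrFun (Function.iterate_fixed fixed n) x)

theorem lazyAverage_comm : lazyAverage s (lazyAverage t h) = lazyAverage t (lazyAverage s h) := by
  funext x
  simp only [lazyAverage, sub_right_comm x s t, add_right_comm x s t, sub_add_eq_add_sub x]
  ring

theorem transfer_const_mul (M : ℝ≥0∞) :
    transfer l (fun x => M * h x) = fun x => M * transfer l h x := by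
  funext x
  simp only [transfer, lazyAverage]
  ring

theorem measurable_lazyAverage (hh : Measurable h) : Measurable (lazyAverage s h) := by
  unfold lazyAverage
  fun_prop

theorem measurable_transfer_iterate (hh : Measurable h) (n : ℕ) :
    Measurable ((transfer l)^[n] h) := by
  induction n generalizing h with
  | zero => exact hh
  | succ _ ih => exact ih (measurable_lazyAverage (by fun_prop))

theorem transfer_lazyAverage (hl : l ≠ 0) :
    transfer l (lazyAverage s h) = lazyAverage (l * s) (transfer l h) := by
  rw [transfer, transfer, ← lazyAverage_comm]
  congr 1
  funext x
  simp only [lazyAverage, sub_div, add_div, mul_div_cancel_left₀ s hl]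

theorem transfer_iterate_lazyAverage (hl : l ≠ 0) (n : ℕ) :
    (transfer l)^[n] (lazyAverage s h) = lazyAverage (l ^ n * s) ((transfer l)^[n] h) := by
  induction n with
  | zero => simp
  | succ n ih =>
    rw [Function.iterate_succ_apply', Function.iterate_succ_apply', ih, transfer_lazyAverage hl,
      ← mul_assoc, ← pow_succ']

theorem transfer_transfer (hl : l ≠ 0) :
    transfer l (transfer l h) = lazyAverage (l * 2) (transfer (l ^ 2) h) := by
  rw [show transfer l h = lazyAverage 2 fun x => h (x / l) from rfl, transfer_lazyAverage hl]
  simp only [transfer, div_div, sq]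

theorem transfer_iterate_two_mul_le (hl : l ≠ 0) {n : ℕ}
    (H : ∀ x, (transfer (l ^ 2))^[n] h x ≤ M) (x : ℝ) : (transfer l)^[2 * n] h x ≤ M := by
  induction n generalizing h x with
  | zero => exact H x
  | succ n ih =>
    rw [show 2 * (n + 1) = 2 * n + 1 + 1 by ring, Function.iterate_succ_apply,
      Function.iterate_succ_apply, transfer_transfer hl, transfer_iterate_lazyAverage hl]
    exact lazyAverage_le_const (fun y => ih H y) x

theorem transfer_iterate_le_pow_mul (H : ∀ x, transfer l h x ≤ M * h x) (n : ℕ) (x : ℝ) :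
    (transfer l)^[n] h x ≤ M ^ n * h x := by
  induction n generalizing x with
  | zero => simp
  | succ n ih =>
    calc (transfer l)^[n + 1] h x = transfer l ((transfer l)^[n] h) x := by
          rw [Function.iterate_succ_apply']
      _ ≤ transfer l (fun y => M ^ n * h y) x := transfer_mono ih x
      _ = M ^ n * transfer l h x := by rw [transfer_const_mul]
      _ ≤ M ^ n * (M * h x) := by gcongr; exact H x
      _ = M ^ (n + 1) * h x := by rw [pow_succ, mul_assoc]

/-- The transfer operator with parameter `l` contracts the indicator of some neighbourhood of `0`
uniformly at the exponential rate `l ^ α`. -/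
def HasDecay (α l : ℝ) : Prop :=
  ∃ c > 0, ∃ C ≠ ⊤, ∀ (n : ℕ) (x : ℝ), (transfer l)^[n] ((Metric.closedBall 0 c).indicator 1) x ≤
    C * (ENNReal.ofReal l ^ α) ^ n

theorem HasDecay.of_supersolution {c : ℝ} (hc : 0 < c) (hM : M ≠ ⊤) (h_le : ∀ x, h x ≤ M)
    (one_le : ∀ x ∈ Metric.closedBall 0 c, 1 ≤ h x)
    (supersolution : ∀ x, transfer l h x ≤ ENNReal.ofReal l ^ α * h x) : HasDecay α l := by
  refine ⟨c, hc, M, hM, fun n x => ?_⟩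
  calc (transfer l)^[n] ((Metric.closedBall 0 c).indicator 1) x
      ≤ (transfer l)^[n] h x :=
        transfer_mono.iterate n (Set.indicator_le one_le) x
    _ ≤ (ENNReal.ofReal l ^ α) ^ n * h x := transfer_iterate_le_pow_mul supersolution n x
    _ ≤ M * (ENNReal.ofReal l ^ α) ^ n := by rw [mul_comm]; gcongr; exact h_le x

theorem HasDecay.of_sq (hl : 0 < l) (H : HasDecay α (l ^ 2)) : HasDecay α l := by
  obtain ⟨c, hc, C, hC, H⟩ := H
  set a := ENNReal.ofReal l ^ α with ha
  have ha0 : a ≠ 0 := by simp [ha, ENNReal.rpow_eq_zero_iff, hl]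
  have ha1 : a ≠ ⊤ := by simp [ha, ENNReal.rpow_eq_top_iff, hl]
  have even (k : ℕ) (x : ℝ) :
      (transfer l)^[2 * k] ((Metric.closedBall 0 c).indicator 1) x ≤ C * a ^ (2 * k) := by
    refine transfer_iterate_two_mul_le hl.ne' (fun y => (H k y).trans_eq ?_) x
    rw [ENNReal.ofReal_pow hl.le, ← ENNReal.rpow_natCast_mul, mul_comm (_ : ℝ) α,
      ENNReal.rpow_mul_natCast, pow_mul]
  refine ⟨c, hc, C + C / a, by simp [hC, ENNReal.div_eq_top, ha0], fun n x => ?_⟩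
  obtain ⟨k, rfl | rfl⟩ := n.even_or_odd'
  · exact (even k x).trans (by gcongr; exact le_self_add)
  · rw [Function.iterate_succ_apply']
    calc transfer l ((transfer l)^[2 * k] ((Metric.closedBall 0 c).indicator 1)) x
        ≤ C * a ^ (2 * k) := transfer_iterate_le_const (even k) 1 x
      _ = C / a * a ^ (2 * k + 1) := by
        rw [pow_succ', ← mul_assoc, ENNReal.div_mul_cancel ha0 ha1]
      _ ≤ (C + C / a) * a ^ (2 * k + 1) := by gcongr; exact le_add_self

/-- `μ` satisfies the self-similarity equation of the Bernoulli convolution with parameter `l`.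
For `|l| < 1` it determines a finite measure up to its total mass. -/
def IsBernoulliConvolution (l : ℝ) (μ : Measure ℝ) : Prop :=
  μ = (1 / 2 : ℝ≥0∞) • Measure.map (fun x : ℝ => l * x - 1) μ
    + (1 / 2 : ℝ≥0∞) • Measure.map (fun x : ℝ => l * x + 1) μ

namespace IsBernoulliConvolution

variable {μ : Measure ℝ}

theorem lintegral_eq (hμ : IsBernoulliConvolution l μ) (hg : Measurable g) :
    ∫⁻ x, g x ∂μ = 2⁻¹ * (∫⁻ x, g (l * x - 1) ∂μ + ∫⁻ x, g (l * x + 1) ∂μ) := by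
  conv_lhs => rw [hμ]
  rw [lintegral_add_measure, lintegral_smul_measure, lintegral_smul_measure,
    lintegral_map hg (by fun_prop), lintegral_map hg (by fun_prop), smul_eq_mul, smul_eq_mul,
    one_div, mul_add]

theorem lintegral_sub_eq [SFinite μ] (hμ : IsBernoulliConvolution l μ) (hg : Measurable g) :
    ∫⁻ u, ∫⁻ v, g (u - v) ∂μ ∂μ = ∫⁻ u, ∫⁻ v, lazyAverage 2 g (l * (u - v)) ∂μ ∂μ := by
  let J (t : ℝ) : ℝ≥0∞ := ∫⁻ u, ∫⁻ v, g (l * (u - v) + t) ∂μ ∂μ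
  have measurable_inner {k : ℝ → ℝ → ℝ≥0∞} (hk : Measurable k.uncurry) :
      Measurable fun u => ∫⁻ v, k u v ∂μ := hk.lintegral_prod_right
  have measurable_J (t : ℝ) : Measurable fun u => ∫⁻ v, g (l * (u - v) + t) ∂μ :=
    measurable_inner (by fun_prop)
  have expand_inner (e : ℝ) :
      ∫⁻ u, ∫⁻ v, g (l * u + e - v) ∂μ ∂μ = 2⁻¹ * (J (e + 1) + J (e - 1)) := by
    rw [← lintegral_add_left (measurable_J _), ← lintegral_const_mul _ (by fun_prop)]
    refine lintegral_congr fun u => ?_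
    rw [hμ.lintegral_eq (g := fun v => g (l * u + e - v)) (by fun_prop)]
    congr! 5 <;> ring
  have expand_average : ∫⁻ u, ∫⁻ v, lazyAverage 2 g (l * (u - v)) ∂μ ∂μ =
      4⁻¹ * (2 * J 0 + J (-2) + J 2) := by
    simp only [lazyAverage]
    rw [← lintegral_const_mul _ (measurable_J 0), ← lintegral_add_left (by fun_prop),
      ← lintegral_add_left (by fun_prop), ← lintegral_const_mul _ (by fun_prop)]
    refine lintegral_congr fun u => ?_
    rw [lintegral_const_mul _ (by fun_prop), lintegral_add_left (by fun_prop),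
      lintegral_add_left (by fun_prop), lintegral_const_mul _ (by fun_prop)]
    simp only [add_zero, sub_eq_add_neg _ (2 : ℝ)]
  have four : (4 : ℝ≥0∞)⁻¹ = 2⁻¹ * 2⁻¹ := by
    rw [← ENNReal.mul_inv (by norm_num) (by norm_num)]; norm_num
  rw [hμ.lintegral_eq (measurable_inner (by fun_prop)), expand_average, four]
  simp only [sub_eq_add_neg _ (1 : ℝ)]
  rw [expand_inner, expand_inner]
  norm_num
  ring

theorem lintegral_sub_div_pow_eq [SFinite μ] (hμ : IsBernoulliConvolution l μ) (hl : l ≠ 0)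
    (hh : Measurable h) (n : ℕ) :
    ∫⁻ u, ∫⁻ v, h ((u - v) / l ^ n) ∂μ ∂μ =
      ∫⁻ u, ∫⁻ v, (transfer l)^[n] h (l ^ n * (u - v)) ∂μ ∂μ := by
  induction n generalizing h with
  | zero => simp
  | succ n ih =>
    have measurable_iterate : Measurable ((transfer l)^[n] fun x => h (x / l)) :=
      measurable_transfer_iterate (by fun_prop) n
    calc ∫⁻ u, ∫⁻ v, h ((u - v) / l ^ (n + 1)) ∂μ ∂μ
        = ∫⁻ u, ∫⁻ v, (transfer l)^[n] (fun x => h (x / l)) (l ^ n * (u - v)) ∂μ ∂μ := by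
          rw [← ih (h := fun x => h (x / l)) (by fun_prop)]
          simp only [div_div, pow_succ]
      _ = ∫⁻ u, ∫⁻ v, lazyAverage 2 (fun y => (transfer l)^[n] (fun x => h (x / l)) (l ^ n * y))
            (l * (u - v)) ∂μ ∂μ := hμ.lintegral_sub_eq (measurable_iterate.comp (by fun_prop))
      _ = ∫⁻ u, ∫⁻ v, (transfer l)^[n + 1] h (l ^ (n + 1) * (u - v)) ∂μ ∂μ := by
          rw [Function.iterate_succ_apply, transfer, transfer_iterate_lazyAverage hl]
          simp only [lazyAverage, mul_sub, mul_add, pow_succ, mul_assoc]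

theorem lintegral_measure_closedBall_le [SFinite μ] (hμ : IsBernoulliConvolution l μ) (hl : 0 < l)
    {c : ℝ} {n : ℕ} (H : ∀ x, (transfer l)^[n] ((Metric.closedBall 0 c).indicator 1) x ≤ M) :
    ∫⁻ u, μ (Metric.closedBall u (c * l ^ n)) ∂μ ≤ M * μ univ ^ 2 := by
  have measure_eq (u : ℝ) : μ (Metric.closedBall u (c * l ^ n)) =
      ∫⁻ v, (Metric.closedBall 0 c).indicator 1 ((u - v) / l ^ n) ∂μ := by
    rw [← lintegral_indicator_one Metric.isClosed_closedBall.measurableSet]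
    refine lintegral_congr fun v => indicator_eq_indicator ?_ rfl
    rw [mem_closedBall_zero_iff, norm_div, norm_pow, Real.norm_of_nonneg hl.le,
      div_le_iff₀ (by positivity), Metric.mem_closedBall', Real.dist_eq, Real.norm_eq_abs]
  simp_rw [measure_eq]
  rw [hμ.lintegral_sub_div_pow_eq hl.ne'
    (measurable_one.indicator Metric.isClosed_closedBall.measurableSet)]
  calc _ ≤ ∫⁻ _, ∫⁻ _, M ∂μ ∂μ := lintegral_mono fun u => lintegral_mono fun v => H _
    _ = M * μ univ ^ 2 := by rw [lintegral_const, lintegral_const, sq, mul_assoc]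

theorem le_dimH_of_hasDecay [IsFiniteMeasure μ] (hμ : IsBernoulliConvolution l μ) (hl : 0 < l)
    (hl1 : l < 1) (H : HasDecay α l) {E : Set ℝ} (hE : μ E ≠ 0) : ENNReal.ofReal α ≤ dimH E := by
  obtain ⟨c, hc, C, hC, H⟩ := H
  refine le_dimH_of_lintegral_measure_closedBall_le (C := C * μ univ ^ 2) hE hc hl hl1
    (ENNReal.mul_ne_top hC (ENNReal.pow_ne_top (measure_ne_top μ univ))) fun n => ?_
  exact (hμ.lintegral_measure_closedBall_le hl (H n)).trans_eq (mul_right_comm _ _ _)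

end IsBernoulliConvolution

end Transfer

theorem forall_mem_Ico_of_sq {P : ℝ → Prop} {a b : ℝ} (ha : 0 < a) (hb : 0 < b) (hab : a ≤ b ^ 2)
    (base : ∀ l ∈ Icc a b, P l) (sq : ∀ l, 0 < l → P (l ^ 2) → P l) : ∀ l ∈ Ico a 1, P l := by
  intro l hl
  obtain ⟨m, hm⟩ := exists_pow_lt_of_lt_one hb hl.2
  replace hm : l ^ 2 ^ m ≤ b :=
    (pow_le_pow_of_le_one (ha.le.trans hl.1) hl.2.le m.lt_two_pow_self.le).trans hm.le
  induction m generalizing l with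
  | zero => exact base l ⟨hl.1, by simpa using hm⟩
  | succ m ih =>
    rcases le_or_gt l b with hlb | hlb
    · exact base l ⟨hl.1, hlb⟩
    · have hl0 := ha.trans_le hl.1
      exact sq l hl0 (ih (l ^ 2) ⟨hab.trans (by gcongr), pow_lt_one₀ hl0.le hl.2 two_ne_zero⟩
        (by rwa [← pow_mul, ← pow_succ']))

theorem exists_mem_Icc_of_isChain {ι R : Type*} [LinearOrder R] {lo hi : ι → R} {L : List ι}
    (hL : L ≠ []) (chain : L.IsChain fun i j => lo j ≤ hi i) {t : R} (head_le : lo (L.head hL) ≤ t)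
    (le_last : t ≤ hi (L.getLast hL)) : ∃ i ∈ L, t ∈ Icc (lo i) (hi i) := by
  induction L with
  | nil => exact absurd rfl hL
  | cons i L ih =>
    rcases le_or_gt t (hi i) with h | h
    · exact ⟨i, List.mem_cons_self, head_le, h⟩
    cases L with
    | nil => exact absurd le_last h.not_ge
    | cons j L =>
      rw [List.isChain_cons_cons] at chain
      obtain ⟨k, hk, htk⟩ := ih (List.cons_ne_nil j L) chain.2 (chain.1.trans h.le) le_last
      exact ⟨k, List.mem_cons_of_mem i hk, htk⟩

theorem abs_sub_natCast_mem_Icc {y : ℝ} {i : ℕ} (hi : y ∈ Icc (i : ℝ) (i + 1)) (k : ℕ) :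
    |y - k| ∈ Icc ((i - k + (k - (i + 1)) : ℕ) : ℝ) ((i - k + (k - (i + 1)) : ℕ) + 1) := by
  rcases le_or_gt k i with h | h
  · have hk : (k : ℝ) ≤ i := Nat.cast_le.2 h
    rw [Nat.sub_eq_zero_of_le (h.trans i.le_succ), add_zero, Nat.cast_sub h,
      abs_of_nonneg (by linarith [hi.1])]
    constructor <;> linarith [hi.1, hi.2]
  · have hk : (i : ℝ) + 1 ≤ k := by exact_mod_cast h
    rw [Nat.sub_eq_zero_of_le h.le, zero_add, Nat.cast_sub h, abs_of_nonpos (by linarith [hi.2])]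
    push_cast
    constructor <;> linarith [hi.1, hi.2]

/-- Numerical data for a supersolution of the transfer operator that works for all parameters in
`[lo / 10 ^ 6, hi / 10 ^ 6]`: the even step function with the given values on consecutive cells of
length `2 / shift` of the half-line, so that the steps `± 2` of the walk shift it by `shift` cells.
The number `rate / 10 ^ 6` bounds the contraction factor. -/
structure Certificate where
  lo : ℕ
  hi : ℕ
  rate : ℕ
  shift : ℕ
  weights : List ℕ

namespace Certificate

/-- The number of cells in the support of the step function on the half-line. -/
def size (c : Certificate) : ℕ := c.weights.length

/-- The weights written as the base `2 ^ 16` digits of a single number, giving the kernel random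
access to them through its built-in arithmetic. -/
def packed (c : Certificate) : ℕ := Nat.ofDigits (2 ^ 16) c.weights

/-- The value of the step function on cell `i`, which is `0` outside its support. Here and in
`windowMax` the operations are the functions of `Nat` underlying the usual notation, because the
kernel would unfold the notation anew in each of many thousand evaluations. -/
def weight (c : Certificate) (i : ℕ) : ℕ := (c.packed.shiftRight (i.mul 16)).mod 65536

/-- The largest of the `n` weights starting with cell `first`; the truncated difference makes
`m - w + w` the maximum of `m` and `w`. -/
def windowMax (c : Certificate) (first n : ℕ) : ℕ :=
  n.rec 0 fun k m => (m.sub (c.weight (first.add k))).add (c.weight (first.add k))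

/-- The largest weight of a cell meeting the image of cell `i` under division by some parameter in
`[lo / 10 ^ 6, hi / 10 ^ 6]`. -/
def dilatedMax (c : Certificate) (i : ℕ) : ℕ :=
  c.windowMax (i * 1000000 / c.hi) ((i + 1) * 1000000 / c.lo + 1 - i * 1000000 / c.hi)

/-- The step function is a supersolution with exponent `241 / 250 = 0.964`. The field `support` says
that the cells `j ≥ size` receive nothing from the support; `rate_le` says that
`rate / 10 ^ 6 ≤ (lo / 10 ^ 6) ^ (241 / 250)`. The cells `j - shift` and `j + shift` in
`supersolution` are the translates of cell `j`; the former is reflected to cell `shift - (j + 1)` of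
the half-line when `j < shift`, and a sum of truncated differences covers both cases. -/
structure Valid (c : Certificate) : Prop where
  lo_pos : 0 < c.lo
  shift_pos : 0 < c.shift
  weight_zero_pos : 0 < c.weight 0
  packed_lt : c.packed < 2 ^ (16 * c.size)
  support : c.shift * 1000000 + c.size * c.hi ≤ c.size * 1000000
  rate_le : c.rate ^ 250 ≤ c.lo ^ 241 * 1000000 ^ 9
  supersolution : ∀ j ∈ List.range c.size,
    (2 * c.dilatedMax j + c.dilatedMax (j - c.shift + (c.shift - (j + 1)))
      + c.dilatedMax (j + c.shift)) * 1000000 ≤ 4 * c.rate * c.weight j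

instance (c : Certificate) : Decidable c.Valid :=
  decidable_of_iff (0 < c.lo ∧ 0 < c.shift ∧ 0 < c.weight 0 ∧
    c.packed < 2 ^ (16 * c.size) ∧ c.shift * 1000000 + c.size * c.hi ≤ c.size * 1000000 ∧
    c.rate ^ 250 ≤ c.lo ^ 241 * 1000000 ^ 9 ∧ ∀ j ∈ List.range c.size,
      (2 * c.dilatedMax j + c.dilatedMax (j - c.shift + (c.shift - (j + 1)))
        + c.dilatedMax (j + c.shift)) * 1000000 ≤ 4 * c.rate * c.weight j)
    ⟨fun ⟨h₁, h₂, h₃, h₄, h₅, h₆, h₇⟩ => ⟨h₁, h₂, h₃, h₄, h₅, h₆, h₇⟩,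
      fun ⟨h₁, h₂, h₃, h₄, h₅, h₆, h₇⟩ => ⟨h₁, h₂, h₃, h₄, h₅, h₆, h₇⟩⟩

/-- The even step function on `ℝ` that the certificate encodes. -/
noncomputable def stepFunction (c : Certificate) (x : ℝ) : ℝ≥0∞ :=
  c.weight ⌊|x| * (c.shift / 2)⌋₊

variable {c : Certificate} {l y : ℝ}

theorem weight_lt (c : Certificate) (i : ℕ) : c.weight i < 65536 := Nat.mod_lt _ (by norm_num)

theorem weight_eq_zero (h : c.packed < 2 ^ (16 * c.size)) {i : ℕ} (hi : c.size ≤ i) :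
    c.weight i = 0 := by
  have shift_eq : c.packed >>> (i * 16) = 0 := by
    rw [Nat.shiftRight_eq_div_pow]
    exact Nat.div_eq_of_lt (h.trans_le (Nat.pow_le_pow_right two_pos (by omega)))
  exact congrArg (· % 65536) shift_eq

theorem weight_le_windowMax {first n k : ℕ} (hk : first ≤ k) (hkn : k < first + n) :
    c.weight k ≤ c.windowMax first n := by
  induction n with
  | zero => omega
  | succ n ih =>
    change _ ≤ c.windowMax first n - c.weight (first + n) + c.weight (first + n)
    rcases (Nat.lt_succ_iff.1 hkn).lt_or_eq with h | rfl
    · exact (ih h).trans le_tsub_add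
    · exact Nat.le_add_left _ _

theorem weight_floor_div_le_dilatedMax (hlo : 0 < c.lo) (hl : l * 1000000 ∈ Icc (c.lo : ℝ) c.hi)
    {i : ℕ} (hi : y ∈ Icc (i : ℝ) (i + 1)) : c.weight ⌊y / l⌋₊ ≤ c.dilatedMax i := by
  have lo_pos : (0 : ℝ) < c.lo := Nat.cast_pos.2 hlo
  have l_pos : 0 < l := by linarith [hl.1]
  have y_nonneg : 0 ≤ y := i.cast_nonneg.trans hi.1
  have first_le : i * 1000000 / c.hi ≤ ⌊y / l⌋₊ := by
    refine Nat.le_floor (Nat.cast_div_le.trans ?_)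
    rw [div_le_div_iff₀ (by linarith [hl.1, hl.2]) l_pos]
    push_cast
    nlinarith [hi.1, hl.2]
  have le_last : ⌊y / l⌋₊ ≤ (i + 1) * 1000000 / c.lo := by
    rw [Nat.le_div_iff_mul_le hlo]
    suffices h : (⌊y / l⌋₊ : ℝ) * c.lo ≤ (i + 1) * 1000000 by exact_mod_cast h
    calc (⌊y / l⌋₊ : ℝ) * c.lo ≤ y / l * (l * 1000000) := by
          gcongr
          exacts [Nat.floor_le (by positivity), hl.1]
      _ = y * 1000000 := by field_simp
      _ ≤ (i + 1) * 1000000 := by gcongr; exact hi.2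
  exact weight_le_windowMax first_le (by omega)

theorem Valid.weight_sum_le (hc : c.Valid) (hl : l * 1000000 ∈ Icc (c.lo : ℝ) c.hi) (hy : 0 ≤ y) :
    (2 * c.weight ⌊y / l⌋₊ + c.weight ⌊|y - c.shift| / l⌋₊
      + c.weight ⌊(y + c.shift) / l⌋₊) * 1000000 ≤ 4 * c.rate * c.weight ⌊y⌋₊ := by
  have mem_floor : y ∈ Icc (⌊y⌋₊ : ℝ) (⌊y⌋₊ + 1) :=
    ⟨Nat.floor_le hy, (Nat.lt_floor_add_one y).le⟩
  have shift_nonneg : (0 : ℝ) ≤ c.shift := c.shift.cast_nonneg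
  rcases lt_or_ge ⌊y⌋₊ c.size with h | h
  · refine le_trans ?_ (hc.supersolution _ (List.mem_range.2 h))
    gcongr <;> apply weight_floor_div_le_dilatedMax hc.lo_pos hl
    · exact mem_floor
    · exact abs_sub_natCast_mem_Icc mem_floor c.shift
    · push_cast
      constructor <;> linarith [mem_floor.1, mem_floor.2]
  · have l_pos : 0 < l := by linarith [hl.1, (Nat.cast_pos (α := ℝ)).2 hc.lo_pos]
    have support : (c.shift : ℝ) + c.size * l ≤ y := by
      have h₁ : (c.shift : ℝ) * 1000000 + c.size * c.hi ≤ c.size * 1000000 := by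
        exact_mod_cast hc.support
      have h₂ : (c.size : ℝ) ≤ ⌊y⌋₊ := Nat.cast_le.2 h
      nlinarith [hl.2, mem_floor.1]
    have weight_zero {z : ℝ} (hz : y - c.shift ≤ z) : c.weight ⌊z / l⌋₊ = 0 :=
      weight_eq_zero hc.packed_lt (Nat.le_floor ((le_div_iff₀ l_pos).2 (by linarith)))
    rw [weight_zero (by linarith [shift_nonneg]), weight_zero (le_abs_self _),
      weight_zero (by linarith [shift_nonneg])]
    exact Nat.zero_le _

theorem Valid.rate_le_rpow (hc : c.Valid) (hl : l * 1000000 ∈ Icc (c.lo : ℝ) c.hi) :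
    (c.rate : ℝ≥0∞) ≤ ENNReal.ofReal l ^ (241 / 250 : ℝ) * 1000000 := by
  have l_pos : 0 < l := by linarith [hl.1, (Nat.cast_pos (α := ℝ)).2 hc.lo_pos]
  suffices h : (c.rate : ℝ) ≤ l ^ (241 / 250 : ℝ) * 1000000 by
    rw [ENNReal.ofReal_rpow_of_pos l_pos]
    calc (c.rate : ℝ≥0∞) = ENNReal.ofReal c.rate := (ENNReal.ofReal_natCast _).symm
      _ ≤ ENNReal.ofReal (l ^ (241 / 250 : ℝ) * 1000000) := ENNReal.ofReal_le_ofReal h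
      _ = _ := by rw [ENNReal.ofReal_mul (by positivity), ENNReal.ofReal_ofNat]
  refine le_of_pow_le_pow_left₀ (n := 250) (by norm_num) (by positivity) ?_
  calc (c.rate : ℝ) ^ 250 ≤ c.lo ^ 241 * 1000000 ^ 9 := by exact_mod_cast hc.rate_le
    _ ≤ (l * 1000000) ^ 241 * 1000000 ^ 9 := by gcongr; exact hl.1
    _ = l ^ 241 * 1000000 ^ 250 := by ring
    _ = (l ^ (241 / 250 : ℝ) * 1000000) ^ 250 := by
      rw [mul_pow, ← Real.rpow_mul_natCast l_pos.le, ← Real.rpow_natCast l 241]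
      norm_num

theorem stepFunction_div (c : Certificate) (hl : 0 < l) (x : ℝ) :
    c.stepFunction (x / l) = c.weight ⌊|x| * (c.shift / 2) / l⌋₊ := by
  rw [stepFunction, abs_div, abs_of_pos hl, div_mul_eq_mul_div]

theorem stepFunction_sub_add_stepFunction_add (c : Certificate) (hl : 0 < l) (x : ℝ) :
    c.stepFunction ((x - 2) / l) + c.stepFunction ((x + 2) / l) =
      c.weight ⌊|(|x| * (c.shift / 2) - c.shift)| / l⌋₊ +
        c.weight ⌊(|x| * (c.shift / 2) + c.shift) / l⌋₊ := by
  have near : |(|x| * (c.shift / 2) - c.shift : ℝ)| = |(|x| - 2)| * (c.shift / 2) := by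
    rw [show |x| * (c.shift / 2) - c.shift = (|x| - 2) * (c.shift / 2) by ring, abs_mul,
      abs_of_nonneg (by positivity : (0 : ℝ) ≤ c.shift / 2)]
  have far : |x| * (c.shift / 2) + c.shift = (|x| + 2) * (c.shift / 2) := by ring
  rw [c.stepFunction_div hl, c.stepFunction_div hl, near, far]
  rcases le_total 0 x with hx | hx
  · rw [abs_of_nonneg hx, abs_of_nonneg (by linarith : 0 ≤ x + 2)]
  · rw [abs_of_nonpos hx, abs_of_nonpos (by linarith : x - 2 ≤ 0), ← abs_neg (x + 2), neg_sub,
      neg_add', neg_add_eq_sub, add_comm]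

theorem Valid.transfer_stepFunction_le (hc : c.Valid) (hl : l * 1000000 ∈ Icc (c.lo : ℝ) c.hi)
    (x : ℝ) : transfer l c.stepFunction x ≤
      ENNReal.ofReal l ^ (241 / 250 : ℝ) * c.stepFunction x := by
  have l_pos : 0 < l := by linarith [hl.1, (Nat.cast_pos (α := ℝ)).2 hc.lo_pos]
  set y := |x| * (c.shift / 2) with hy
  have key : (2 * c.weight ⌊y / l⌋₊ + c.weight ⌊|y - c.shift| / l⌋₊
      + c.weight ⌊(y + c.shift) / l⌋₊ : ℝ≥0∞) * 1000000 ≤ 4 * c.rate * c.weight ⌊y⌋₊ := by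
    exact_mod_cast hc.weight_sum_le hl (y := y) (by positivity)
  rw [transfer, lazyAverage, add_assoc, c.stepFunction_sub_add_stepFunction_add l_pos,
    c.stepFunction_div l_pos, ← hy, ← add_assoc,
    ENNReal.inv_mul_le_iff (by norm_num) (by norm_num),
    ← ENNReal.mul_le_mul_iff_left (c := 1000000) (by norm_num) (by norm_num)]
  refine key.trans ?_
  calc 4 * (c.rate : ℝ≥0∞) * c.weight ⌊y⌋₊
      ≤ 4 * (ENNReal.ofReal l ^ (241 / 250 : ℝ) * 1000000) * c.weight ⌊y⌋₊ := by
        gcongr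
        exact hc.rate_le_rpow hl
    _ = 4 * (ENNReal.ofReal l ^ (241 / 250 : ℝ) * c.stepFunction x) * 1000000 := by
        rw [stepFunction]
        ring

theorem Valid.hasDecay (hc : c.Valid) (hl : l * 1000000 ∈ Icc (c.lo : ℝ) c.hi) :
    HasDecay (241 / 250) l := by
  have shift_pos : (0 : ℝ) < c.shift := Nat.cast_pos.2 hc.shift_pos
  refine .of_supersolution (c := 1 / c.shift) (by positivity) (ENNReal.natCast_ne_top 65536)
    (fun x => Nat.cast_le.2 (c.weight_lt _).le) (fun x hx => ?_) (hc.transfer_stepFunction_le hl)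
  have cell_eq : ⌊|x| * (c.shift / 2)⌋₊ = 0 := by
    rw [mem_closedBall_zero_iff, Real.norm_eq_abs, le_div_iff₀ shift_pos] at hx
    exact Nat.floor_eq_zero.2 (by linarith)
  rw [cell_eq]
  exact_mod_cast hc.weight_zero_pos

end Certificate

set_option maxRecDepth 100000 in
/-- Certificates covering `[0.5, 0.7072]`. The weights come from power iteration of the operator on
the left-hand side of `Certificate.Valid.supersolution`, followed by rounding. -/
def certificates : List Certificate := [
  ⟨500000, 504000, 512633, 60, [766, 766, 767, 761, 757, 749, 747, 738, 739, 725, 719, 715, 712,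
    699, 700, 695, 675, 675, 669, 662, 653, 652, 644, 643, 633, 625, 622, 615, 605, 603, 593, 577,
    575, 570, 563, 558, 555, 545, 542, 530, 526, 520, 516, 505, 507, 500, 484, 483, 475, 469, 462,
    460, 451, 447, 437, 432, 425, 419, 410, 398, 386, 375, 372, 366, 361, 354, 349, 342, 339, 330,
    323, 318, 314, 305, 300, 295, 282, 278, 273, 266, 259, 254, 248, 244, 236, 229, 225, 218, 211,
    205, 195, 183, 179, 173, 167, 161, 156, 149, 144, 136, 130, 124, 119, 112, 107, 100, 90, 85,
    79, 73, 67, 61, 55, 49, 42, 36, 30, 24, 18, 12, 6]⟩,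
  ⟨504000, 507800, 516586, 64, [1417, 1417, 1368, 1360, 1343, 1347, 1321, 1309, 1319, 1313, 1275,
    1274, 1265, 1252, 1242, 1241, 1252, 1237, 1198, 1187, 1185, 1176, 1166, 1150, 1157, 1132, 1116,
    1102, 1103, 1090, 1095, 1095, 1086, 1072, 1029, 1016, 999, 998, 984, 985, 963, 968, 945, 939,
    924, 921, 918, 915, 891, 882, 861, 850, 840, 826, 830, 820, 800, 792, 788, 770, 765, 753, 760,
    741, 722, 704, 667, 652, 639, 636, 617, 606, 606, 599, 575, 570, 560, 548, 534, 530, 530, 519,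
    492, 483, 477, 469, 455, 446, 443, 427, 412, 402, 397, 384, 373, 368, 359, 350, 323, 310, 299,
    294, 279, 272, 259, 257, 239, 231, 221, 215, 200, 193, 181, 174, 157, 145, 136, 126, 116, 107,
    97, 88, 76, 66, 57, 47, 37, 28, 18, 9, 5]⟩,
  ⟨507800, 513000, 520340, 156, [1303, 1291, 1194, 1184, 1154, 1173, 1174, 1130, 1128, 1146, 1162,
    1165, 1122, 1107, 1114, 1116, 1116, 1112, 1133, 1136, 1146, 1147, 1148, 1090, 1078, 1069, 1072,
    1073, 1076, 1080, 1080, 1077, 1070, 1071, 1065, 1072, 1060, 1087, 1086, 1089, 1096, 1096, 1093,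
    1026, 1022, 1006, 1009, 1009, 999, 1000, 993, 996, 1000, 994, 981, 980, 978, 992, 989, 996,
    987, 980, 973, 973, 955, 948, 930, 944, 942, 952, 939, 917, 928, 937, 967, 955, 953, 948, 964,
    967, 966, 961, 901, 882, 857, 868, 874, 845, 850, 845, 854, 858, 841, 834, 837, 839, 840, 825,
    831, 824, 825, 826, 830, 803, 796, 788, 788, 787, 782, 782, 780, 785, 781, 799, 798, 798, 787,
    777, 779, 766, 772, 768, 766, 736, 730, 723, 723, 721, 704, 703, 696, 701, 707, 720, 714, 712,
    701, 699, 678, 678, 675, 671, 668, 672, 675, 670, 654, 640, 640, 651, 646, 630, 640, 642, 680,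
    678, 677, 662, 608, 600, 576, 580, 578, 547, 542, 546, 552, 552, 524, 516, 519, 519, 518, 516,
    523, 524, 527, 527, 526, 492, 485, 481, 481, 481, 477, 479, 479, 475, 468, 459, 454, 458, 452,
    465, 465, 464, 465, 465, 462, 424, 420, 411, 413, 413, 404, 404, 400, 399, 399, 386, 379, 379,
    378, 384, 384, 384, 379, 375, 371, 369, 351, 348, 339, 346, 346, 344, 337, 326, 325, 325, 325,
    315, 313, 311, 327, 327, 326, 319, 289, 279, 266, 266, 266, 250, 252, 254, 254, 254, 237, 232,
    232, 231, 229, 221, 224, 224, 224, 224, 222, 202, 199, 195, 193, 192, 185, 185, 185, 183, 179,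
    169, 167, 167, 162, 157, 158, 158, 158, 158, 154, 135, 128, 123, 123, 123, 112, 111, 108, 108,
    108, 98, 94, 93, 89, 88, 82, 81, 78, 76, 76, 74, 62, 60, 54, 52, 52, 46, 43, 40, 38, 37, 30,
    26, 25, 21, 20, 18, 13, 11, 9, 6, 3]⟩,
  ⟨513000, 515200, 525476, 83, [1237, 1217, 1141, 1134, 1100, 1118, 1126, 1079, 1084, 1088, 1096,
    1108, 1060, 1038, 1053, 1033, 1041, 1054, 1052, 1035, 1057, 1053, 1057, 1005, 976, 978, 963,
    970, 986, 943, 963, 965, 955, 942, 949, 904, 923, 928, 913, 942, 926, 938, 932, 929, 869, 847,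
    839, 811, 834, 813, 813, 811, 806, 792, 812, 781, 765, 766, 755, 769, 784, 766, 768, 746, 750,
    745, 703, 688, 698, 679, 685, 706, 683, 671, 664, 654, 669, 644, 628, 635, 626, 657, 657, 641,
    620, 577, 562, 536, 537, 528, 501, 502, 502, 503, 503, 479, 466, 470, 460, 460, 455, 452, 442,
    449, 447, 444, 414, 400, 397, 387, 387, 387, 365, 373, 373, 366, 357, 355, 333, 336, 336, 320,
    319, 307, 313, 313, 305, 275, 256, 252, 240, 240, 228, 224, 219, 217, 214, 213, 197, 189, 185,
    178, 178, 170, 160, 160, 152, 149, 146, 122, 115, 115, 107, 104, 102, 90, 85, 81, 77, 71, 59,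
    55, 50, 43, 39, 34, 27, 21, 19, 13, 10, 5]⟩,
  ⟨515200, 517400, 527648, 73, [2587, 2550, 2387, 2369, 2339, 2350, 2216, 2270, 2263, 2311, 2312,
    2169, 2168, 2172, 2207, 2187, 2186, 2196, 2203, 2217, 2216, 2059, 2030, 2018, 2038, 2038, 2029,
    2043, 1973, 1980, 1976, 1892, 1934, 1965, 1968, 1975, 1963, 1969, 1942, 1839, 1774, 1690, 1735,
    1737, 1675, 1709, 1682, 1684, 1682, 1607, 1591, 1596, 1671, 1636, 1598, 1593, 1563, 1559, 1510,
    1440, 1438, 1411, 1473, 1471, 1405, 1402, 1343, 1393, 1352, 1338, 1323, 1381, 1375, 1348, 1303,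
    1205, 1173, 1135, 1115, 1030, 1046, 1041, 1051, 1051, 976, 966, 968, 968, 939, 937, 933, 936,
    933, 921, 841, 823, 810, 798, 797, 792, 792, 758, 741, 739, 698, 698, 697, 665, 661, 655, 655,
    639, 571, 538, 496, 498, 498, 459, 459, 445, 444, 443, 399, 384, 378, 376, 352, 331, 331, 314,
    311, 271, 236, 236, 218, 211, 210, 182, 179, 157, 149, 129, 112, 100, 87, 75, 62, 48, 42, 30,
    20, 10]⟩,
  ⟨517400, 520000, 529820, 101, [2239, 2180, 2028, 2009, 2016, 1949, 1999, 2001, 2002, 1897, 1923,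
    1921, 1935, 1968, 1971, 1974, 1839, 1834, 1845, 1861, 1878, 1875, 1856, 1833, 1877, 1878, 1891,
    1896, 1899, 1775, 1722, 1736, 1699, 1731, 1727, 1727, 1667, 1727, 1709, 1671, 1705, 1686, 1685,
    1635, 1643, 1659, 1631, 1685, 1692, 1676, 1607, 1680, 1688, 1675, 1547, 1543, 1502, 1485, 1476,
    1478, 1488, 1416, 1432, 1435, 1399, 1429, 1429, 1430, 1366, 1366, 1341, 1366, 1426, 1403, 1392,
    1360, 1358, 1317, 1326, 1335, 1337, 1276, 1244, 1217, 1220, 1260, 1253, 1252, 1211, 1187, 1187,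
    1160, 1197, 1184, 1180, 1126, 1135, 1116, 1121, 1172, 1190, 1176, 1132, 1033, 1013, 1008, 957,
    961, 956, 943, 879, 887, 885, 887, 895, 897, 897, 820, 817, 815, 815, 807, 805, 796, 783, 799,
    799, 797, 797, 791, 729, 701, 703, 678, 678, 675, 675, 645, 673, 663, 642, 641, 631, 631, 595,
    595, 592, 572, 565, 565, 557, 536, 562, 562, 555, 488, 476, 454, 445, 423, 424, 424, 387, 385,
    381, 378, 378, 378, 377, 344, 332, 320, 319, 318, 303, 298, 281, 280, 267, 266, 266, 266, 231,
    215, 201, 201, 182, 179, 179, 163, 151, 151, 141, 133, 126, 126, 109, 95, 86, 85, 72, 67, 60,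
    52, 41, 34, 32, 25, 17, 12, 6]⟩,
  ⟨520000, 523400, 532386, 138, [1413, 1405, 1270, 1257, 1251, 1249, 1184, 1217, 1228, 1241, 1240,
    1155, 1164, 1168, 1189, 1193, 1174, 1205, 1219, 1223, 1215, 1128, 1128, 1128, 1134, 1137, 1143,
    1166, 1168, 1149, 1142, 1116, 1138, 1151, 1166, 1167, 1181, 1184, 1175, 1106, 1070, 1049, 1062,
    1070, 1046, 1065, 1061, 1062, 1060, 1023, 1030, 1064, 1064, 1058, 1066, 1038, 1045, 1042, 1040,
    988, 1010, 1014, 1028, 1026, 1042, 1029, 1046, 1043, 1008, 997, 1053, 1055, 1043, 1040, 970,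
    959, 931, 928, 880, 907, 908, 914, 911, 922, 884, 885, 885, 868, 857, 877, 881, 880, 882, 844,
    840, 836, 818, 827, 846, 880, 882, 875, 860, 859, 834, 827, 803, 815, 825, 834, 832, 787, 778,
    766, 749, 749, 747, 774, 778, 774, 767, 739, 741, 732, 720, 716, 704, 736, 732, 723, 717, 680,
    700, 699, 691, 694, 755, 750, 749, 736, 665, 649, 638, 632, 590, 597, 602, 601, 595, 547, 544,
    542, 549, 549, 537, 548, 555, 556, 552, 503, 503, 503, 501, 499, 500, 500, 501, 491, 490, 477,
    483, 490, 492, 492, 496, 496, 490, 456, 438, 427, 430, 433, 416, 416, 414, 415, 415, 397, 398,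
    415, 415, 411, 404, 389, 392, 392, 391, 366, 364, 366, 366, 361, 348, 339, 346, 344, 340, 329,
    355, 355, 353, 346, 305, 297, 283, 283, 257, 258, 258, 262, 262, 260, 237, 236, 236, 236, 231,
    232, 233, 233, 233, 215, 204, 204, 196, 195, 195, 195, 193, 190, 185, 184, 172, 172, 164, 163,
    167, 167, 166, 144, 140, 133, 124, 124, 123, 111, 111, 110, 110, 101, 96, 92, 92, 91, 87, 81,
    79, 79, 78, 66, 59, 58, 53, 52, 48, 44, 43, 39, 38, 31, 28, 25, 21, 19, 18, 14, 10, 9, 5, 3]⟩,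
  ⟨523400, 526200, 535742, 89, [770, 770, 713, 705, 700, 674, 689, 689, 661, 663, 661, 663, 672,
    677, 640, 640, 638, 649, 649, 637, 634, 644, 646, 653, 653, 645, 608, 604, 604, 586, 580, 585,
    588, 587, 597, 586, 575, 585, 579, 573, 573, 583, 584, 584, 572, 585, 585, 576, 546, 531, 525,
    523, 504, 507, 512, 491, 490, 484, 481, 484, 490, 476, 471, 483, 487, 486, 475, 470, 457, 455,
    462, 462, 452, 434, 428, 439, 428, 421, 420, 412, 403, 416, 411, 398, 408, 405, 397, 418, 416,
    406, 405, 371, 361, 349, 332, 336, 329, 313, 308, 301, 302, 305, 305, 284, 282, 275, 279, 279,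
    273, 271, 273, 273, 273, 273, 269, 248, 245, 239, 230, 226, 229, 229, 228, 228, 222, 216, 216,
    211, 205, 200, 197, 195, 195, 191, 196, 196, 190, 174, 163, 157, 154, 144, 143, 143, 132, 131,
    128, 128, 128, 126, 116, 112, 107, 107, 107, 101, 99, 94, 91, 92, 92, 89, 77, 72, 67, 62, 60,
    60, 55, 50, 50, 48, 44, 43, 42, 34, 29, 28, 24, 23, 21, 20, 14, 12, 10, 7, 5, 3]⟩,
  ⟨526200, 529800, 538504, 89, [715, 708, 657, 644, 643, 624, 631, 631, 603, 606, 609, 613, 615,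
    619, 593, 592, 582, 588, 588, 587, 593, 599, 596, 597, 597, 600, 566, 556, 550, 550, 532, 536,
    535, 541, 543, 541, 537, 533, 534, 541, 547, 539, 535, 535, 519, 537, 537, 537, 533, 501, 482,
    480, 467, 467, 466, 454, 444, 445, 443, 450, 449, 441, 435, 451, 445, 445, 441, 436, 432, 420,
    420, 420, 416, 417, 397, 402, 398, 388, 385, 382, 369, 382, 379, 370, 372, 371, 375, 387, 384,
    384, 373, 342, 331, 329, 309, 308, 306, 287, 284, 282, 282, 278, 279, 263, 256, 249, 253, 253,
    252, 252, 254, 251, 250, 250, 250, 233, 224, 217, 217, 207, 209, 209, 210, 207, 205, 203, 195,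
    195, 194, 187, 181, 178, 178, 173, 180, 180, 179, 174, 154, 144, 143, 132, 131, 130, 123, 118,
    118, 118, 117, 117, 109, 101, 101, 98, 98, 96, 91, 91, 85, 84, 84, 84, 81, 67, 62, 61, 55, 55,
    55, 47, 47, 46, 43, 40, 39, 38, 29, 26, 26, 22, 22, 19, 18, 13, 11, 9, 7, 6, 4, 2]⟩,
  ⟨529800, 535400, 542055, 177, [1665, 1665, 1540, 1522, 1520, 1477, 1486, 1492, 1492, 1450, 1427,
    1450, 1451, 1460, 1465, 1419, 1420, 1403, 1392, 1386, 1390, 1397, 1420, 1427, 1427, 1428, 1437,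
    1443, 1386, 1380, 1362, 1364, 1334, 1344, 1346, 1352, 1352, 1352, 1356, 1352, 1365, 1366, 1381,
    1387, 1388, 1364, 1349, 1344, 1378, 1392, 1396, 1388, 1325, 1321, 1312, 1302, 1269, 1268, 1266,
    1235, 1217, 1211, 1226, 1226, 1246, 1248, 1245, 1261, 1256, 1253, 1249, 1249, 1240, 1236, 1240,
    1225, 1239, 1254, 1255, 1248, 1258, 1267, 1267, 1232, 1237, 1217, 1217, 1212, 1200, 1207, 1209,
    1209, 1249, 1247, 1264, 1254, 1195, 1175, 1161, 1159, 1130, 1117, 1120, 1095, 1084, 1081, 1081,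
    1083, 1079, 1079, 1046, 1029, 1026, 1016, 1016, 1006, 1013, 1023, 1038, 1038, 1038, 1055, 1059,
    1036, 1024, 1040, 1043, 1035, 1028, 1011, 1013, 1016, 1023, 1020, 1008, 994, 994, 987, 982,
    969, 959, 959, 964, 964, 958, 974, 968, 945, 939, 954, 939, 924, 922, 918, 901, 880, 875, 873,
    873, 878, 885, 870, 879, 872, 867, 861, 844, 851, 868, 863, 854, 849, 868, 865, 859, 911, 898,
    897, 884, 818, 804, 796, 768, 771, 769, 765, 738, 726, 728, 720, 723, 720, 690, 682, 671, 663,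
    653, 654, 654, 660, 654, 652, 649, 648, 644, 612, 606, 586, 585, 570, 575, 576, 582, 582, 578,
    577, 572, 579, 579, 585, 585, 585, 571, 562, 559, 577, 583, 583, 579, 542, 536, 522, 517, 500,
    500, 498, 483, 474, 472, 479, 479, 489, 489, 482, 482, 478, 475, 472, 472, 465, 459, 453, 445,
    450, 450, 450, 440, 440, 427, 424, 406, 409, 409, 409, 406, 400, 401, 401, 401, 421, 421, 421,
    414, 378, 368, 356, 355, 341, 336, 334, 319, 310, 305, 305, 305, 301, 299, 283, 271, 269, 269,
    269, 268, 270, 270, 270, 269, 269, 269, 269, 250, 241, 231, 230, 226, 226, 226, 226, 223, 220,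
    218, 212, 208, 208, 208, 203, 196, 189, 189, 195, 195, 195, 195, 191, 170, 164, 155, 148, 141,
    141, 139, 131, 125, 125, 125, 125, 125, 125, 116, 107, 105, 105, 103, 101, 98, 96, 94, 90, 90,
    90, 89, 79, 72, 66, 65, 58, 58, 58, 54, 50, 49, 47, 45, 42, 42, 37, 31, 30, 27, 25, 23, 21, 20,
    15, 14, 12, 10, 7, 6, 4, 2]⟩,
  ⟨535400, 539600, 547577, 212, [1167, 1167, 1086, 1072, 1057, 1058, 1025, 1036, 1035, 1046, 1047,
    994, 994, 1009, 1019, 1022, 1013, 1036, 1034, 999, 970, 970, 975, 976, 973, 977, 992, 1005,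
    1004, 991, 975, 996, 1012, 1016, 998, 980, 963, 947, 947, 916, 913, 936, 955, 957, 955, 941,
    950, 950, 937, 942, 967, 980, 983, 966, 946, 942, 942, 936, 933, 967, 972, 980, 981, 957, 925,
    920, 906, 902, 876, 889, 889, 886, 863, 836, 852, 854, 854, 857, 879, 900, 900, 891, 883, 861,
    872, 873, 880, 882, 867, 867, 865, 868, 864, 873, 884, 894, 908, 905, 884, 883, 862, 833, 841,
    858, 858, 858, 847, 847, 847, 836, 829, 851, 883, 883, 889, 883, 844, 825, 809, 802, 804, 786,
    787, 787, 790, 772, 757, 757, 751, 762, 766, 762, 762, 743, 714, 709, 709, 708, 699, 708, 727,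
    729, 729, 715, 721, 730, 738, 741, 757, 744, 742, 733, 723, 705, 697, 708, 708, 710, 720, 721,
    716, 710, 688, 684, 691, 691, 687, 689, 681, 676, 667, 655, 650, 676, 676, 684, 689, 679, 681,
    673, 657, 646, 643, 645, 645, 637, 625, 610, 611, 610, 606, 606, 618, 634, 634, 610, 610, 605,
    598, 590, 590, 610, 606, 599, 597, 590, 602, 601, 607, 613, 644, 636, 632, 626, 579, 571, 557,
    558, 539, 543, 538, 540, 539, 509, 506, 514, 516, 516, 506, 510, 505, 484, 469, 468, 468, 467,
    465, 461, 463, 468, 467, 456, 444, 452, 456, 455, 443, 426, 416, 406, 406, 395, 390, 402, 411,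
    411, 407, 399, 403, 403, 397, 399, 409, 415, 415, 404, 394, 392, 392, 392, 387, 404, 404, 406,
    406, 386, 370, 368, 361, 361, 346, 350, 350, 348, 340, 324, 332, 333, 333, 334, 339, 346, 346,
    339, 335, 324, 329, 330, 330, 325, 316, 316, 315, 311, 309, 313, 315, 315, 311, 308, 295, 295,
    291, 279, 283, 290, 290, 290, 279, 279, 279, 277, 275, 280, 295, 295, 291, 286, 265, 255, 248,
    247, 247, 236, 236, 236, 233, 221, 214, 214, 214, 214, 214, 209, 209, 203, 190, 188, 188, 188,
    188, 184, 190, 190, 190, 185, 180, 185, 186, 186, 186, 169, 169, 165, 160, 159, 153, 158, 158,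
    158, 158, 153, 151, 151, 145, 144, 144, 144, 144, 141, 135, 133, 133, 133, 128, 135, 135, 135,
    133, 121, 117, 113, 108, 108, 101, 98, 98, 98, 96, 87, 87, 87, 87, 87, 85, 85, 85, 78, 76, 73,
    73, 73, 73, 69, 67, 66, 66, 65, 62, 62, 62, 62, 56, 52, 50, 47, 45, 44, 40, 40, 39, 39, 36, 34,
    34, 32, 31, 31, 29, 29, 26, 23, 21, 19, 19, 18, 16, 15, 15, 14, 11, 10, 9, 8, 7, 6, 5, 4, 3, 2,
    1]⟩,
  ⟨539600, 541800, 551718, 270, [1833, 1813, 1676, 1661, 1659, 1645, 1642, 1651, 1568, 1606, 1610,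
    1638, 1640, 1644, 1548, 1545, 1545, 1536, 1590, 1586, 1597, 1542, 1625, 1633, 1551, 1527, 1514,
    1478, 1471, 1524, 1527, 1518, 1517, 1515, 1503, 1573, 1570, 1534, 1489, 1500, 1509, 1550, 1601,
    1616, 1524, 1493, 1501, 1491, 1463, 1451, 1434, 1387, 1419, 1446, 1494, 1504, 1510, 1441, 1472,
    1485, 1481, 1447, 1452, 1461, 1468, 1543, 1545, 1543, 1494, 1461, 1425, 1444, 1442, 1459, 1435,
    1433, 1446, 1503, 1529, 1555, 1542, 1446, 1427, 1412, 1385, 1405, 1423, 1378, 1360, 1393, 1381,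
    1374, 1358, 1301, 1280, 1304, 1298, 1329, 1340, 1370, 1367, 1419, 1409, 1423, 1380, 1339, 1329,
    1333, 1370, 1373, 1388, 1387, 1346, 1348, 1350, 1344, 1356, 1348, 1315, 1338, 1360, 1404, 1443,
    1429, 1401, 1375, 1341, 1339, 1313, 1310, 1301, 1299, 1318, 1331, 1337, 1331, 1309, 1282, 1306,
    1307, 1300, 1299, 1312, 1308, 1375, 1388, 1402, 1383, 1306, 1277, 1259, 1240, 1256, 1254, 1213,
    1224, 1223, 1225, 1246, 1243, 1193, 1185, 1167, 1162, 1173, 1193, 1209, 1180, 1201, 1175, 1173,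
    1113, 1107, 1076, 1089, 1078, 1089, 1117, 1115, 1118, 1141, 1125, 1134, 1152, 1115, 1105, 1118,
    1146, 1156, 1204, 1204, 1152, 1136, 1107, 1089, 1090, 1100, 1066, 1078, 1068, 1102, 1118, 1143,
    1128, 1124, 1086, 1079, 1061, 1058, 1075, 1083, 1077, 1061, 1085, 1072, 1059, 1030, 1016, 1000,
    1022, 1023, 1029, 1042, 1061, 1056, 1072, 1105, 1070, 1039, 1013, 995, 988, 1011, 1007, 1005,
    970, 976, 971, 971, 953, 949, 921, 927, 945, 950, 960, 995, 988, 946, 974, 948, 946, 914, 917,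
    916, 917, 965, 953, 948, 931, 928, 909, 945, 932, 929, 933, 937, 942, 1011, 1012, 993, 973,
    904, 888, 887, 878, 866, 868, 824, 843, 843, 856, 847, 843, 795, 793, 789, 783, 808, 799, 798,
    770, 812, 807, 760, 744, 732, 714, 710, 736, 732, 721, 717, 711, 706, 740, 732, 704, 680, 683,
    682, 700, 723, 718, 666, 649, 652, 650, 635, 628, 616, 591, 608, 621, 643, 645, 645, 607, 623,
    629, 629, 612, 615, 615, 617, 654, 654, 648, 624, 607, 594, 604, 606, 606, 594, 593, 595, 624,
    636, 636, 627, 579, 570, 569, 556, 565, 565, 541, 532, 548, 548, 545, 533, 505, 494, 507, 507,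
    518, 523, 523, 520, 546, 546, 546, 523, 502, 499, 500, 518, 518, 512, 510, 489, 491, 492, 492,
    486, 480, 464, 473, 481, 501, 501, 485, 471, 459, 459, 456, 443, 440, 432, 431, 451, 451, 448,
    442, 429, 416, 438, 438, 430, 429, 429, 425, 459, 459, 459, 441, 403, 398, 394, 388, 388, 384,
    361, 367, 367, 368, 368, 366, 338, 334, 334, 332, 336, 336, 332, 318, 328, 328, 326, 296, 295,
    285, 292, 293, 293, 293, 286, 286, 297, 297, 297, 294, 276, 275, 275, 289, 289, 289, 285, 259,
    257, 257, 249, 249, 247, 230, 237, 237, 248, 248, 248, 237, 235, 235, 233, 223, 223, 223, 228,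
    228, 228, 220, 214, 208, 205, 205, 205, 204, 199, 199, 199, 208, 208, 208, 200, 183, 179, 176,
    167, 167, 167, 154, 153, 153, 153, 149, 149, 135, 134, 133, 135, 135, 135, 135, 131, 131, 131,
    131, 118, 117, 113, 113, 113, 113, 113, 107, 106, 104, 104, 104, 100, 95, 93, 93, 95, 95, 95,
    91, 82, 76, 76, 70, 70, 68, 62, 62, 62, 62, 60, 60, 54, 52, 52, 52, 49, 48, 48, 44, 44, 44, 44,
    38, 35, 32, 29, 29, 28, 28, 24, 24, 22, 20, 20, 20, 16, 14, 13, 11, 10, 10, 10, 7, 5, 5, 4, 3,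
    2, 1]⟩,
  ⟨541800, 542900, 553886, 240, [576, 571, 535, 533, 523, 529, 530, 503, 513, 521, 526, 527, 493,
    488, 499, 500, 510, 517, 507, 492, 523, 522, 487, 484, 465, 470, 494, 494, 489, 489, 485, 506,
    510, 500, 479, 483, 483, 511, 517, 517, 479, 479, 478, 467, 457, 457, 447, 464, 465, 485, 485,
    462, 474, 479, 465, 475, 475, 468, 490, 499, 488, 471, 458, 463, 466, 468, 467, 462, 467, 483,
    497, 497, 464, 455, 456, 445, 456, 458, 437, 443, 445, 432, 433, 433, 412, 413, 422, 440, 440,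
    436, 434, 456, 456, 431, 427, 427, 435, 449, 451, 435, 435, 432, 434, 442, 427, 423, 430, 434,
    461, 465, 453, 439, 437, 428, 420, 423, 422, 408, 431, 429, 427, 428, 406, 420, 420, 415, 420,
    425, 434, 443, 449, 441, 412, 407, 402, 399, 407, 390, 391, 394, 395, 402, 399, 378, 374, 374,
    377, 390, 389, 367, 375, 376, 376, 354, 344, 341, 356, 356, 354, 361, 357, 361, 372, 367, 355,
    360, 359, 370, 386, 386, 367, 358, 354, 353, 354, 348, 342, 343, 349, 363, 368, 355, 347, 351,
    351, 340, 348, 340, 340, 352, 352, 335, 331, 322, 327, 326, 330, 334, 334, 336, 355, 355, 342,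
    327, 324, 317, 327, 332, 322, 312, 314, 313, 314, 313, 294, 291, 300, 302, 320, 318, 302, 309,
    314, 305, 298, 296, 288, 292, 308, 305, 302, 297, 292, 304, 300, 295, 299, 300, 317, 319, 314,
    311, 290, 288, 280, 283, 281, 265, 270, 273, 274, 274, 255, 251, 256, 255, 259, 260, 253, 246,
    261, 258, 239, 237, 227, 228, 237, 237, 232, 231, 228, 238, 237, 232, 220, 221, 219, 231, 230,
    230, 211, 211, 210, 203, 197, 197, 191, 199, 199, 206, 206, 195, 203, 204, 197, 200, 200, 196,
    209, 210, 205, 198, 191, 195, 195, 194, 194, 190, 192, 200, 203, 203, 186, 184, 184, 179, 182,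
    182, 171, 177, 177, 170, 170, 170, 161, 161, 163, 168, 168, 166, 168, 175, 175, 162, 160, 160,
    164, 167, 167, 159, 159, 158, 159, 159, 152, 148, 151, 152, 161, 161, 155, 148, 150, 146, 142,
    142, 142, 137, 145, 144, 142, 142, 135, 140, 140, 137, 138, 138, 144, 144, 144, 141, 130, 128,
    127, 124, 124, 116, 117, 118, 118, 118, 117, 107, 107, 107, 108, 108, 107, 100, 105, 104, 104,
    96, 92, 90, 93, 93, 93, 93, 91, 95, 95, 93, 89, 89, 88, 92, 92, 92, 84, 84, 83, 80, 80, 77, 74,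
    76, 76, 79, 79, 74, 76, 76, 76, 72, 72, 69, 73, 73, 73, 68, 66, 66, 66, 65, 65, 64, 64, 65, 65,
    65, 59, 58, 56, 54, 54, 54, 49, 49, 49, 49, 48, 47, 42, 42, 42, 43, 43, 42, 42, 42, 42, 38, 38,
    37, 35, 36, 36, 35, 35, 33, 33, 33, 31, 30, 30, 30, 30, 30, 27, 27, 25, 25, 23, 23, 22, 20, 20,
    20, 19, 19, 18, 17, 17, 16, 15, 15, 14, 14, 14, 13, 12, 11, 10, 10, 10, 9, 8, 8, 7, 7, 6, 6, 5,
    5, 4, 4, 3, 3, 3, 2, 2, 1, 1, 1]⟩,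
  ⟨542900, 543632, 554970, 1981, [1142, 1110, 1051, 1043, 1044, 1026, 1022, 1036, 1037, 973, 986,
    1019, 1019, 1019, 1035, 1035, 964, 944, 942, 979, 979, 968, 1016, 1016, 971, 971, 991, 1033,
    1032, 958, 958, 935, 935, 932, 931, 974, 974, 940, 964, 964, 955, 977, 1013, 1011, 963, 963,
    954, 954, 959, 985, 1027, 1030, 970, 949, 949, 952, 916, 927, 927, 911, 877, 885, 926, 927,
    927, 970, 972, 923, 909, 933, 960, 960, 932, 949, 950, 950, 928, 974, 1010, 1010, 958, 958,
    956, 926, 939, 945, 946, 945, 941, 942, 952, 953, 982, 1026, 1026, 964, 945, 937, 940, 917,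
    928, 940, 944, 906, 889, 917, 922, 919, 905, 905, 859, 840, 866, 866, 876, 878, 921, 921, 891,
    891, 940, 967, 967, 913, 903, 898, 898, 888, 925, 955, 955, 933, 924, 919, 916, 934, 942, 943,
    916, 904, 906, 918, 921, 970, 1005, 1005, 976, 928, 945, 951, 949, 912, 914, 916, 898, 880,
    932, 941, 941, 939, 939, 900, 897, 934, 934, 933, 921, 946, 946, 946, 931, 978, 1021, 1020,
    956, 943, 935, 920, 919, 919, 926, 929, 903, 897, 904, 908, 922, 935, 937, 897, 877, 878, 878,
    866, 897, 909, 914, 902, 858, 890, 899, 896, 850, 845, 827, 819, 815, 850, 857, 857, 868, 869,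
    869, 861, 909, 912, 912, 879, 879, 879, 879, 879, 933, 960, 960, 957, 903, 893, 891, 884, 885,
    886, 872, 872, 856, 879, 885, 920, 942, 946, 923, 887, 912, 913, 908, 890, 898, 904, 898, 881,
    926, 935, 935, 906, 903, 879, 865, 890, 892, 892, 892, 906, 909, 909, 919, 963, 993, 993, 963,
    930, 910, 910, 903, 916, 929, 935, 933, 891, 897, 900, 901, 901, 903, 883, 858, 857, 864, 862,
    901, 922, 930, 896, 883, 921, 929, 928, 886, 883, 877, 876, 860, 906, 924, 924, 911, 909, 908,
    889, 924, 934, 934, 911, 915, 916, 917, 929, 969, 1006, 1011, 1007, 942, 928, 928, 919, 902,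
    903, 903, 903, 880, 889, 899, 909, 915, 918, 891, 856, 880, 884, 878, 875, 892, 896, 874, 869,
    914, 927, 927, 885, 874, 862, 842, 836, 853, 863, 862, 855, 855, 851, 864, 890, 902, 902, 889,
    856, 840, 837, 834, 850, 876, 886, 886, 834, 837, 831, 830, 812, 812, 803, 783, 778, 792, 803,
    834, 841, 846, 825, 824, 848, 857, 856, 844, 836, 836, 834, 848, 877, 901, 901, 872, 865, 862,
    848, 858, 865, 865, 859, 855, 854, 865, 887, 924, 936, 944, 943, 889, 883, 883, 872, 859, 869,
    870, 870, 838, 860, 871, 871, 856, 856, 856, 819, 826, 838, 834, 855, 864, 869, 856, 874, 907,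
    925, 929, 904, 864, 864, 856, 860, 873, 892, 893, 893, 872, 865, 862, 873, 882, 887, 881, 848,
    843, 842, 862, 888, 912, 919, 905, 869, 888, 884, 879, 858, 842, 842, 835, 832, 851, 874, 876,
    876, 876, 876, 851, 872, 891, 891, 874, 887, 888, 888, 902, 951, 974, 974, 942, 925, 906, 895,
    883, 880, 882, 884, 884, 864, 876, 874, 898, 905, 912, 911, 855, 864, 859, 854, 848, 871, 874,
    874, 861, 881, 880, 880, 858, 833, 831, 804, 814, 816, 830, 837, 837, 840, 840, 845, 881, 902,
    902, 865, 860, 847, 842, 850, 872, 893, 902, 902, 856, 852, 853, 846, 846, 845, 845, 819, 811,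
    828, 832, 870, 883, 894, 894, 856, 881, 878, 877, 859, 856, 856, 854, 850, 896, 896, 903, 890,
    878, 878, 870, 870, 882, 882, 879, 880, 883, 892, 896, 940, 973, 973, 970, 924, 897, 893, 883,
    871, 879, 883, 883, 846, 866, 866, 865, 865, 867, 867, 820, 828, 825, 820, 841, 851, 862, 862,
    855, 874, 876, 881, 851, 833, 813, 802, 808, 832, 839, 844, 830, 830, 827, 840, 840, 859, 859,
    835, 829, 819, 814, 819, 862, 879, 890, 888, 844, 828, 832, 819, 807, 797, 793, 788, 781, 799,
    794, 807, 818, 825, 825, 800, 817, 813, 812, 803, 809, 810, 810, 827, 854, 857, 862, 847, 820,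
    810, 788, 788, 787, 790, 793, 793, 783, 788, 809, 812, 828, 841, 841, 796, 784, 774, 769, 775,
    781, 788, 788, 760, 763, 770, 765, 760, 744, 739, 713, 716, 728, 735, 739, 751, 762, 762, 769,
    796, 797, 801, 778, 767, 760, 753, 776, 793, 803, 813, 803, 799, 779, 782, 785, 783, 790, 790,
    773, 771, 779, 805, 814, 837, 854, 854, 821, 814, 810, 810, 810, 795, 794, 794, 784, 802, 813,
    818, 812, 807, 807, 788, 806, 802, 804, 804, 811, 818, 819, 841, 874, 882, 890, 889, 832, 829,
    805, 805, 807, 816, 823, 823, 809, 803, 806, 806, 812, 820, 820, 792, 782, 770, 783, 784, 809,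
    823, 823, 796, 798, 798, 806, 806, 768, 765, 751, 755, 765, 773, 787, 787, 787, 787, 789, 810,
    809, 818, 804, 798, 796, 797, 823, 839, 860, 875, 876, 848, 819, 804, 804, 792, 794, 795, 793,
    778, 795, 812, 812, 826, 839, 839, 808, 815, 798, 803, 795, 804, 807, 807, 797, 815, 821, 831,
    824, 795, 788, 768, 774, 766, 778, 782, 784, 784, 790, 810, 837, 841, 857, 842, 831, 802, 787,
    790, 795, 809, 823, 823, 799, 792, 780, 781, 781, 779, 779, 764, 755, 755, 769, 775, 796, 817,
    817, 799, 820, 806, 818, 818, 790, 782, 781, 788, 798, 813, 833, 833, 815, 812, 808, 811, 815,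
    829, 823, 819, 815, 828, 845, 882, 899, 909, 910, 874, 856, 836, 834, 822, 823, 823, 823, 805,
    820, 810, 819, 819, 824, 824, 798, 801, 785, 789, 789, 804, 815, 815, 813, 841, 834, 849, 848,
    802, 785, 775, 761, 770, 783, 795, 795, 788, 776, 785, 789, 801, 812, 812, 791, 762, 762, 768,
    798, 800, 820, 820, 796, 786, 768, 767, 766, 742, 738, 730, 723, 742, 741, 755, 760, 772, 772,
    757, 779, 768, 778, 775, 773, 769, 773, 783, 789, 823, 836, 836, 795, 789, 783, 775, 770, 774,
    774, 774, 767, 780, 786, 797, 809, 830, 830, 804, 778, 775, 770, 764, 773, 774, 775, 754, 777,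
    766, 774, 774, 749, 746, 720, 731, 727, 733, 737, 746, 758, 761, 763, 798, 803, 815, 815, 774,
    773, 756, 760, 760, 791, 801, 801, 781, 771, 769, 765, 774, 778, 778, 752, 747, 743, 762, 773,
    801, 824, 824, 795, 809, 795, 796, 796, 774, 766, 766, 760, 792, 791, 803, 803, 794, 794, 776,
    800, 792, 801, 801, 801, 801, 811, 814, 854, 863, 881, 878, 859, 826, 806, 797, 783, 791, 793,
    796, 767, 778, 777, 778, 785, 794, 794, 754, 753, 748, 744, 746, 761, 775, 775, 751, 779, 769,
    778, 778, 737, 726, 715, 708, 723, 727, 734, 734, 731, 731, 729, 754, 757, 769, 769, 742, 734,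
    730, 732, 761, 776, 782, 789, 756, 748, 735, 725, 713, 713, 712, 705, 691, 708, 705, 721, 733,
    747, 751, 731, 736, 727, 732, 732, 726, 721, 725, 715, 749, 746, 761, 761, 735, 728, 728, 717,
    708, 716, 717, 714, 711, 722, 722, 753, 768, 782, 780, 749, 731, 722, 709, 705, 710, 713, 720,
    702, 707, 696, 695, 695, 689, 689, 666, 664, 662, 660, 681, 682, 701, 701, 685, 710, 708, 722,
    722, 694, 678, 677, 670, 694, 699, 713, 713, 697, 694, 694, 700, 703, 710, 710, 696, 687, 691,
    694, 728, 730, 758, 759, 742, 728, 712, 701, 699, 686, 682, 682, 681, 689, 680, 690, 690, 692,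
    694, 685, 683, 674, 679, 679, 682, 689, 689, 689, 712, 715, 732, 732, 699, 682, 678, 660, 660,
    660, 669, 669, 655, 659, 657, 665, 675, 677, 682, 662, 651, 643, 632, 645, 649, 654, 665, 659,
    655, 642, 639, 639, 616, 610, 603, 607, 602, 601, 614, 620, 628, 631, 641, 642, 641, 655, 655,
    640, 637, 634, 643, 663, 669, 692, 692, 667, 657, 655, 645, 642, 647, 647, 641, 640, 644, 645,
    672, 677, 691, 698, 687, 683, 669, 661, 661, 658, 655, 660, 662, 670, 662, 674, 674, 660, 655,
    641, 650, 641, 644, 647, 653, 658, 664, 690, 691, 699, 721, 722, 701, 685, 661, 659, 669, 674,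
    677, 688, 688, 668, 668, 664, 665, 665, 672, 662, 653, 642, 640, 661, 671, 681, 696, 685, 690,
    680, 684, 684, 663, 658, 647, 657, 663, 659, 683, 683, 677, 677, 685, 685, 675, 693, 693, 684,
    680, 689, 710, 717, 730, 754, 755, 754, 714, 691, 688, 684, 678, 677, 678, 678, 670, 670, 680,
    680, 686, 692, 679, 677, 654, 656, 660, 660, 661, 670, 673, 679, 667, 686, 686, 665, 655, 632,
    630, 626, 630, 643, 643, 641, 641, 658, 657, 659, 683, 683, 664, 650, 637, 638, 647, 653, 656,
    674, 674, 649, 631, 628, 628, 622, 622, 616, 604, 607, 604, 627, 628, 640, 651, 651, 654, 644,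
    650, 650, 644, 630, 633, 642, 652, 648, 676, 677, 662, 659, 647, 651, 644, 655, 655, 650, 652,
    653, 678, 683, 693, 701, 718, 717, 687, 662, 655, 655, 653, 647, 655, 655, 644, 634, 646, 646,
    644, 644, 642, 625, 615, 617, 627, 627, 635, 646, 656, 663, 654, 672, 678, 666, 644, 628, 623,
    628, 631, 647, 651, 640, 635, 633, 638, 642, 652, 652, 650, 629, 623, 637, 641, 641, 661, 674,
    666, 651, 634, 626, 632, 622, 615, 605, 613, 606, 603, 622, 622, 622, 630, 630, 627, 616, 632,
    632, 629, 624, 631, 653, 654, 657, 684, 684, 668, 655, 637, 623, 618, 618, 620, 623, 623, 617,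
    622, 628, 630, 633, 648, 647, 622, 607, 601, 603, 603, 607, 614, 614, 610, 598, 599, 609, 598,
    592, 576, 569, 563, 565, 578, 583, 583, 593, 596, 609, 607, 633, 633, 614, 601, 594, 600, 605,
    613, 630, 637, 637, 619, 606, 600, 602, 602, 605, 605, 595, 587, 603, 613, 619, 624, 645, 645,
    634, 612, 614, 625, 616, 608, 610, 621, 619, 607, 624, 638, 631, 628, 624, 619, 614, 626, 626,
    625, 625, 635, 654, 654, 660, 693, 695, 685, 655, 635, 628, 628, 625, 623, 634, 634, 624, 608,
    617, 618, 619, 625, 625, 605, 583, 596, 597, 600, 601, 622, 624, 620, 601, 607, 624, 609, 596,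
    572, 579, 576, 577, 589, 599, 595, 595, 600, 598, 595, 616, 617, 605, 599, 592, 605, 605, 615,
    631, 646, 645, 616, 594, 589, 589, 583, 576, 576, 574, 574, 566, 574, 585, 587, 601, 601, 593,
    571, 579, 582, 577, 573, 582, 592, 592, 579, 597, 608, 600, 585, 567, 562, 550, 558, 558, 565,
    564, 564, 576, 577, 582, 609, 610, 610, 583, 555, 556, 556, 556, 556, 572, 572, 566, 542, 546,
    546, 543, 537, 537, 529, 512, 519, 523, 532, 534, 556, 563, 558, 542, 564, 570, 559, 553, 537,
    550, 550, 549, 560, 578, 574, 566, 562, 560, 556, 560, 572, 565, 563, 572, 574, 581, 585, 592,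
    623, 623, 593, 569, 577, 577, 577, 560, 567, 570, 570, 551, 553, 572, 571, 572, 572, 565, 539,
    550, 559, 558, 557, 580, 583, 580, 572, 596, 609, 609, 580, 556, 554, 547, 546, 554, 567, 561,
    558, 552, 554, 556, 560, 571, 571, 547, 529, 539, 539, 542, 547, 573, 573, 555, 531, 531, 546,
    546, 517, 517, 514, 514, 501, 511, 533, 533, 540, 545, 542, 528, 537, 555, 550, 544, 546, 558,
    556, 560, 570, 599, 599, 568, 554, 553, 547, 546, 549, 550, 549, 549, 545, 560, 560, 560, 585,
    585, 562, 538, 550, 550, 548, 540, 557, 557, 543, 531, 538, 562, 559, 534, 534, 533, 512, 510,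
    527, 535, 535, 536, 554, 552, 552, 563, 591, 583, 559, 548, 546, 546, 550, 551, 574, 574, 551,
    540, 545, 545, 533, 550, 550, 524, 527, 533, 533, 544, 544, 579, 579, 556, 546, 546, 569, 569,
    540, 549, 549, 530, 532, 542, 576, 576, 567, 567, 567, 551, 544, 576, 573, 566, 575, 583, 583,
    586, 616, 630, 626, 605, 574, 570, 570, 560, 560, 567, 567, 533, 540, 556, 556, 556, 564, 564,
    523, 514, 513, 532, 532, 528, 551, 551, 528, 528, 538, 558, 557, 514, 514, 503, 503, 502, 503,
    523, 523, 506, 519, 519, 514, 525, 541, 537, 511, 514, 510, 510, 512, 526, 546, 546, 510, 499,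
    499, 501, 481, 488, 488, 479, 464, 469, 489, 489, 489, 510, 510, 485, 478, 490, 504, 502, 492,
    501, 501, 501, 490, 513, 529, 529, 499, 499, 498, 483, 490, 494, 494, 496, 494, 494, 500, 500,
    514, 533, 533, 497, 487, 483, 485, 473, 482, 487, 488, 468, 459, 473, 475, 475, 467, 467, 441,
    433, 447, 447, 452, 455, 474, 474, 460, 460, 484, 496, 496, 466, 461, 459, 459, 456, 474, 486,
    486, 474, 469, 467, 465, 475, 479, 478, 463, 459, 460, 466, 468, 492, 505, 505, 488, 464, 473,
    476, 476, 456, 459, 460, 451, 442, 468, 472, 472, 469, 469, 449, 448, 466, 466, 466, 462, 473,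
    473, 473, 466, 489, 508, 506, 472, 465, 460, 453, 452, 455, 459, 459, 444, 441, 445, 446, 455,
    460, 460, 438, 428, 428, 428, 424, 440, 446, 446, 439, 417, 433, 437, 437, 412, 409, 400, 396,
    396, 413, 415, 416, 421, 421, 420, 417, 441, 441, 441, 423, 423, 423, 423, 423, 450, 459, 459,
    455, 428, 423, 422, 421, 422, 422, 415, 415, 407, 419, 421, 438, 448, 448, 435, 417, 429, 430,
    430, 420, 424, 426, 423, 415, 437, 441, 441, 426, 424, 411, 404, 419, 419, 419, 419, 426, 426,
    426, 431, 453, 464, 463, 446, 429, 419, 419, 419, 425, 431, 431, 429, 408, 411, 412, 414, 414,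
    414, 403, 391, 391, 394, 395, 414, 423, 423, 405, 399, 418, 422, 422, 400, 398, 395, 395, 389,
    412, 417, 417, 410, 409, 408, 399, 417, 420, 420, 408, 410, 410, 410, 416, 436, 451, 451, 447,
    414, 407, 407, 407, 400, 400, 399, 399, 387, 392, 397, 402, 405, 405, 390, 373, 385, 387, 387,
    385, 394, 394, 382, 379, 402, 407, 407, 385, 380, 374, 364, 365, 373, 377, 376, 372, 372, 370,
    377, 389, 392, 392, 385, 368, 360, 360, 360, 368, 381, 381, 381, 355, 356, 356, 356, 348, 348,
    344, 334, 332, 339, 344, 359, 361, 361, 351, 350, 362, 367, 367, 360, 356, 356, 356, 363, 378,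
    385, 385, 370, 367, 365, 359, 367, 369, 369, 366, 364, 364, 369, 379, 398, 401, 401, 401, 374,
    371, 371, 371, 365, 370, 370, 370, 354, 365, 371, 371, 364, 364, 364, 345, 349, 355, 355, 365,
    369, 369, 363, 371, 388, 395, 395, 383, 363, 363, 359, 366, 373, 378, 378, 378, 368, 364, 364,
    370, 375, 375, 372, 355, 353, 354, 365, 378, 387, 387, 380, 362, 371, 371, 371, 360, 352, 352,
    351, 350, 359, 369, 370, 370, 369, 369, 356, 367, 376, 376, 368, 374, 374, 374, 381, 405, 410,
    410, 394, 386, 376, 371, 371, 370, 372, 372, 372, 361, 368, 368, 379, 383, 383, 383, 354, 359,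
    359, 359, 356, 366, 366, 366, 360, 370, 370, 370, 359, 346, 346, 335, 341, 343, 348, 351, 351,
    351, 351, 353, 371, 377, 377, 359, 356, 350, 349, 355, 365, 374, 374, 374, 351, 349, 350, 351,
    351, 349, 349, 337, 332, 342, 344, 362, 368, 368, 368, 349, 361, 361, 361, 352, 351, 351, 351,
    349, 372, 372, 372, 365, 359, 359, 357, 357, 362, 362, 361, 361, 361, 366, 367, 389, 397, 397,
    396, 373, 360, 359, 359, 354, 358, 358, 358, 340, 350, 350, 351, 351, 351, 351, 328, 331, 331,
    331, 342, 347, 347, 347, 343, 353, 356, 356, 341, 332, 322, 322, 325, 337, 339, 339, 332, 332,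
    330, 338, 338, 343, 343, 332, 328, 323, 323, 326, 346, 353, 353, 352, 330, 322, 325, 325, 319,
    314, 314, 311, 307, 316, 316, 320, 326, 326, 326, 313, 322, 322, 322, 317, 320, 320, 320, 328,
    342, 342, 342, 335, 321, 316, 311, 311, 311, 313, 313, 313, 308, 311, 321, 323, 330, 330, 330,
    308, 302, 302, 302, 305, 308, 308, 308, 294, 295, 300, 300, 297, 290, 288, 275, 277, 283, 289,
    290, 296, 296, 296, 299, 312, 312, 312, 301, 296, 292, 292, 303, 312, 315, 315, 310, 308, 298,
    302, 304, 304, 304, 304, 296, 295, 300, 311, 315, 326, 326, 326, 309, 305, 310, 310, 310, 303,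
    303, 303, 298, 307, 314, 314, 311, 309, 309, 299, 308, 308, 309, 309, 313, 313, 313, 323, 340,
    341, 341, 340, 312, 310, 306, 307, 310, 312, 312, 312, 305, 302, 306, 306, 310, 310, 310, 296,
    290, 290, 297, 297, 308, 308, 308, 295, 296, 304, 304, 304, 285, 283, 281, 283, 289, 294, 295,
    295, 293, 293, 294, 305, 305, 305, 299, 296, 296, 296, 308, 316, 324, 324, 324, 310, 296, 296,
    296, 292, 292, 292, 291, 283, 292, 299, 299, 306, 306, 306, 291, 294, 294, 294, 290, 294, 294,
    294, 289, 298, 304, 304, 301, 286, 285, 278, 281, 281, 284, 284, 285, 285, 285, 295, 309, 309,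
    309, 301, 296, 281, 281, 283, 286, 292, 292, 292, 281, 277, 277, 277, 277, 275, 275, 267, 263,
    268, 275, 275, 286, 286, 286, 277, 287, 287, 287, 287, 273, 273, 273, 277, 282, 291, 291, 291,
    282, 282, 280, 282, 288, 288, 285, 282, 282, 287, 295, 313, 314, 314, 314, 296, 286, 286, 286,
    282, 282, 282, 282, 273, 281, 282, 282, 282, 282, 282, 269, 270, 270, 271, 271, 278, 278, 278,
    278, 292, 292, 292, 291, 268, 266, 263, 260, 265, 271, 271, 271, 268, 263, 267, 269, 274, 274,
    274, 264, 255, 255, 260, 275, 275, 275, 275, 263, 258, 258, 258, 258, 246, 246, 242, 240, 251,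
    254, 255, 257, 257, 257, 250, 261, 261, 261, 259, 258, 258, 259, 264, 267, 281, 281, 281, 260,
    260, 260, 257, 258, 258, 258, 258, 255, 262, 263, 269, 275, 275, 275, 262, 256, 256, 256, 253,
    258, 258, 258, 247, 259, 259, 259, 259, 246, 246, 233, 241, 244, 246, 246, 251, 251, 252, 253,
    270, 270, 270, 270, 250, 250, 248, 253, 253, 264, 264, 264, 254, 251, 251, 251, 254, 254, 254,
    241, 242, 242, 250, 254, 267, 267, 267, 252, 259, 259, 259, 259, 248, 248, 248, 246, 261, 261,
    261, 261, 257, 257, 248, 260, 260, 260, 260, 260, 260, 263, 264, 284, 284, 284, 282, 273, 257,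
    256, 256, 251, 255, 255, 255, 240, 249, 249, 249, 252, 252, 252, 232, 236, 236, 236, 237, 244,
    244, 244, 232, 246, 246, 246, 246, 226, 226, 220, 221, 230, 230, 230, 230, 228, 228, 227, 239,
    239, 239, 239, 225, 225, 224, 226, 241, 241, 241, 241, 224, 220, 220, 220, 214, 214, 214, 211,
    205, 214, 214, 219, 224, 224, 224, 214, 219, 219, 219, 219, 216, 216, 216, 211, 228, 228, 228,
    228, 215, 215, 215, 213, 213, 213, 213, 212, 210, 214, 214, 229, 229, 229, 228, 213, 208, 207,
    207, 205, 208, 208, 208, 199, 201, 201, 201, 201, 197, 197, 187, 188, 190, 190, 199, 199, 199,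
    199, 191, 207, 207, 207, 207, 193, 191, 191, 191, 202, 202, 202, 202, 194, 194, 194, 199, 199,
    199, 199, 192, 189, 192, 195, 210, 210, 210, 210, 201, 195, 195, 195, 194, 187, 187, 187, 187,
    191, 191, 191, 191, 191, 191, 186, 188, 188, 188, 188, 190, 190, 190, 190, 204, 204, 204, 204,
    187, 184, 184, 181, 183, 183, 183, 183, 176, 178, 178, 184, 184, 184, 184, 174, 170, 170, 170,
    177, 177, 177, 177, 174, 172, 172, 172, 172, 161, 161, 157, 162, 163, 163, 164, 166, 166, 166,
    171, 174, 174, 174, 174, 167, 167, 167, 171, 181, 181, 181, 181, 169, 168, 168, 168, 168, 168,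
    168, 164, 165, 167, 168, 178, 178, 178, 178, 173, 171, 171, 171, 171, 169, 169, 169, 171, 175,
    175, 175, 175, 168, 168, 163, 167, 167, 167, 167, 170, 170, 170, 183, 185, 185, 185, 185, 174,
    170, 168, 168, 173, 173, 173, 173, 173, 165, 165, 167, 167, 167, 167, 162, 159, 159, 160, 170,
    170, 170, 170, 165, 169, 169, 169, 169, 159, 159, 159, 164, 166, 166, 166, 166, 163, 163, 168,
    168, 168, 168, 168, 164, 164, 165, 176, 179, 179, 179, 179, 179, 163, 162, 162, 162, 159, 159,
    159, 159, 157, 157, 161, 161, 161, 161, 154, 153, 153, 153, 155, 155, 155, 155, 156, 160, 160,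
    160, 160, 149, 147, 144, 145, 147, 147, 147, 147, 146, 146, 155, 155, 155, 155, 155, 145, 143,
    141, 145, 149, 149, 149, 149, 149, 139, 139, 139, 139, 136, 136, 134, 131, 134, 135, 141, 141,
    141, 141, 141, 142, 142, 142, 142, 139, 137, 137, 142, 147, 147, 147, 147, 140, 140, 140, 142,
    142, 142, 142, 140, 141, 141, 154, 154, 154, 154, 154, 154, 141, 141, 141, 141, 140, 140, 140,
    140, 139, 139, 139, 139, 137, 137, 137, 133, 133, 133, 138, 138, 138, 138, 143, 146, 146, 146,
    146, 140, 134, 132, 135, 138, 138, 138, 138, 133, 133, 135, 137, 137, 137, 137, 136, 129, 129,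
    140, 140, 140, 140, 140, 136, 132, 132, 132, 132, 127, 125, 125, 129, 129, 129, 130, 130, 130,
    130, 130, 132, 132, 132, 132, 130, 130, 130, 141, 142, 142, 142, 142, 134, 129, 129, 128, 128,
    128, 128, 128, 128, 126, 132, 132, 132, 132, 132, 132, 123, 123, 123, 124, 124, 124, 124, 124,
    124, 124, 124, 124, 119, 117, 117, 115, 116, 116, 118, 118, 118, 119, 121, 127, 127, 127, 127,
    118, 118, 119, 122, 124, 124, 124, 124, 124, 117, 117, 117, 117, 117, 117, 117, 114, 114, 122,
    122, 122, 122, 122, 122, 119, 119, 119, 119, 115, 115, 115, 121, 121, 121, 121, 121, 117, 117,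
    118, 118, 118, 118, 118, 118, 118, 119, 128, 128, 128, 128, 128, 123, 116, 116, 115, 115, 114,
    114, 114, 114, 110, 111, 111, 111, 111, 111, 111, 104, 104, 108, 108, 108, 108, 108, 109, 109,
    109, 109, 109, 101, 100, 97, 101, 101, 101, 101, 101, 99, 99, 103, 103, 103, 103, 103, 97, 97,
    97, 104, 104, 104, 104, 104, 103, 94, 94, 94, 94, 91, 91, 91, 90, 90, 94, 94, 94, 94, 94, 94,
    91, 91, 91, 91, 90, 90, 90, 95, 95, 95, 95, 95, 91, 88, 88, 87, 87, 87, 87, 87, 86, 86, 92, 92,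
    92, 92, 92, 92, 83, 83, 83, 83, 83, 83, 83, 83, 80, 80, 80, 80, 79, 78, 78, 75, 75, 79, 79, 79,
    79, 79, 82, 82, 82, 82, 82, 77, 76, 76, 81, 81, 81, 81, 81, 78, 78, 79, 79, 79, 79, 79, 76, 77,
    83, 84, 84, 84, 84, 84, 84, 78, 78, 78, 78, 78, 76, 76, 77, 77, 77, 77, 77, 77, 77, 77, 75, 75,
    76, 76, 76, 76, 80, 81, 81, 81, 81, 81, 81, 73, 73, 73, 73, 73, 73, 73, 70, 71, 73, 73, 73, 73,
    73, 73, 67, 67, 70, 70, 70, 70, 70, 70, 68, 68, 68, 68, 68, 63, 63, 64, 64, 64, 64, 64, 64, 64,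
    67, 67, 67, 67, 67, 64, 64, 70, 70, 70, 70, 70, 70, 70, 64, 64, 64, 64, 63, 63, 63, 63, 65, 66,
    66, 66, 66, 66, 66, 63, 63, 63, 63, 62, 62, 64, 64, 64, 64, 64, 64, 62, 60, 60, 59, 59, 60, 60,
    60, 60, 64, 64, 64, 64, 64, 64, 61, 59, 60, 60, 60, 60, 60, 60, 60, 56, 56, 56, 56, 56, 56, 56,
    54, 55, 58, 58, 58, 58, 58, 58, 56, 56, 56, 56, 56, 53, 55, 55, 55, 55, 55, 55, 55, 55, 55, 55,
    55, 55, 55, 54, 54, 58, 58, 58, 58, 58, 58, 56, 53, 52, 52, 52, 51, 51, 51, 51, 50, 50, 50, 50,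
    50, 50, 50, 46, 47, 47, 47, 47, 47, 47, 47, 47, 47, 47, 47, 47, 43, 43, 43, 43, 43, 43, 43, 43,
    43, 43, 43, 43, 43, 43, 41, 40, 42, 42, 42, 42, 42, 42, 42, 38, 38, 38, 38, 37, 37, 37, 36, 37,
    37, 37, 37, 37, 37, 37, 37, 37, 37, 37, 36, 38, 38, 38, 38, 38, 38, 38, 38, 36, 36, 36, 35, 35,
    35, 35, 37, 37, 37, 37, 37, 37, 37, 37, 33, 33, 33, 33, 33, 33, 33, 33, 32, 32, 32, 32, 32, 31,
    31, 29, 31, 31, 31, 31, 32, 32, 32, 32, 32, 32, 32, 32, 30, 30, 30, 30, 30, 30, 30, 30, 29, 29,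
    29, 29, 29, 29, 28, 28, 29, 29, 29, 29, 29, 29, 29, 28, 28, 28, 28, 28, 26, 27, 27, 27, 27, 27,
    27, 27, 26, 26, 25, 25, 25, 25, 25, 27, 27, 27, 27, 27, 27, 27, 26, 24, 24, 23, 23, 23, 23, 23,
    23, 22, 22, 22, 22, 22, 22, 22, 20, 20, 20, 20, 20, 20, 20, 20, 19, 19, 19, 19, 19, 18, 18, 17,
    17, 17, 17, 17, 18, 18, 18, 18, 18, 18, 18, 18, 17, 17, 17, 17, 17, 17, 17, 17, 15, 15, 15, 15,
    15, 15, 15, 15, 15, 15, 15, 15, 15, 15, 15, 14, 14, 14, 14, 14, 14, 14, 14, 14, 14, 14, 14, 14,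
    13, 13, 13, 13, 13, 13, 13, 13, 13, 13, 13, 13, 13, 13, 12, 11, 11, 11, 11, 10, 10, 10, 10, 10,
    10, 10, 10, 9, 9, 9, 9, 9, 9, 9, 9, 9, 9, 9, 8, 8, 8, 8, 8, 7, 7, 7, 7, 7, 7, 7, 7, 7, 7, 7, 7,
    7, 7, 7, 6, 6, 6, 6, 6, 6, 6, 6, 5, 5, 5, 5, 5, 5, 5, 5, 5, 5, 5, 5, 5, 4, 4, 4, 4, 4, 4, 4, 4,
    4, 4, 3, 3, 3, 3, 3, 3, 3, 3, 3, 3, 3, 3, 2, 2, 2, 2, 2, 2, 2, 2, 2, 2, 2, 2, 1, 1, 1, 1, 1, 1,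
    1, 1, 1, 1, 1, 1, 1]⟩,
  ⟨543632, 547400, 555691, 227, [2541, 2523, 2364, 2330, 2284, 2292, 2292, 2202, 2257, 2256, 2270,
    2272, 2163, 2177, 2177, 2227, 2236, 2236, 2204, 2261, 2258, 2130, 2115, 2074, 2087, 2132, 2126,
    2105, 2119, 2198, 2194, 2204, 2173, 2128, 2155, 2239, 2235, 2233, 2101, 2074, 2060, 2039, 2012,
    1989, 1985, 2034, 2083, 2082, 2081, 2035, 2058, 2058, 2058, 2046, 2068, 2146, 2146, 2141, 2106,
    2037, 2005, 2019, 2020, 2018, 2051, 2092, 2148, 2148, 2135, 2015, 2013, 1983, 1965, 1965, 1945,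
    1915, 1916, 1917, 1876, 1849, 1800, 1854, 1855, 1890, 1911, 1941, 1967, 1967, 1963, 1919, 1860,
    1922, 1931, 1931, 1931, 1872, 1890, 1892, 1909, 1909, 1889, 1923, 2009, 2009, 2009, 1978, 1916,
    1894, 1882, 1822, 1828, 1846, 1848, 1855, 1841, 1840, 1822, 1810, 1840, 1832, 1843, 1886, 1948,
    1948, 1948, 1900, 1812, 1785, 1785, 1751, 1744, 1700, 1729, 1731, 1731, 1727, 1646, 1656, 1678,
    1685, 1685, 1666, 1639, 1629, 1606, 1603, 1522, 1529, 1539, 1559, 1558, 1555, 1559, 1593, 1593,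
    1602, 1617, 1583, 1641, 1666, 1666, 1638, 1617, 1552, 1536, 1534, 1515, 1517, 1541, 1569, 1579,
    1579, 1540, 1514, 1509, 1509, 1509, 1476, 1506, 1506, 1506, 1481, 1456, 1431, 1420, 1433, 1441,
    1442, 1452, 1533, 1533, 1533, 1489, 1473, 1446, 1449, 1426, 1426, 1386, 1356, 1358, 1359, 1326,
    1316, 1333, 1309, 1372, 1374, 1344, 1358, 1358, 1345, 1315, 1315, 1284, 1331, 1322, 1311, 1311,
    1275, 1311, 1311, 1296, 1311, 1329, 1387, 1398, 1398, 1390, 1303, 1285, 1241, 1230, 1230, 1170,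
    1192, 1189, 1183, 1182, 1124, 1120, 1120, 1132, 1130, 1130, 1108, 1134, 1132, 1061, 1042, 1021,
    1017, 1031, 1021, 1001, 1001, 1039, 1031, 1028, 1005, 966, 975, 1013, 1005, 1001, 937, 921,
    911, 896, 879, 858, 845, 868, 890, 888, 885, 865, 869, 869, 869, 859, 866, 904, 904, 904, 890,
    853, 832, 835, 835, 828, 828, 849, 877, 877, 877, 816, 804, 788, 779, 779, 777, 759, 759, 759,
    738, 723, 693, 702, 702, 717, 728, 739, 750, 750, 750, 728, 692, 706, 711, 711, 711, 682, 679,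
    678, 678, 678, 656, 649, 690, 690, 690, 690, 663, 652, 642, 612, 612, 618, 619, 619, 611, 611,
    606, 599, 599, 590, 590, 598, 629, 629, 629, 626, 579, 554, 554, 537, 533, 510, 510, 511, 511,
    511, 478, 464, 464, 468, 468, 464, 456, 456, 453, 451, 415, 404, 401, 401, 400, 399, 391, 407,
    407, 407, 407, 384, 382, 395, 395, 395, 395, 362, 351, 350, 342, 333, 326, 333, 338, 338, 338,
    328, 320, 320, 320, 306, 311, 311, 311, 311, 311, 294, 279, 279, 279, 275, 273, 283, 283, 283,
    283, 282, 250, 242, 230, 230, 230, 216, 211, 211, 206, 206, 203, 182, 184, 184, 184, 184, 184,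
    178, 178, 178, 163, 158, 153, 153, 153, 148, 144, 144, 140, 140, 140, 126, 128, 128, 128, 128,
    127, 113, 104, 104, 95, 93, 92, 83, 83, 83, 81, 81, 72, 69, 69, 65, 63, 63, 58, 58, 58, 51, 47,
    42, 38, 38, 37, 33, 32, 29, 29, 27, 23, 19, 18, 15, 15, 14, 11, 9, 7, 5, 5, 3, 2]⟩,
  ⟨547400, 551400, 559404, 108, [2079, 2054, 1912, 1888, 1863, 1860, 1856, 1822, 1825, 1832, 1834,
    1789, 1753, 1767, 1803, 1797, 1804, 1802, 1802, 1749, 1690, 1681, 1694, 1700, 1699, 1704, 1718,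
    1720, 1715, 1691, 1691, 1729, 1732, 1736, 1663, 1617, 1600, 1590, 1568, 1572, 1592, 1604, 1607,
    1598, 1586, 1572, 1587, 1603, 1618, 1618, 1596, 1593, 1528, 1538, 1538, 1506, 1538, 1537, 1580,
    1580, 1573, 1498, 1447, 1442, 1425, 1419, 1393, 1369, 1343, 1335, 1343, 1297, 1301, 1317, 1354,
    1345, 1339, 1320, 1320, 1290, 1271, 1265, 1259, 1250, 1234, 1218, 1205, 1209, 1235, 1235, 1234,
    1233, 1229, 1229, 1156, 1134, 1134, 1147, 1135, 1103, 1096, 1106, 1103, 1102, 1077, 1086, 1149,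
    1150, 1150, 1124, 1050, 1037, 986, 978, 968, 936, 934, 917, 910, 881, 852, 854, 841, 827, 830,
    821, 818, 776, 741, 733, 734, 729, 719, 717, 724, 724, 714, 688, 688, 707, 707, 707, 670, 645,
    635, 612, 601, 601, 606, 606, 599, 590, 577, 566, 559, 545, 552, 552, 552, 550, 517, 513, 513,
    495, 495, 493, 514, 514, 514, 470, 441, 433, 418, 410, 394, 382, 371, 367, 366, 332, 329, 324,
    324, 320, 316, 316, 316, 289, 274, 271, 271, 268, 258, 250, 247, 247, 246, 230, 230, 230, 230,
    230, 198, 187, 177, 171, 165, 149, 145, 144, 142, 142, 123, 122, 116, 111, 111, 103, 103, 103,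
    84, 80, 74, 65, 64, 55, 52, 50, 47, 47, 36, 30, 29, 24, 22, 17, 13, 11, 8, 5, 3]⟩,
  ⟨551400, 557000, 563344, 122, [908, 908, 858, 849, 845, 833, 835, 832, 818, 819, 819, 821, 821,
    794, 795, 802, 802, 804, 798, 796, 801, 800, 779, 766, 749, 762, 761, 767, 767, 764, 766, 770,
    766, 766, 755, 754, 764, 766, 764, 738, 742, 728, 726, 707, 710, 710, 718, 719, 711, 719, 725,
    712, 722, 713, 717, 719, 712, 704, 705, 707, 697, 695, 692, 686, 683, 685, 699, 698, 691, 695,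
    664, 664, 652, 636, 637, 633, 612, 609, 602, 608, 607, 599, 591, 603, 602, 597, 586, 585, 590,
    590, 581, 571, 561, 562, 560, 552, 552, 537, 543, 549, 555, 554, 545, 542, 544, 542, 539, 524,
    519, 521, 518, 508, 503, 500, 496, 494, 488, 493, 494, 489, 510, 507, 502, 501, 473, 462, 459,
    452, 446, 439, 424, 421, 416, 412, 411, 388, 385, 384, 382, 381, 373, 368, 367, 365, 350, 342,
    331, 333, 331, 331, 328, 325, 323, 321, 314, 314, 309, 308, 311, 311, 309, 295, 295, 283, 281,
    271, 270, 270, 268, 268, 262, 262, 262, 254, 250, 245, 245, 247, 247, 242, 242, 241, 233, 232,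
    226, 222, 221, 220, 227, 227, 223, 223, 206, 201, 195, 187, 185, 183, 171, 170, 166, 164, 162,
    152, 148, 147, 146, 144, 140, 139, 139, 139, 131, 126, 121, 120, 119, 117, 117, 111, 110, 110,
    108, 107, 103, 101, 101, 101, 99, 92, 90, 83, 82, 76, 73, 72, 66, 65, 63, 62, 62, 56, 54, 52,
    50, 49, 48, 46, 45, 44, 41, 37, 34, 32, 30, 28, 28, 24, 23, 22, 21, 20, 17, 15, 14, 13, 11, 10,
    8, 7, 6, 5, 4, 3, 2, 1]⟩,
  ⟨557000, 560600, 568858, 64, [1746, 1750, 1630, 1611, 1597, 1577, 1586, 1569, 1546, 1543, 1532,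
    1543, 1506, 1472, 1473, 1489, 1485, 1472, 1469, 1471, 1487, 1438, 1404, 1382, 1400, 1400, 1386,
    1401, 1385, 1381, 1363, 1372, 1360, 1335, 1351, 1353, 1337, 1278, 1272, 1231, 1195, 1185, 1190,
    1190, 1158, 1144, 1129, 1132, 1110, 1075, 1063, 1070, 1070, 1055, 1049, 1042, 1049, 1022, 991,
    973, 959, 956, 1001, 987, 966, 962, 888, 868, 841, 805, 794, 764, 742, 732, 714, 709, 677, 651,
    640, 636, 621, 609, 598, 595, 595, 562, 541, 523, 523, 509, 498, 488, 473, 471, 464, 462, 450,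
    436, 440, 440, 425, 391, 382, 354, 336, 322, 314, 298, 282, 273, 263, 262, 247, 230, 224, 219,
    208, 204, 198, 194, 194, 172, 156, 142, 131, 124, 116, 109, 99, 97, 90, 86, 76, 63, 58, 51, 44,
    40, 34, 28, 23, 18, 13, 11, 6, 3]⟩,
  ⟨560600, 565800, 572402, 89, [1005, 1005, 968, 959, 949, 950, 939, 934, 932, 934, 915, 906, 909,
    907, 904, 903, 900, 882, 878, 874, 872, 875, 874, 864, 868, 869, 871, 858, 861, 864, 843, 838,
    838, 828, 823, 825, 825, 822, 822, 813, 804, 802, 800, 808, 802, 805, 785, 780, 780, 785, 785,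
    776, 762, 748, 737, 726, 725, 710, 705, 710, 693, 688, 685, 677, 669, 663, 659, 656, 642, 639,
    631, 627, 629, 622, 621, 618, 617, 604, 607, 612, 599, 588, 582, 578, 571, 567, 565, 577, 570,
    563, 556, 533, 521, 512, 505, 497, 487, 475, 467, 452, 444, 437, 432, 426, 424, 417, 400, 394,
    387, 381, 377, 372, 363, 361, 357, 355, 343, 343, 339, 327, 322, 317, 311, 303, 301, 296, 290,
    287, 281, 276, 275, 272, 270, 268, 268, 257, 253, 253, 253, 249, 243, 233, 224, 218, 208, 204,
    194, 189, 186, 175, 173, 167, 163, 158, 156, 150, 149, 141, 139, 133, 130, 126, 121, 121, 118,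
    118, 111, 111, 109, 102, 96, 91, 85, 82, 76, 73, 70, 66, 62, 59, 57, 53, 52, 49, 49, 45, 40,
    36, 34, 31, 28, 25, 23, 22, 20, 16, 14, 13, 11, 9, 7, 6, 4, 3, 2]⟩,
  ⟨565800, 571400, 577520, 78, [1278, 1252, 1225, 1215, 1204, 1203, 1184, 1181, 1181, 1178, 1152,
    1145, 1132, 1133, 1137, 1145, 1126, 1116, 1111, 1108, 1098, 1087, 1091, 1094, 1094, 1094, 1098,
    1073, 1073, 1064, 1052, 1049, 1043, 1042, 1034, 1027, 1012, 1012, 1011, 1011, 1003, 994, 995,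
    991, 994, 990, 961, 945, 935, 933, 918, 910, 893, 891, 875, 857, 844, 838, 837, 829, 816, 815,
    811, 793, 785, 778, 774, 775, 778, 774, 766, 751, 745, 741, 730, 726, 724, 729, 721, 697, 672,
    659, 644, 638, 620, 611, 597, 587, 562, 556, 540, 534, 531, 529, 509, 496, 484, 478, 468, 454,
    449, 445, 436, 433, 429, 410, 404, 398, 387, 379, 366, 363, 359, 353, 344, 340, 337, 337, 332,
    326, 321, 316, 316, 313, 291, 279, 269, 265, 255, 241, 232, 230, 221, 210, 203, 197, 193, 188,
    178, 175, 168, 159, 156, 153, 148, 146, 142, 139, 137, 126, 117, 115, 105, 100, 91, 88, 84, 78,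
    73, 69, 67, 64, 61, 60, 51, 46, 40, 39, 34, 30, 28, 27, 23, 18, 15, 13, 12, 8, 6, 6, 3, 2]⟩,
  ⟨571400, 577200, 583029, 95, [1361, 1349, 1314, 1303, 1306, 1281, 1289, 1275, 1266, 1254, 1266,
    1264, 1242, 1230, 1217, 1216, 1212, 1217, 1225, 1228, 1208, 1207, 1196, 1193, 1177, 1178, 1175,
    1170, 1175, 1175, 1175, 1172, 1179, 1163, 1154, 1146, 1143, 1133, 1130, 1129, 1116, 1105, 1107,
    1102, 1098, 1089, 1074, 1073, 1074, 1077, 1075, 1070, 1066, 1058, 1064, 1060, 1036, 1028, 1014,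
    1003, 1001, 1000, 989, 967, 962, 952, 946, 930, 922, 908, 898, 895, 892, 889, 877, 881, 871,
    855, 839, 835, 830, 828, 826, 834, 828, 816, 818, 817, 807, 789, 797, 783, 777, 786, 785, 771,
    756, 731, 717, 710, 687, 685, 669, 660, 648, 651, 641, 623, 607, 595, 586, 578, 572, 569, 564,
    550, 545, 530, 523, 507, 502, 493, 486, 479, 475, 470, 464, 460, 445, 437, 430, 425, 413, 409,
    399, 390, 384, 383, 378, 374, 367, 359, 358, 358, 356, 351, 347, 342, 338, 338, 331, 314, 308,
    295, 287, 284, 280, 268, 256, 252, 246, 242, 234, 228, 218, 212, 206, 204, 199, 191, 188, 183,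
    176, 168, 165, 163, 158, 154, 154, 151, 147, 145, 142, 133, 124, 122, 115, 109, 104, 101, 94,
    89, 86, 82, 79, 73, 71, 68, 67, 64, 63, 58, 53, 47, 45, 41, 37, 34, 32, 30, 28, 28, 23, 20, 16,
    15, 13, 13, 9, 7, 6, 4, 3, 2, 1]⟩,
  ⟨577200, 582400, 588733, 83, [3536, 3474, 3406, 3370, 3376, 3332, 3328, 3288, 3267, 3280, 3260,
    3266, 3215, 3178, 3149, 3201, 3214, 3186, 3179, 3177, 3133, 3107, 3090, 3075, 3044, 3045, 3057,
    3093, 3100, 3048, 3015, 3006, 3035, 2961, 2963, 2916, 2918, 2886, 2878, 2852, 2778, 2790, 2756,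
    2790, 2793, 2782, 2796, 2763, 2786, 2731, 2727, 2664, 2624, 2596, 2620, 2582, 2504, 2472, 2464,
    2435, 2409, 2386, 2356, 2347, 2338, 2325, 2288, 2263, 2197, 2181, 2178, 2190, 2146, 2140, 2127,
    2124, 2126, 2102, 2099, 2050, 2045, 2035, 2048, 2022, 1963, 1900, 1861, 1826, 1777, 1757, 1722,
    1689, 1691, 1668, 1642, 1591, 1550, 1514, 1513, 1506, 1458, 1441, 1429, 1393, 1350, 1320, 1292,
    1255, 1246, 1235, 1229, 1213, 1181, 1144, 1122, 1117, 1064, 1047, 1023, 1014, 997, 988, 972,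
    933, 930, 912, 909, 903, 893, 892, 870, 870, 834, 807, 776, 747, 719, 719, 698, 659, 643, 640,
    612, 592, 574, 549, 530, 525, 516, 486, 475, 452, 435, 424, 420, 397, 388, 384, 380, 370, 355,
    343, 318, 306, 280, 274, 260, 244, 234, 223, 207, 192, 185, 179, 165, 164, 158, 146, 130, 119,
    111, 100, 95, 82, 77, 70, 68, 56, 48, 41, 35, 30, 24, 21, 15, 11, 7, 5, 3]⟩,
  ⟨582400, 588600, 593845, 108, [1945, 1945, 1884, 1871, 1852, 1853, 1834, 1836, 1830, 1809, 1796,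
    1790, 1796, 1804, 1790, 1778, 1769, 1760, 1751, 1745, 1760, 1768, 1769, 1751, 1747, 1735, 1727,
    1724, 1710, 1696, 1702, 1673, 1665, 1674, 1682, 1691, 1697, 1700, 1699, 1668, 1678, 1656, 1657,
    1646, 1637, 1624, 1606, 1602, 1590, 1576, 1576, 1569, 1541, 1527, 1522, 1527, 1527, 1528, 1528,
    1532, 1532, 1524, 1533, 1533, 1527, 1503, 1471, 1476, 1453, 1448, 1438, 1426, 1412, 1391, 1375,
    1352, 1348, 1355, 1334, 1323, 1322, 1305, 1288, 1285, 1281, 1286, 1275, 1254, 1231, 1216, 1212,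
    1201, 1194, 1194, 1197, 1175, 1166, 1162, 1164, 1171, 1166, 1158, 1151, 1136, 1131, 1122, 1143,
    1133, 1118, 1111, 1071, 1050, 1023, 1015, 997, 987, 970, 956, 941, 933, 927, 921, 911, 902,
    886, 869, 853, 842, 838, 830, 821, 809, 796, 786, 770, 758, 747, 731, 722, 701, 691, 687, 682,
    680, 677, 671, 664, 640, 637, 621, 610, 593, 584, 574, 564, 557, 550, 542, 542, 537, 519, 511,
    506, 504, 495, 493, 493, 491, 488, 482, 482, 477, 471, 451, 431, 428, 416, 403, 397, 391, 384,
    373, 366, 355, 350, 346, 336, 325, 320, 308, 296, 290, 288, 286, 280, 270, 262, 250, 246, 238,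
    232, 229, 227, 216, 213, 209, 208, 206, 203, 201, 190, 182, 176, 168, 162, 158, 150, 146, 142,
    135, 125, 123, 121, 114, 106, 104, 98, 96, 91, 88, 87, 86, 80, 75, 69, 67, 62, 57, 53, 51, 45,
    44, 41, 38, 37, 34, 30, 27, 24, 22, 19, 18, 16, 13, 11, 10, 8, 6, 5, 4, 3, 2, 1]⟩,
  ⟨588600, 593600, 599938, 83, [2447, 2447, 2371, 2348, 2341, 2312, 2312, 2310, 2276, 2277, 2284,
    2286, 2259, 2252, 2234, 2220, 2241, 2248, 2252, 2232, 2211, 2192, 2164, 2158, 2142, 2129, 2135,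
    2135, 2158, 2161, 2169, 2139, 2139, 2101, 2071, 2058, 2038, 2017, 2001, 1993, 1974, 1941, 1949,
    1944, 1925, 1933, 1937, 1936, 1942, 1942, 1939, 1901, 1880, 1852, 1839, 1794, 1777, 1750, 1735,
    1724, 1707, 1707, 1678, 1662, 1659, 1633, 1616, 1599, 1576, 1552, 1539, 1536, 1516, 1502, 1478,
    1480, 1467, 1463, 1470, 1451, 1445, 1455, 1432, 1423, 1400, 1340, 1318, 1286, 1256, 1251, 1235,
    1196, 1184, 1176, 1159, 1135, 1125, 1094, 1062, 1068, 1055, 1039, 1019, 994, 962, 940, 924,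
    905, 884, 874, 861, 859, 851, 843, 811, 795, 766, 741, 733, 717, 702, 693, 681, 667, 647, 642,
    632, 617, 617, 613, 607, 607, 597, 584, 559, 536, 522, 515, 494, 483, 469, 456, 446, 433, 425,
    401, 386, 378, 365, 358, 355, 338, 320, 309, 299, 289, 284, 270, 264, 258, 256, 253, 244, 233,
    218, 206, 202, 191, 181, 178, 161, 153, 150, 141, 129, 125, 119, 111, 107, 106, 98, 86, 85, 76,
    68, 64, 59, 53, 50, 45, 41, 36, 32, 27, 25, 21, 18, 14, 12, 9, 6, 6, 3, 2, 1]⟩,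
  ⟨593600, 600000, 604850, 89, [2981, 2981, 2912, 2883, 2858, 2847, 2823, 2829, 2819, 2790, 2794,
    2800, 2807, 2786, 2757, 2750, 2732, 2733, 2759, 2758, 2760, 2738, 2710, 2678, 2666, 2650, 2633,
    2632, 2633, 2617, 2635, 2638, 2660, 2646, 2638, 2602, 2562, 2549, 2502, 2497, 2488, 2467, 2452,
    2421, 2433, 2393, 2406, 2378, 2373, 2368, 2354, 2376, 2377, 2382, 2375, 2340, 2304, 2259, 2244,
    2204, 2189, 2175, 2138, 2121, 2116, 2104, 2091, 2077, 2053, 2024, 2009, 1972, 1955, 1961, 1932,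
    1908, 1906, 1875, 1850, 1828, 1824, 1812, 1790, 1785, 1781, 1786, 1780, 1778, 1759, 1739, 1720,
    1660, 1627, 1596, 1580, 1541, 1526, 1511, 1479, 1457, 1445, 1427, 1402, 1369, 1349, 1332, 1315,
    1309, 1293, 1280, 1248, 1211, 1183, 1160, 1139, 1118, 1100, 1088, 1068, 1060, 1048, 1047, 1017,
    997, 967, 938, 925, 898, 887, 876, 858, 836, 818, 813, 789, 788, 765, 754, 749, 739, 739, 736,
    728, 711, 687, 660, 637, 631, 612, 598, 590, 566, 551, 544, 535, 516, 501, 480, 463, 455, 442,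
    434, 433, 413, 388, 383, 367, 355, 346, 337, 326, 317, 310, 306, 305, 294, 273, 264, 253, 244,
    234, 225, 214, 208, 192, 183, 180, 171, 159, 152, 144, 135, 132, 127, 122, 113, 105, 97, 93,
    86, 76, 75, 66, 60, 56, 53, 47, 44, 39, 32, 31, 25, 22, 20, 17, 13, 11, 9, 6, 5, 3, 2, 1]⟩,
  ⟨600000, 606200, 611135, 115, [1305, 1305, 1284, 1276, 1267, 1262, 1261, 1256, 1255, 1254, 1251,
    1245, 1238, 1230, 1244, 1242, 1246, 1237, 1231, 1220, 1221, 1207, 1209, 1210, 1215, 1226, 1226,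
    1226, 1214, 1200, 1190, 1183, 1186, 1179, 1169, 1166, 1168, 1166, 1162, 1160, 1166, 1170, 1177,
    1178, 1171, 1153, 1147, 1129, 1120, 1118, 1111, 1108, 1108, 1109, 1098, 1086, 1076, 1070, 1071,
    1067, 1072, 1067, 1055, 1052, 1045, 1040, 1038, 1041, 1049, 1051, 1051, 1036, 1030, 1015, 1003,
    996, 984, 975, 971, 963, 960, 951, 946, 936, 936, 936, 938, 931, 916, 909, 896, 881, 877, 868,
    870, 867, 868, 853, 854, 840, 837, 819, 819, 816, 808, 804, 797, 791, 787, 783, 780, 781, 784,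
    782, 774, 769, 761, 740, 733, 722, 715, 710, 701, 694, 685, 675, 668, 658, 650, 648, 640, 635,
    628, 613, 603, 601, 589, 586, 585, 577, 579, 572, 564, 552, 541, 530, 522, 519, 509, 498, 493,
    487, 484, 476, 469, 470, 466, 465, 460, 449, 435, 430, 419, 413, 410, 402, 396, 395, 390, 381,
    374, 364, 360, 359, 352, 351, 344, 336, 334, 329, 324, 322, 321, 321, 320, 315, 303, 300, 293,
    287, 284, 277, 270, 266, 262, 260, 251, 246, 241, 240, 237, 234, 226, 217, 214, 209, 202, 200,
    195, 193, 191, 189, 178, 176, 169, 168, 162, 160, 156, 149, 147, 144, 141, 137, 135, 132, 132,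
    131, 124, 120, 118, 114, 109, 108, 103, 101, 99, 96, 93, 88, 83, 82, 79, 78, 73, 70, 67, 66,
    61, 59, 58, 56, 54, 54, 50, 49, 45, 43, 42, 40, 36, 34, 33, 30, 29, 27, 25, 24, 23, 21, 21, 18,
    18, 15, 14, 13, 12, 10, 10, 9, 8, 7, 6, 5, 5, 4, 3, 3, 2, 2, 1, 1, 1]⟩,
  ⟨606200, 611000, 617222, 78, [2376, 2329, 2317, 2312, 2308, 2281, 2295, 2302, 2266, 2259, 2281,
    2285, 2259, 2237, 2233, 2216, 2215, 2238, 2250, 2212, 2188, 2179, 2174, 2162, 2139, 2146, 2124,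
    2122, 2130, 2152, 2117, 2098, 2073, 2044, 2044, 2021, 2034, 2007, 1974, 1966, 1966, 1963, 1928,
    1932, 1897, 1907, 1901, 1909, 1912, 1863, 1845, 1812, 1805, 1779, 1769, 1748, 1736, 1708, 1708,
    1715, 1673, 1647, 1622, 1607, 1589, 1585, 1573, 1560, 1519, 1508, 1509, 1472, 1456, 1451, 1433,
    1417, 1411, 1424, 1404, 1361, 1345, 1323, 1301, 1270, 1268, 1244, 1212, 1191, 1180, 1175, 1140,
    1120, 1099, 1071, 1058, 1059, 1041, 1016, 989, 967, 953, 929, 906, 896, 871, 855, 850, 843,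
    816, 800, 776, 758, 742, 727, 720, 697, 674, 664, 651, 640, 620, 614, 592, 588, 577, 577, 569,
    545, 536, 515, 504, 491, 478, 462, 454, 434, 429, 422, 401, 392, 377, 363, 353, 345, 331, 325,
    308, 301, 292, 273, 269, 260, 249, 240, 234, 231, 221, 209, 205, 194, 184, 176, 171, 159, 153,
    143, 135, 132, 122, 119, 109, 101, 98, 94, 85, 84, 75, 70, 65, 58, 55, 50, 45, 41, 39, 35, 31,
    27, 23, 21, 17, 16, 13, 10, 9, 7, 5, 4, 3, 2, 1]⟩,
  ⟨611000, 615200, 621933, 60, [2010, 1970, 1970, 1964, 1960, 1961, 1952, 1950, 1940, 1936, 1927,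
    1923, 1908, 1904, 1903, 1888, 1876, 1874, 1852, 1845, 1835, 1818, 1821, 1816, 1785, 1770, 1758,
    1755, 1727, 1710, 1699, 1682, 1672, 1656, 1636, 1626, 1622, 1614, 1585, 1568, 1544, 1532, 1513,
    1501, 1478, 1454, 1446, 1416, 1395, 1381, 1356, 1346, 1323, 1299, 1291, 1260, 1237, 1225, 1203,
    1210, 1194, 1153, 1136, 1114, 1091, 1071, 1050, 1032, 1004, 987, 964, 945, 917, 898, 888, 864,
    838, 823, 797, 779, 757, 735, 721, 712, 684, 665, 647, 635, 611, 591, 577, 558, 541, 528, 511,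
    500, 487, 480, 464, 448, 431, 423, 404, 397, 380, 361, 357, 337, 321, 314, 296, 290, 275, 261,
    256, 238, 225, 218, 206, 201, 193, 181, 174, 163, 153, 146, 136, 130, 119, 111, 105, 96, 88,
    83, 78, 73, 66, 59, 55, 48, 43, 39, 34, 32, 27, 23, 20, 16, 13, 11, 9, 7, 5, 3, 3, 2]⟩,
  ⟨615200, 620200, 626053, 69, [2786, 2787, 2786, 2783, 2775, 2774, 2765, 2759, 2755, 2735, 2735,
    2732, 2715, 2716, 2694, 2693, 2680, 2665, 2664, 2645, 2631, 2625, 2602, 2590, 2591, 2559, 2552,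
    2533, 2518, 2514, 2485, 2472, 2451, 2427, 2418, 2391, 2374, 2361, 2339, 2340, 2303, 2281, 2274,
    2248, 2249, 2216, 2188, 2182, 2148, 2119, 2112, 2076, 2065, 2034, 2004, 1999, 1958, 1949, 1920,
    1883, 1876, 1846, 1829, 1804, 1770, 1756, 1729, 1704, 1685, 1661, 1645, 1621, 1593, 1572, 1543,
    1518, 1491, 1464, 1436, 1410, 1387, 1359, 1332, 1306, 1282, 1251, 1231, 1208, 1187, 1157, 1129,
    1107, 1079, 1064, 1033, 1010, 990, 967, 945, 922, 901, 881, 853, 833, 811, 790, 773, 751, 740,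
    716, 695, 685, 665, 657, 637, 617, 607, 585, 564, 554, 532, 522, 500, 483, 475, 451, 443, 425,
    404, 396, 378, 369, 352, 333, 324, 309, 296, 286, 274, 266, 255, 243, 234, 222, 213, 200, 190,
    181, 170, 162, 151, 141, 133, 124, 115, 110, 102, 98, 89, 80, 76, 68, 65, 57, 50, 46, 41, 36,
    32, 28, 26, 20, 17, 15, 12, 11, 7, 5, 5, 2, 2, 1]⟩,
  ⟨620200, 625000, 630958, 69, [1022, 1022, 1023, 1022, 1022, 1022, 1018, 1016, 1014, 1012, 1007,
    1004, 1004, 1000, 998, 991, 986, 984, 979, 979, 972, 968, 963, 959, 952, 944, 940, 935, 930,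
    926, 919, 915, 906, 901, 894, 886, 880, 872, 867, 860, 850, 844, 835, 832, 823, 816, 811, 801,
    797, 789, 774, 770, 761, 753, 744, 735, 728, 718, 712, 699, 690, 684, 674, 670, 657, 646, 640,
    629, 623, 611, 603, 596, 588, 580, 570, 560, 552, 543, 535, 521, 511, 504, 494, 488, 474, 463,
    457, 447, 441, 429, 421, 413, 405, 396, 383, 378, 368, 361, 354, 344, 338, 328, 320, 313, 303,
    296, 288, 282, 275, 266, 260, 253, 249, 241, 234, 230, 222, 219, 212, 203, 200, 194, 188, 182,
    175, 170, 164, 161, 152, 146, 144, 137, 134, 127, 121, 118, 112, 109, 104, 99, 96, 92, 88, 84,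
    80, 77, 73, 70, 65, 61, 58, 55, 54, 48, 45, 44, 40, 39, 35, 32, 31, 28, 26, 23, 22, 20, 18, 16,
    14, 13, 12, 10, 9, 8, 6, 6, 4, 4, 3, 2, 2, 1, 1, 1]⟩,
  ⟨625000, 630200, 635665, 78, [3131, 3133, 3132, 3136, 3133, 3129, 3130, 3119, 3121, 3117, 3115,
    3096, 3095, 3085, 3083, 3072, 3072, 3047, 3045, 3032, 3020, 3012, 2999, 2984, 2963, 2971, 2936,
    2932, 2918, 2892, 2898, 2870, 2857, 2842, 2825, 2805, 2788, 2780, 2759, 2755, 2728, 2696, 2683,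
    2668, 2653, 2628, 2612, 2599, 2558, 2549, 2524, 2514, 2491, 2458, 2459, 2424, 2422, 2388, 2362,
    2348, 2313, 2308, 2271, 2254, 2223, 2204, 2174, 2156, 2140, 2109, 2072, 2064, 2033, 2018, 1994,
    1953, 1937, 1908, 1890, 1863, 1844, 1814, 1787, 1769, 1743, 1731, 1698, 1668, 1657, 1622, 1600,
    1572, 1553, 1525, 1499, 1472, 1448, 1423, 1395, 1366, 1352, 1316, 1299, 1286, 1240, 1233, 1204,
    1179, 1161, 1133, 1111, 1085, 1065, 1040, 1024, 1000, 974, 968, 938, 914, 894, 876, 858, 836,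
    821, 800, 776, 760, 739, 731, 706, 688, 683, 657, 652, 630, 611, 600, 579, 570, 549, 538, 518,
    506, 488, 474, 464, 446, 427, 419, 403, 394, 381, 360, 352, 338, 329, 315, 306, 291, 278, 271,
    259, 257, 241, 228, 225, 212, 204, 192, 187, 176, 165, 159, 150, 142, 133, 124, 121, 110, 107,
    102, 90, 89, 81, 76, 70, 65, 59, 53, 49, 44, 43, 36, 32, 30, 26, 24, 20, 17, 15, 12, 11, 8, 7,
    5, 4, 3, 2, 2, 1]⟩,
  ⟨630200, 636000, 640762, 95, [1558, 1558, 1558, 1558, 1558, 1560, 1556, 1555, 1558, 1552, 1545,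
    1549, 1548, 1547, 1540, 1536, 1535, 1534, 1528, 1524, 1523, 1516, 1513, 1506, 1499, 1500, 1500,
    1492, 1486, 1476, 1476, 1472, 1468, 1460, 1452, 1444, 1439, 1431, 1427, 1423, 1419, 1410, 1407,
    1398, 1391, 1380, 1377, 1373, 1366, 1350, 1352, 1340, 1338, 1324, 1317, 1309, 1298, 1295, 1281,
    1276, 1269, 1262, 1254, 1243, 1237, 1222, 1225, 1208, 1210, 1195, 1180, 1175, 1166, 1157, 1149,
    1144, 1128, 1119, 1115, 1100, 1095, 1086, 1078, 1063, 1048, 1044, 1035, 1028, 1015, 1009, 995,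
    985, 974, 963, 958, 942, 937, 927, 913, 906, 896, 886, 873, 872, 858, 843, 839, 826, 819, 805,
    796, 786, 778, 768, 752, 748, 736, 727, 713, 702, 695, 684, 678, 663, 656, 646, 638, 629, 617,
    607, 595, 589, 575, 567, 561, 552, 542, 533, 524, 514, 505, 497, 489, 482, 469, 465, 454, 448,
    437, 428, 421, 411, 408, 397, 390, 383, 375, 368, 359, 354, 344, 343, 331, 329, 321, 312, 307,
    300, 294, 288, 284, 274, 267, 265, 256, 253, 246, 241, 233, 225, 222, 216, 212, 205, 201, 194,
    189, 183, 178, 175, 167, 165, 160, 153, 150, 144, 141, 135, 134, 129, 122, 120, 115, 113, 107,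
    105, 100, 96, 95, 88, 87, 83, 80, 76, 72, 70, 66, 65, 60, 59, 56, 53, 51, 47, 45, 42, 41, 38,
    35, 34, 32, 30, 28, 26, 24, 22, 21, 19, 18, 16, 15, 14, 12, 11, 10, 9, 8, 8, 6, 5, 5, 4, 4, 3,
    2, 2, 2, 1, 1, 1, 1]⟩,
  ⟨636000, 641200, 646446, 78, [3674, 3680, 3687, 3682, 3681, 3673, 3671, 3666, 3666, 3658, 3646,
    3649, 3631, 3643, 3628, 3605, 3607, 3589, 3569, 3568, 3563, 3546, 3526, 3507, 3507, 3484, 3471,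
    3446, 3432, 3420, 3418, 3398, 3370, 3347, 3329, 3306, 3300, 3285, 3247, 3234, 3220, 3208, 3167,
    3140, 3125, 3103, 3094, 3068, 3043, 3008, 2987, 2964, 2933, 2926, 2881, 2868, 2847, 2824, 2793,
    2756, 2740, 2714, 2693, 2669, 2649, 2604, 2591, 2553, 2519, 2504, 2472, 2449, 2414, 2391, 2360,
    2334, 2300, 2261, 2240, 2208, 2192, 2157, 2131, 2096, 2064, 2038, 2010, 1991, 1949, 1930, 1898,
    1880, 1845, 1805, 1788, 1754, 1728, 1699, 1677, 1643, 1612, 1581, 1555, 1532, 1497, 1468, 1442,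
    1415, 1397, 1371, 1337, 1306, 1288, 1255, 1233, 1210, 1176, 1158, 1130, 1116, 1083, 1055, 1035,
    1011, 993, 968, 948, 919, 901, 876, 852, 839, 810, 797, 777, 759, 738, 716, 700, 680, 669, 649,
    636, 612, 602, 579, 558, 548, 531, 518, 499, 486, 468, 455, 438, 419, 409, 391, 385, 367, 356,
    339, 325, 314, 301, 294, 277, 271, 259, 251, 237, 224, 216, 206, 201, 188, 181, 170, 163, 152,
    142, 138, 126, 122, 114, 108, 101, 98, 87, 80, 78, 70, 66, 59, 55, 49, 45, 42, 38, 34, 31, 28,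
    23, 22, 18, 15, 14, 11, 9, 7, 6, 5, 4, 3, 2, 2, 1, 1]⟩,
  ⟨641200, 646400, 651540, 83, [3265, 3259, 3260, 3252, 3260, 3246, 3256, 3241, 3246, 3247, 3235,
    3230, 3218, 3226, 3204, 3202, 3193, 3187, 3171, 3168, 3168, 3148, 3138, 3129, 3117, 3104, 3091,
    3077, 3069, 3056, 3043, 3041, 3015, 3006, 2989, 2969, 2952, 2939, 2927, 2909, 2896, 2871, 2859,
    2843, 2818, 2814, 2787, 2771, 2754, 2737, 2708, 2709, 2680, 2662, 2639, 2608, 2591, 2569, 2561,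
    2531, 2518, 2490, 2483, 2447, 2417, 2411, 2384, 2368, 2336, 2333, 2293, 2282, 2251, 2239, 2211,
    2179, 2163, 2128, 2117, 2088, 2073, 2038, 2027, 1998, 1977, 1947, 1915, 1905, 1872, 1857, 1821,
    1804, 1780, 1761, 1732, 1710, 1688, 1657, 1635, 1609, 1593, 1566, 1547, 1520, 1496, 1469, 1455,
    1425, 1402, 1379, 1354, 1332, 1304, 1287, 1268, 1246, 1221, 1195, 1172, 1149, 1130, 1114, 1090,
    1070, 1047, 1025, 1008, 980, 971, 946, 926, 906, 887, 865, 854, 834, 815, 796, 771, 755, 737,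
    728, 706, 693, 673, 663, 642, 621, 615, 596, 585, 565, 559, 538, 530, 512, 501, 487, 469, 459,
    441, 434, 419, 411, 394, 387, 373, 363, 348, 332, 328, 313, 306, 290, 283, 271, 266, 255, 247,
    236, 225, 217, 207, 204, 193, 187, 177, 170, 161, 158, 149, 140, 134, 126, 121, 112, 109, 103,
    98, 91, 84, 80, 75, 72, 66, 62, 58, 54, 49, 47, 42, 38, 35, 31, 29, 26, 24, 21, 19, 17, 15, 12,
    10, 10, 8, 7, 5, 4, 4, 3, 2, 2, 1, 1, 1]⟩,
  ⟨646400, 651600, 656633, 83, [2178, 2173, 2173, 2171, 2171, 2165, 2166, 2165, 2163, 2156, 2158,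
    2162, 2149, 2146, 2140, 2134, 2131, 2136, 2120, 2111, 2104, 2099, 2091, 2088, 2081, 2074, 2079,
    2060, 2061, 2040, 2031, 2026, 2010, 2003, 1992, 1986, 1977, 1974, 1950, 1954, 1933, 1924, 1910,
    1914, 1888, 1881, 1868, 1852, 1838, 1824, 1815, 1804, 1790, 1774, 1777, 1753, 1746, 1723, 1705,
    1696, 1673, 1669, 1650, 1638, 1623, 1620, 1595, 1583, 1565, 1558, 1538, 1534, 1510, 1489, 1477,
    1459, 1447, 1428, 1419, 1396, 1389, 1366, 1359, 1339, 1324, 1303, 1293, 1274, 1253, 1241, 1225,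
    1212, 1188, 1180, 1164, 1146, 1126, 1117, 1097, 1085, 1071, 1051, 1033, 1016, 1004, 989, 974,
    959, 946, 934, 914, 901, 882, 865, 856, 835, 821, 805, 792, 780, 767, 747, 738, 723, 707, 695,
    687, 669, 652, 644, 625, 612, 599, 589, 576, 562, 550, 543, 527, 516, 503, 487, 481, 464, 460,
    444, 435, 423, 417, 404, 396, 384, 379, 366, 361, 349, 336, 330, 318, 313, 302, 297, 285, 281,
    270, 265, 255, 249, 238, 234, 225, 214, 210, 201, 197, 186, 184, 176, 170, 162, 159, 151, 147,
    140, 133, 128, 122, 120, 114, 109, 103, 101, 95, 91, 86, 82, 77, 76, 71, 65, 62, 58, 56, 51,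
    49, 46, 44, 40, 39, 35, 33, 30, 29, 25, 23, 22, 19, 18, 16, 15, 13, 12, 10, 9, 8, 7, 6, 5, 4,
    4, 3, 2, 2, 2, 1, 1, 1, 1, 1]⟩,
  ⟨651600, 656000, 661725, 73, [2457, 2460, 2443, 2443, 2440, 2442, 2440, 2440, 2436, 2429, 2428,
    2427, 2412, 2416, 2403, 2400, 2391, 2395, 2372, 2370, 2360, 2347, 2339, 2336, 2324, 2315, 2303,
    2287, 2274, 2250, 2254, 2242, 2231, 2212, 2206, 2191, 2173, 2158, 2153, 2136, 2121, 2101, 2083,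
    2061, 2038, 2037, 2016, 2009, 1982, 1982, 1947, 1929, 1913, 1907, 1873, 1873, 1840, 1829, 1803,
    1798, 1768, 1756, 1731, 1707, 1699, 1672, 1654, 1622, 1614, 1588, 1572, 1556, 1540, 1515, 1506,
    1469, 1453, 1423, 1419, 1391, 1375, 1348, 1325, 1312, 1289, 1266, 1246, 1232, 1208, 1191, 1174,
    1150, 1124, 1114, 1089, 1073, 1050, 1039, 1014, 997, 973, 960, 926, 915, 899, 880, 858, 843,
    829, 807, 789, 775, 762, 740, 722, 701, 687, 663, 657, 636, 626, 605, 601, 576, 559, 545, 536,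
    515, 508, 489, 479, 463, 456, 440, 428, 414, 399, 395, 378, 369, 350, 346, 333, 325, 314, 305,
    293, 288, 273, 265, 251, 249, 237, 229, 218, 206, 203, 192, 185, 175, 173, 162, 157, 150, 143,
    133, 131, 123, 119, 111, 109, 101, 95, 90, 87, 78, 73, 70, 66, 62, 57, 55, 50, 47, 42, 42, 36,
    35, 30, 28, 25, 24, 21, 19, 16, 16, 14, 11, 10, 8, 8, 7, 6, 4, 4, 3, 3, 2, 2, 1, 1, 1, 1]⟩,
  ⟨656000, 661000, 666032, 83, [3845, 3849, 3849, 3852, 3855, 3855, 3854, 3845, 3850, 3833, 3836,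
    3828, 3825, 3811, 3808, 3802, 3796, 3776, 3771, 3757, 3752, 3742, 3736, 3717, 3705, 3687, 3665,
    3663, 3647, 3620, 3619, 3610, 3596, 3585, 3556, 3542, 3519, 3503, 3482, 3451, 3447, 3421, 3406,
    3373, 3375, 3345, 3328, 3305, 3292, 3271, 3249, 3219, 3193, 3154, 3148, 3119, 3094, 3072, 3062,
    3028, 3007, 2976, 2961, 2928, 2908, 2876, 2865, 2832, 2807, 2778, 2764, 2726, 2704, 2670, 2655,
    2621, 2601, 2567, 2529, 2504, 2464, 2446, 2410, 2390, 2360, 2339, 2306, 2289, 2253, 2228, 2190,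
    2175, 2137, 2115, 2084, 2059, 2028, 2004, 1974, 1953, 1917, 1895, 1861, 1841, 1815, 1791, 1757,
    1728, 1697, 1671, 1649, 1622, 1590, 1572, 1545, 1518, 1493, 1457, 1441, 1407, 1386, 1354, 1332,
    1310, 1285, 1258, 1233, 1217, 1188, 1165, 1143, 1121, 1097, 1075, 1049, 1026, 999, 984, 958,
    940, 916, 905, 877, 857, 835, 822, 798, 782, 761, 749, 725, 710, 692, 680, 655, 642, 622, 612,
    592, 582, 562, 542, 529, 509, 500, 483, 473, 457, 446, 430, 421, 404, 394, 375, 370, 353, 344,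
    330, 322, 309, 300, 286, 282, 267, 260, 246, 241, 230, 223, 211, 204, 192, 188, 178, 172, 162,
    159, 148, 141, 133, 124, 121, 113, 108, 101, 98, 91, 87, 80, 77, 71, 67, 61, 60, 53, 50, 46,
    43, 38, 37, 33, 31, 27, 26, 23, 20, 18, 17, 14, 13, 11, 10, 8, 7, 6, 5, 4, 4, 3, 2, 2, 1, 1, 1,
    1]⟩,
  ⟨661000, 666600, 670925, 69, [2055, 2055, 2056, 2054, 2048, 2052, 2042, 2046, 2035, 2035, 2033,
    2026, 2017, 2017, 2011, 2008, 1990, 1997, 1984, 1978, 1968, 1966, 1953, 1952, 1925, 1930, 1918,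
    1906, 1891, 1889, 1877, 1866, 1842, 1840, 1829, 1813, 1793, 1793, 1776, 1766, 1741, 1740, 1722,
    1709, 1685, 1685, 1662, 1650, 1627, 1619, 1599, 1590, 1559, 1558, 1533, 1521, 1498, 1488, 1469,
    1456, 1431, 1425, 1395, 1390, 1363, 1355, 1333, 1319, 1295, 1284, 1258, 1248, 1224, 1209, 1191,
    1175, 1154, 1138, 1114, 1104, 1081, 1063, 1044, 1032, 1010, 992, 975, 962, 941, 925, 908, 893,
    875, 852, 840, 825, 804, 790, 773, 761, 741, 722, 709, 695, 675, 660, 647, 632, 616, 598, 590,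
    574, 558, 543, 531, 518, 502, 486, 477, 463, 451, 434, 427, 411, 401, 387, 378, 366, 357, 343,
    337, 321, 316, 302, 296, 285, 277, 265, 259, 246, 242, 230, 223, 214, 208, 198, 194, 182, 178,
    169, 162, 154, 150, 141, 137, 128, 126, 118, 113, 107, 104, 97, 92, 86, 84, 78, 74, 68, 67, 61,
    58, 53, 52, 47, 44, 40, 39, 35, 33, 30, 28, 25, 23, 20, 20, 17, 15, 14, 13, 11, 10, 8, 8, 6, 6,
    5, 4, 3, 3, 2, 2, 2, 1, 1, 1, 1, 1]⟩,
  ⟨666600, 672000, 676403, 95, [4574, 4575, 4566, 4567, 4562, 4555, 4558, 4550, 4551, 4540, 4530,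
    4526, 4515, 4516, 4505, 4507, 4491, 4483, 4469, 4468, 4466, 4456, 4448, 4432, 4417, 4404, 4391,
    4387, 4375, 4374, 4355, 4331, 4336, 4312, 4296, 4273, 4268, 4236, 4223, 4213, 4194, 4178, 4165,
    4155, 4134, 4113, 4079, 4078, 4043, 4031, 4008, 3996, 3960, 3942, 3909, 3899, 3869, 3849, 3841,
    3814, 3781, 3777, 3746, 3719, 3692, 3684, 3642, 3616, 3584, 3568, 3539, 3519, 3484, 3470, 3436,
    3409, 3371, 3355, 3323, 3308, 3263, 3245, 3215, 3192, 3159, 3138, 3131, 3091, 3068, 3026, 3015,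
    2980, 2955, 2924, 2906, 2862, 2847, 2802, 2783, 2743, 2723, 2688, 2664, 2631, 2610, 2576, 2548,
    2510, 2494, 2456, 2432, 2396, 2373, 2340, 2314, 2283, 2260, 2233, 2197, 2166, 2142, 2111, 2095,
    2061, 2037, 2010, 1978, 1965, 1924, 1910, 1870, 1849, 1813, 1796, 1768, 1747, 1712, 1696, 1666,
    1642, 1612, 1583, 1562, 1534, 1506, 1483, 1462, 1431, 1407, 1381, 1360, 1338, 1313, 1295, 1272,
    1244, 1230, 1201, 1180, 1154, 1139, 1110, 1089, 1065, 1050, 1025, 1007, 979, 969, 942, 926,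
    901, 888, 864, 852, 823, 812, 793, 779, 757, 744, 737, 715, 698, 677, 669, 651, 636, 619, 610,
    587, 579, 558, 549, 530, 521, 503, 495, 479, 471, 455, 444, 427, 421, 403, 394, 379, 373, 359,
    349, 334, 329, 315, 305, 294, 288, 275, 273, 258, 251, 241, 236, 229, 217, 214, 203, 196, 186,
    183, 175, 169, 158, 156, 146, 141, 133, 129, 122, 117, 109, 107, 101, 96, 90, 88, 81, 80, 73,
    69, 65, 63, 58, 54, 50, 48, 44, 41, 38, 36, 33, 30, 27, 26, 24, 22, 20, 18, 17, 15, 14, 12, 10,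
    9, 9, 7, 7, 6, 5, 4, 4, 3, 3, 2, 2, 2, 1, 1, 1, 1, 1]⟩,
  ⟨672000, 676800, 681685, 83, [4506, 4513, 4514, 4510, 4514, 4513, 4507, 4514, 4501, 4501, 4493,
    4492, 4468, 4467, 4457, 4456, 4445, 4427, 4412, 4406, 4395, 4387, 4372, 4371, 4355, 4332, 4288,
    4302, 4287, 4262, 4241, 4248, 4223, 4207, 4192, 4174, 4145, 4135, 4074, 4073, 4052, 4038, 4006,
    3983, 3943, 3952, 3937, 3900, 3880, 3852, 3838, 3809, 3765, 3739, 3729, 3690, 3647, 3630, 3617,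
    3582, 3550, 3524, 3501, 3457, 3441, 3398, 3379, 3361, 3321, 3287, 3248, 3236, 3200, 3173, 3120,
    3112, 3063, 3046, 3002, 2979, 2940, 2914, 2863, 2843, 2805, 2781, 2736, 2721, 2675, 2657, 2630,
    2597, 2564, 2528, 2501, 2455, 2432, 2389, 2366, 2328, 2304, 2255, 2241, 2195, 2170, 2136, 2118,
    2077, 2047, 1994, 1984, 1946, 1915, 1888, 1864, 1828, 1798, 1778, 1746, 1711, 1688, 1643, 1617,
    1594, 1565, 1533, 1500, 1471, 1451, 1433, 1389, 1371, 1338, 1325, 1294, 1262, 1237, 1218, 1187,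
    1155, 1133, 1112, 1083, 1059, 1039, 1019, 988, 974, 943, 923, 911, 884, 861, 834, 824, 800,
    783, 751, 744, 717, 704, 681, 668, 648, 634, 607, 597, 577, 565, 541, 534, 511, 504, 492, 475,
    463, 447, 436, 416, 408, 389, 382, 363, 358, 339, 335, 316, 306, 294, 288, 273, 263, 250, 245,
    233, 223, 219, 208, 199, 188, 185, 175, 170, 160, 153, 143, 141, 132, 125, 116, 113, 106, 101,
    92, 90, 82, 81, 77, 69, 68, 63, 59, 53, 52, 46, 43, 39, 38, 34, 31, 29, 26, 24, 22, 20, 17, 15,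
    14, 12, 11, 10, 9, 8, 6, 6, 5, 4, 3, 3, 2, 2, 2, 1, 1, 1, 1, 1]⟩,
  ⟨676800, 681800, 686378, 89, [2703, 2708, 2711, 2714, 2708, 2709, 2698, 2701, 2696, 2693, 2687,
    2691, 2687, 2674, 2674, 2671, 2662, 2668, 2658, 2650, 2643, 2640, 2634, 2623, 2624, 2616, 2603,
    2595, 2569, 2575, 2573, 2561, 2550, 2542, 2539, 2528, 2516, 2504, 2490, 2483, 2471, 2444, 2443,
    2435, 2431, 2410, 2396, 2380, 2373, 2363, 2342, 2334, 2319, 2309, 2292, 2274, 2255, 2250, 2233,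
    2216, 2186, 2183, 2173, 2163, 2148, 2122, 2114, 2092, 2073, 2057, 2043, 2027, 2007, 1990, 1976,
    1952, 1944, 1928, 1907, 1894, 1868, 1856, 1833, 1824, 1804, 1792, 1767, 1752, 1728, 1709, 1693,
    1683, 1668, 1645, 1631, 1605, 1593, 1572, 1552, 1529, 1520, 1498, 1478, 1460, 1447, 1421, 1415,
    1394, 1373, 1357, 1338, 1320, 1299, 1287, 1267, 1251, 1231, 1208, 1193, 1183, 1160, 1146, 1130,
    1115, 1100, 1082, 1063, 1045, 1031, 1014, 989, 977, 966, 950, 933, 915, 901, 887, 872, 853,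
    840, 824, 811, 793, 778, 761, 752, 737, 721, 703, 689, 682, 669, 656, 638, 630, 612, 600, 586,
    575, 562, 549, 537, 525, 512, 502, 493, 480, 472, 456, 448, 435, 427, 416, 408, 395, 387, 375,
    364, 356, 349, 343, 331, 325, 313, 308, 297, 290, 278, 275, 264, 257, 249, 244, 233, 230, 223,
    214, 210, 200, 196, 187, 183, 175, 172, 164, 159, 152, 149, 141, 137, 133, 128, 125, 119, 115,
    109, 106, 101, 97, 91, 89, 84, 82, 77, 73, 72, 67, 64, 60, 58, 55, 52, 49, 47, 44, 42, 39, 37,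
    34, 33, 31, 29, 27, 25, 24, 22, 21, 18, 18, 16, 15, 13, 13, 11, 10, 10, 9, 8, 7, 6, 5, 5, 4, 4,
    3, 3, 2, 2, 2, 2, 2, 1, 1, 1, 1, 1, 1, 1, 1]⟩,
  ⟨681800, 687000, 691266, 95, [4571, 4554, 4559, 4560, 4552, 4558, 4547, 4547, 4550, 4543, 4538,
    4534, 4529, 4527, 4514, 4515, 4501, 4497, 4494, 4476, 4465, 4456, 4446, 4442, 4438, 4417, 4420,
    4390, 4372, 4365, 4355, 4343, 4331, 4313, 4307, 4299, 4268, 4263, 4238, 4225, 4203, 4201, 4165,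
    4156, 4129, 4128, 4105, 4104, 4071, 4051, 4027, 4001, 3983, 3963, 3945, 3915, 3902, 3888, 3852,
    3845, 3810, 3784, 3757, 3744, 3708, 3704, 3659, 3642, 3642, 3597, 3582, 3551, 3528, 3490, 3476,
    3439, 3428, 3391, 3371, 3355, 3314, 3293, 3259, 3242, 3201, 3178, 3150, 3123, 3087, 3075, 3033,
    3010, 2993, 2951, 2945, 2904, 2871, 2839, 2826, 2787, 2765, 2731, 2704, 2688, 2651, 2628, 2590,
    2569, 2533, 2510, 2480, 2448, 2425, 2399, 2373, 2336, 2313, 2274, 2260, 2227, 2204, 2170, 2143,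
    2107, 2081, 2066, 2029, 2015, 1975, 1960, 1931, 1900, 1869, 1846, 1820, 1789, 1777, 1737, 1720,
    1683, 1669, 1638, 1622, 1591, 1569, 1543, 1514, 1497, 1466, 1447, 1412, 1400, 1373, 1350, 1329,
    1301, 1275, 1253, 1237, 1208, 1199, 1162, 1147, 1133, 1106, 1085, 1066, 1046, 1020, 1007, 978,
    967, 940, 925, 912, 888, 868, 849, 836, 811, 794, 778, 763, 740, 732, 707, 695, 684, 662, 655,
    634, 619, 602, 594, 574, 564, 546, 534, 527, 509, 499, 483, 472, 455, 449, 435, 421, 411, 401,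
    393, 379, 369, 354, 350, 335, 330, 314, 308, 294, 288, 282, 268, 265, 252, 248, 237, 230, 218,
    215, 204, 198, 194, 185, 181, 171, 165, 158, 153, 146, 143, 134, 129, 127, 120, 114, 107, 105,
    97, 96, 90, 86, 79, 78, 74, 71, 67, 62, 60, 56, 53, 49, 47, 44, 42, 39, 36, 35, 32, 29, 27, 26,
    23, 22, 20, 18, 16, 16, 15, 13, 12, 10, 10, 8, 8, 6, 6, 5, 5, 4, 3, 3, 3, 2, 2, 2, 2, 1, 1, 1,
    1, 1, 1, 1, 1]⟩,
  ⟨687000, 692200, 696347, 95, [4004, 4005, 4003, 4003, 4001, 4008, 4000, 3997, 4000, 3985, 3991,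
    3990, 3976, 3963, 3970, 3963, 3959, 3949, 3942, 3931, 3930, 3922, 3898, 3906, 3893, 3876, 3875,
    3862, 3852, 3844, 3836, 3807, 3808, 3808, 3777, 3767, 3752, 3746, 3737, 3721, 3703, 3682, 3672,
    3663, 3629, 3624, 3603, 3609, 3571, 3559, 3526, 3535, 3498, 3493, 3471, 3455, 3443, 3414, 3403,
    3367, 3358, 3332, 3327, 3280, 3282, 3261, 3229, 3219, 3188, 3166, 3145, 3127, 3091, 3088, 3068,
    3029, 3023, 2988, 2976, 2944, 2922, 2887, 2876, 2865, 2830, 2802, 2777, 2763, 2724, 2723, 2681,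
    2655, 2643, 2611, 2589, 2559, 2540, 2504, 2490, 2459, 2439, 2421, 2385, 2378, 2338, 2323, 2292,
    2266, 2234, 2224, 2195, 2169, 2148, 2113, 2098, 2066, 2044, 2015, 1998, 1979, 1946, 1928, 1891,
    1879, 1848, 1829, 1798, 1774, 1773, 1727, 1713, 1678, 1665, 1637, 1620, 1591, 1567, 1551, 1525,
    1504, 1477, 1455, 1440, 1414, 1390, 1367, 1355, 1321, 1313, 1284, 1267, 1247, 1222, 1207, 1178,
    1169, 1138, 1130, 1094, 1087, 1066, 1043, 1029, 1004, 990, 969, 950, 928, 919, 901, 878, 867,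
    844, 833, 811, 797, 773, 764, 753, 732, 715, 698, 689, 665, 664, 639, 625, 618, 600, 587, 572,
    561, 543, 534, 517, 508, 498, 481, 477, 460, 453, 437, 426, 411, 408, 395, 385, 376, 362, 357,
    342, 334, 325, 316, 312, 300, 292, 278, 275, 263, 257, 248, 239, 239, 225, 222, 211, 206, 195,
    192, 183, 179, 173, 166, 163, 153, 148, 142, 139, 130, 129, 123, 117, 114, 108, 105, 99, 95,
    90, 86, 86, 80, 76, 71, 69, 65, 63, 59, 55, 54, 50, 47, 45, 43, 39, 38, 35, 33, 31, 29, 28, 25,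
    24, 22, 20, 18, 17, 17, 15, 14, 12, 12, 11, 9, 8, 8, 7, 7, 6, 5, 5, 4, 3, 3, 3, 3, 2, 2, 2, 2,
    1, 1, 1, 1, 1, 1, 1, 1, 1]⟩,
  ⟨692200, 697200, 701428, 95, [3151, 3152, 3153, 3153, 3149, 3150, 3148, 3147, 3141, 3144, 3139,
    3130, 3132, 3130, 3123, 3118, 3119, 3110, 3105, 3102, 3091, 3086, 3081, 3082, 3062, 3067, 3046,
    3050, 3032, 3024, 3020, 3003, 3007, 2990, 2976, 2974, 2963, 2941, 2943, 2948, 2915, 2900, 2884,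
    2888, 2864, 2860, 2846, 2831, 2821, 2803, 2799, 2780, 2760, 2743, 2737, 2741, 2711, 2688, 2673,
    2668, 2639, 2637, 2623, 2592, 2588, 2562, 2557, 2533, 2512, 2514, 2481, 2478, 2451, 2436, 2408,
    2401, 2377, 2367, 2352, 2323, 2312, 2287, 2277, 2249, 2237, 2224, 2192, 2186, 2158, 2145, 2114,
    2104, 2096, 2065, 2051, 2021, 2007, 1979, 1974, 1956, 1930, 1914, 1890, 1878, 1852, 1839, 1810,
    1795, 1785, 1757, 1743, 1719, 1699, 1677, 1663, 1650, 1623, 1607, 1584, 1567, 1548, 1528, 1516,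
    1485, 1475, 1452, 1435, 1416, 1394, 1372, 1360, 1349, 1318, 1306, 1289, 1269, 1247, 1229, 1219,
    1190, 1185, 1161, 1147, 1127, 1107, 1101, 1075, 1063, 1039, 1027, 1013, 996, 975, 960, 948,
    924, 917, 899, 882, 868, 848, 843, 818, 806, 797, 777, 765, 750, 738, 718, 709, 689, 683, 669,
    652, 642, 625, 619, 599, 592, 581, 563, 556, 540, 533, 514, 508, 502, 486, 477, 461, 453, 437,
    435, 425, 412, 404, 391, 386, 373, 367, 353, 347, 342, 330, 324, 312, 305, 293, 289, 286, 275,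
    269, 257, 254, 245, 240, 234, 224, 221, 211, 208, 199, 193, 184, 182, 179, 171, 165, 156, 156,
    147, 144, 140, 133, 131, 124, 122, 116, 112, 109, 104, 102, 96, 92, 88, 86, 80, 79, 76, 71, 69,
    65, 64, 59, 56, 56, 52, 50, 47, 45, 42, 40, 39, 37, 35, 32, 31, 29, 28, 25, 24, 23, 20, 20, 18,
    17, 15, 15, 14, 13, 12, 11, 10, 9, 9, 8, 7, 7, 6, 5, 5, 4, 4, 4, 3, 3, 3, 2, 2, 2, 2, 2, 1, 1,
    1, 1, 1, 1, 1, 1, 1, 1, 1]⟩,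
  ⟨697200, 702600, 706311, 108, [4995, 5000, 4986, 4992, 4992, 4986, 4988, 4986, 4983, 4976, 4982,
    4977, 4963, 4962, 4961, 4954, 4953, 4940, 4934, 4927, 4918, 4921, 4905, 4901, 4894, 4877, 4864,
    4863, 4853, 4840, 4844, 4817, 4811, 4807, 4791, 4773, 4759, 4744, 4734, 4717, 4709, 4692, 4693,
    4671, 4649, 4628, 4629, 4618, 4591, 4571, 4539, 4537, 4507, 4507, 4490, 4454, 4449, 4414, 4409,
    4405, 4381, 4364, 4327, 4315, 4293, 4282, 4261, 4224, 4215, 4184, 4169, 4139, 4117, 4111, 4074,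
    4065, 4027, 4016, 3981, 3960, 3949, 3907, 3891, 3872, 3848, 3828, 3797, 3772, 3747, 3723, 3684,
    3677, 3651, 3622, 3597, 3560, 3551, 3515, 3493, 3473, 3437, 3418, 3379, 3366, 3328, 3300, 3293,
    3252, 3233, 3202, 3173, 3158, 3122, 3100, 3067, 3045, 3009, 2985, 2977, 2938, 2912, 2880, 2859,
    2821, 2806, 2783, 2747, 2722, 2688, 2677, 2634, 2615, 2594, 2557, 2535, 2505, 2488, 2461, 2437,
    2408, 2375, 2362, 2324, 2300, 2281, 2244, 2228, 2190, 2173, 2137, 2124, 2105, 2068, 2044, 2023,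
    2001, 1965, 1945, 1917, 1898, 1869, 1846, 1826, 1797, 1778, 1748, 1724, 1714, 1680, 1664, 1635,
    1613, 1592, 1568, 1554, 1518, 1505, 1479, 1460, 1437, 1409, 1396, 1367, 1356, 1330, 1309, 1286,
    1266, 1254, 1223, 1207, 1192, 1170, 1154, 1128, 1112, 1095, 1076, 1050, 1039, 1021, 1001, 986,
    963, 952, 930, 915, 901, 879, 866, 845, 835, 814, 797, 791, 767, 757, 740, 725, 716, 696, 685,
    668, 655, 638, 626, 622, 602, 591, 575, 565, 547, 541, 531, 515, 505, 489, 485, 467, 459, 451,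
    436, 430, 417, 410, 401, 389, 383, 369, 363, 350, 342, 338, 325, 320, 308, 300, 289, 283, 280,
    268, 262, 254, 247, 237, 232, 226, 221, 214, 204, 200, 194, 188, 183, 174, 172, 163, 160, 155,
    148, 146, 138, 136, 129, 124, 122, 116, 114, 107, 103, 100, 95, 93, 88, 84, 80, 79, 73, 71, 69,
    65, 62, 58, 57, 55, 52, 49, 46, 44, 42, 41, 38, 36, 34, 32, 30, 28, 26, 26, 24, 22, 21, 20, 18,
    17, 16, 15, 14, 13, 12, 11, 10, 10, 8, 8, 7, 7, 6, 5, 5, 4, 4, 3, 3, 3, 3, 2, 2, 2, 2, 2, 2, 1,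
    1, 1, 1, 1, 1, 1, 1, 1, 1, 1, 1]⟩,
  ⟨702600, 707200, 711584, 95, [3214, 3214, 3203, 3210, 3207, 3205, 3206, 3199, 3203, 3198, 3195,
    3193, 3195, 3184, 3179, 3177, 3175, 3172, 3160, 3158, 3154, 3142, 3141, 3129, 3132, 3113, 3114,
    3107, 3099, 3087, 3073, 3071, 3057, 3054, 3044, 3026, 3026, 3007, 3004, 2994, 2980, 2970, 2950,
    2948, 2931, 2917, 2908, 2894, 2887, 2861, 2857, 2843, 2823, 2818, 2797, 2790, 2772, 2751, 2742,
    2719, 2714, 2692, 2675, 2661, 2640, 2635, 2613, 2603, 2582, 2556, 2553, 2523, 2517, 2492, 2477,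
    2457, 2439, 2429, 2403, 2392, 2365, 2349, 2342, 2311, 2298, 2275, 2259, 2236, 2217, 2204, 2178,
    2167, 2138, 2125, 2111, 2086, 2073, 2041, 2027, 2013, 1984, 1975, 1945, 1933, 1909, 1891, 1877,
    1853, 1835, 1811, 1794, 1782, 1755, 1738, 1717, 1702, 1674, 1658, 1642, 1621, 1602, 1582, 1565,
    1550, 1522, 1507, 1487, 1469, 1455, 1430, 1413, 1395, 1377, 1358, 1341, 1325, 1300, 1283, 1266,
    1247, 1233, 1209, 1197, 1179, 1158, 1143, 1127, 1109, 1092, 1075, 1059, 1042, 1025, 1007, 992,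
    976, 960, 943, 927, 912, 900, 883, 869, 852, 835, 822, 806, 794, 778, 765, 746, 737, 723, 707,
    698, 679, 668, 658, 641, 631, 615, 605, 590, 579, 569, 555, 547, 530, 522, 512, 499, 491, 474,
    466, 458, 444, 437, 423, 416, 403, 396, 388, 376, 369, 357, 350, 344, 332, 326, 315, 309, 297,
    292, 286, 276, 271, 261, 256, 250, 240, 236, 226, 223, 217, 208, 205, 196, 193, 185, 181, 176,
    167, 164, 156, 154, 149, 142, 140, 133, 130, 123, 121, 117, 111, 109, 103, 101, 97, 92, 90, 85,
    83, 79, 77, 74, 69, 68, 64, 62, 59, 55, 55, 50, 50, 47, 44, 43, 39, 39, 36, 35, 33, 30, 30, 28,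
    26, 25, 23, 22, 20, 20, 18, 17, 16, 14, 14, 13, 12, 11, 10, 10, 9, 8, 8, 7, 6, 5, 5, 5, 4, 4,
    4, 3, 3, 3, 2, 2, 2, 2, 2, 2, 1, 1, 1, 1, 1, 1, 1, 1, 1, 1, 1, 1, 1, 1]⟩]

set_option maxRecDepth 20000 in
theorem certificates_valid : ∀ c ∈ certificates, c.Valid := by decide +kernel

theorem isChain_certificates : certificates.IsChain fun c d => d.lo ≤ c.hi := by decide +kernel

theorem hasDecay_of_mem_Icc {l : ℝ} (hl : l ∈ Icc (1 / 2) 0.7072) : HasDecay (241 / 250) l := by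
  have ne_nil : certificates ≠ [] := List.cons_ne_nil _ _
  have head_eq : (certificates.head ne_nil).lo = 500000 := rfl
  have getLast_eq : (certificates.getLast ne_nil).hi = 707200 := rfl
  obtain ⟨c, hc, hlc⟩ := exists_mem_Icc_of_isChain (lo := fun c : Certificate => (c.lo : ℝ))
    (hi := fun c => (c.hi : ℝ)) (L := certificates) (t := l * 1000000) ne_nil
    (isChain_certificates.imp fun _ _ h => Nat.cast_le.2 h)
    (by rw [head_eq]; norm_num; linarith [hl.1]) (by rw [getLast_eq]; norm_num; linarith [hl.2])
  exact (certificates_valid c hc).hasDecay hlc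

theorem hasDecay_of_mem_Ico {l : ℝ} (hl : l ∈ Ico (1 / 2) 1) : HasDecay (241 / 250) l :=
  forall_mem_Ico_of_sq (b := 0.7072) (by norm_num) (by norm_num) (by norm_num)
    (fun _ => hasDecay_of_mem_Icc) (fun _ => HasDecay.of_sq) l hl

theorem bernoulli_convolution_dim_ge_general {l : ℝ} (hl : 1 / 2 ≤ l) (hl1 : l < 1) {μ : Measure ℝ}
    [IsFiniteMeasure μ] (hμ : IsBernoulliConvolution l μ) {X : Set ℝ} (hX : μ X ≠ 0) :
    ENNReal.ofReal 0.964 ≤ dimH X := by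
  rw [show (0.964 : ℝ) = 241 / 250 by norm_num]
  exact hμ.le_dimH_of_hasDecay (by linarith) hl1 (hasDecay_of_mem_Ico ⟨hl, hl1⟩) hX

/-- For every `1/2 < λ < 1`, the Hausdorff dimension of the Bernoulli convolution
measure `μ_λ` is at least `0.96399`: every Borel set of full measure has Hausdorff
dimension at least `0.96399`. -/
theorem bernoulli_convolution_dim_ge (l : ℝ) (hl : 1 / 2 < l) (hl1 : l < 1)
    (μ : Measure ℝ) [IsProbabilityMeasure μ]
    (hμ : μ = (1 / 2 : ℝ≥0∞) • Measure.map (fun x : ℝ => l * x - 1) μ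
            + (1 / 2 : ℝ≥0∞) • Measure.map (fun x : ℝ => l * x + 1) μ)
    (X : Set ℝ) (hX : MeasurableSet X) (hX1 : μ X = 1) :
    ENNReal.ofReal 0.96399 ≤ dimH X :=
  (ENNReal.ofReal_le_ofReal (by norm_num)).trans
    (bernoulli_convolution_dim_ge_general hl.le hl1 hμ (by rw [hX1]; exact one_ne_zero))
end

section
/- There exist constants c > 0 and ε > 0 such that for every λ with 1 − ε < λ < 1, the Hausdorff dimension of the Bernoulli convolution measure μ_λ satisfies dim_H(μ_λ) ≥ 1 − c(1 − λ); that is, every Borel set X ⊆ ℝ with μ_λ(X) = 1 satisfies dim_H(X) ≥ 1 − c(1 − λ). -/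
open MeasureTheory
open scoped ENNReal

/-!
For `g x = exp (-(λ² (1 - λ²) / 2) x²)`, the bound `cosh t ≤ exp (t² / 2)` shows that the average
of `g ((x + 1) / λ)` and `g ((x - 1) / λ)` is at most `q * g x`, where `q = exp (-(1 - λ²) / 2)`.
Since `μ_λ` is compactly supported, `μ_λ (B(x, 1)) ≤ C * g x` for some `C`, and self-similarity
propagates this to `μ_λ (B(x, λⁿ)) ≤ C * qⁿ * g x ≤ C * qⁿ`. By the mass distribution principle the
dimension is at least `log q / log λ = (1 - λ²) / (2 log λ⁻¹)`, which is at least `λ` because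
`u ≤ sinh u` at `u = log λ⁻¹`. Hence `c = 1` works.
-/

open Filter Metric Real Set
open scoped Topology

section MassDistribution

theorem measure_closedBall_le_of_pow {E : Type*} [PseudoMetricSpace E] [MeasurableSpace E]
    {μ : Measure E} {l q C : ℝ} (hl₀ : 0 < l) (hl₁ : l < 1) (hq₀ : 0 < q) (hq₁ : q ≤ 1)
    (hC : 0 ≤ C) (h : ∀ (n : ℕ) x, μ (closedBall x (l ^ n)) ≤ ENNReal.ofReal (C * q ^ n))
    {r : ℝ} (hr₀ : 0 < r) (hr₁ : r ≤ 1) (x : E) :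
    μ (closedBall x r) ≤ ENNReal.ofReal (C / q * r ^ logb l q) := by
  obtain ⟨n, hn_lt, hn_le⟩ := exists_nat_pow_near_of_lt_one hr₀ hr₁ hl₀ hl₁
  have hpow : q ^ (n + 1) ≤ r ^ logb l q := by
    calc q ^ (n + 1) = (l ^ (n + 1)) ^ logb l q := by
          rw [← rpow_natCast_mul hl₀.le, mul_comm, rpow_mul_natCast hl₀.le,
            rpow_logb hl₀ hl₁.ne hq₀]
      _ ≤ r ^ logb l q :=
          rpow_le_rpow (by positivity) hn_lt.le (logb_nonneg_of_base_lt_one hl₀ hl₁ hq₀ hq₁)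
  calc μ (closedBall x r) ≤ μ (closedBall x (l ^ n)) := by gcongr
    _ ≤ ENNReal.ofReal (C * q ^ n) := h n x
    _ = ENNReal.ofReal (C / q * q ^ (n + 1)) := by rw [pow_succ]; congr 1; field_simp
    _ ≤ ENNReal.ofReal (C / q * r ^ logb l q) := by gcongr

variable {E : Type*} [MetricSpace E] [MeasurableSpace E] {μ : Measure E}

theorem measure_le_ediam_rpow_of_closedBall {α C R : ℝ} (hα : 0 ≤ α) (hC : 0 ≤ C)
    (h : ∀ (x : E) (r : ℝ), 0 < r → r ≤ R → μ (closedBall x r) ≤ ENNReal.ofReal (C * r ^ α))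
    {s : Set E} (hs : ediam s < ENNReal.ofReal R) :
    μ s ≤ ENNReal.ofReal C * ediam s ^ α := by
  rcases s.eq_empty_or_nonempty with rfl | ⟨x, hx⟩
  · simp
  have hbdd : ediam s ≠ ∞ := hs.ne_top
  have hball : ∀ r, diam s < r → r ≤ R → μ s ≤ ENNReal.ofReal (C * r ^ α) := fun r hr hrR =>
    (measure_mono fun _ hy => mem_closedBall.2 <|
      (dist_le_diam_of_mem' hbdd hy hx).trans hr.le).trans (h x r (diam_nonneg.trans_lt hr) hrR)
  have hlim : Tendsto (fun r => ENNReal.ofReal (C * r ^ α)) (𝓝[>] diam s)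
      (𝓝 (ENNReal.ofReal (C * diam s ^ α))) :=
    (ENNReal.continuous_ofReal.comp
      (continuous_const.mul (continuous_rpow_const hα))).continuousWithinAt
  have hdiam : diam s < R := (ENNReal.lt_ofReal_iff_toReal_lt hbdd).1 hs
  calc μ s ≤ ENNReal.ofReal (C * diam s ^ α) := by
        refine ge_of_tendsto hlim ?_
        filter_upwards [Ioc_mem_nhdsGT hdiam] with r hr using hball r hr.1 hr.2
    _ = ENNReal.ofReal C * ediam s ^ α := by
        rw [ENNReal.ofReal_mul hC, ← ENNReal.ofReal_rpow_of_nonneg diam_nonneg hα, diam,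
          ENNReal.ofReal_toReal hbdd]

variable [BorelSpace E]

theorem ofReal_le_dimH_of_measure_closedBall_le_s1 {α C R : ℝ} (hα : 0 ≤ α) (hC : 0 ≤ C)
    (hR : 0 < R)
    (h : ∀ (x : E) (r : ℝ), 0 < r → r ≤ R → μ (closedBall x r) ≤ ENNReal.ofReal (C * r ^ α))
    {X : Set E} (hX : μ X ≠ 0) : ENNReal.ofReal α ≤ dimH X := by
  have hle : (ENNReal.ofReal C)⁻¹ • μ ≤ Measure.hausdorffMeasure α := by
    refine Measure.le_hausdorffMeasure α _ (ENNReal.ofReal (R / 2)) (by simpa using hR) ?_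
    intro s hs
    have hsR : ediam s < ENNReal.ofReal R :=
      hs.trans_lt ((ENNReal.ofReal_lt_ofReal_iff hR).2 (half_lt_self hR))
    rw [Measure.smul_apply, smul_eq_mul, mul_comm, ← div_eq_mul_inv]
    exact ENNReal.div_le_of_le_mul' (measure_le_ediam_rpow_of_closedBall hα hC h hsR)
  refine le_dimH_of_hausdorffMeasure_ne_zero (d := α.toNNReal) ?_
  rw [coe_toNNReal _ hα]
  have hpos : ((ENNReal.ofReal C)⁻¹ • μ) X ≠ 0 := by simpa using hX
  exact ((pos_iff_ne_zero.2 hpos).trans_le (hle X)).ne'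

theorem ofReal_logb_le_dimH_of_measure_closedBall_pow_le {l q C : ℝ} (hl₀ : 0 < l) (hl₁ : l < 1)
    (hq₀ : 0 < q) (hq₁ : q ≤ 1) (hC : 0 ≤ C)
    (h : ∀ (n : ℕ) (x : E), μ (closedBall x (l ^ n)) ≤ ENNReal.ofReal (C * q ^ n))
    {X : Set E} (hX : μ X ≠ 0) : ENNReal.ofReal (logb l q) ≤ dimH X :=
  ofReal_le_dimH_of_measure_closedBall_le_s1 (logb_nonneg_of_base_lt_one hl₀ hl₁ hq₀ hq₁)
    (div_nonneg hC hq₀.le) one_pos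
    (fun x _ hr₀ hr₁ => measure_closedBall_le_of_pow hl₀ hl₁ hq₀ hq₁ hC h hr₀ hr₁ x) hX

end MassDistribution

theorem tendsto_measure_le_norm_atTop {E : Type*} [NormedAddCommGroup E] [CompleteSpace E]
    [SecondCountableTopology E] [MeasurableSpace E] [BorelSpace E] (μ : Measure E)
    [IsFiniteMeasure μ] : Tendsto (fun r : ℝ => μ {x | r ≤ ‖x‖}) atTop (𝓝 0) := by
  have hgt : Tendsto (fun r : ℝ => μ {x | r < ‖x‖}) atTop (𝓝 0) := by
    simpa using tendsto_measure_norm_gt_of_isTightMeasureSet (isTightMeasureSet_singleton (μ := μ))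
  refine tendsto_of_tendsto_of_tendsto_of_le_of_le tendsto_const_nhds
    (hgt.comp (tendsto_atTop_add_const_right atTop (-1) tendsto_id)) (fun _ => zero_le) fun r => ?_
  refine measure_mono fun x (hx : r ≤ ‖x‖) => ?_
  change r + -1 < ‖x‖
  linarith

theorem preimage_mul_add_closedBall {l : ℝ} (hl : 0 < l) (b x r : ℝ) :
    (fun y => l * y + b) ⁻¹' closedBall x (l * r) = closedBall ((x - b) / l) r := by
  ext y
  have hdist : dist (l * y + b) x = l * dist y ((x - b) / l) := by
    rw [dist_eq, dist_eq, ← abs_of_pos hl, ← abs_mul, abs_of_pos hl]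
    congr 1
    field_simp
    ring
  rw [mem_preimage, mem_closedBall, mem_closedBall, hdist, mul_le_mul_iff_right₀ hl]

/-- The self-similarity equation of the Bernoulli convolution with parameter `l`. The measure is not
required to be normalised. -/
def IsBernoulliInvariant (l : ℝ) (μ : Measure ℝ) : Prop :=
  μ = (1 / 2 : ℝ≥0∞) • Measure.map (fun x : ℝ => l * x - 1) μ
    + (1 / 2 : ℝ≥0∞) • Measure.map (fun x : ℝ => l * x + 1) μ

namespace IsBernoulliInvariant

variable {l : ℝ} {μ : Measure ℝ} [IsFiniteMeasure μ]

theorem measureReal_eq (h : IsBernoulliInvariant l μ) {s : Set ℝ} (hs : MeasurableSet s) :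
    μ.real s = (μ.real ((fun x => l * x - 1) ⁻¹' s) + μ.real ((fun x => l * x + 1) ⁻¹' s)) / 2 := by
  have hμs : μ s = (1 / 2 : ℝ≥0∞) * μ ((fun x => l * x - 1) ⁻¹' s)
      + (1 / 2 : ℝ≥0∞) * μ ((fun x => l * x + 1) ⁻¹' s) := by
    conv_lhs => rw [h]
    rw [Measure.add_apply, Measure.smul_apply, Measure.smul_apply, smul_eq_mul, smul_eq_mul,
      Measure.map_apply (by fun_prop) hs, Measure.map_apply (by fun_prop) hs]
  rw [measureReal_def, hμs, ENNReal.toReal_add (by finiteness) (by finiteness), ENNReal.toReal_mul,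
    ENNReal.toReal_mul, measureReal_def, measureReal_def]
  simp only [one_div, ENNReal.toReal_inv, ENNReal.toReal_ofNat]
  ring

theorem measureReal_closedBall_mul (h : IsBernoulliInvariant l μ) (hl : 0 < l) (x r : ℝ) :
    μ.real (closedBall x (l * r)) =
      (μ.real (closedBall ((x + 1) / l) r) + μ.real (closedBall ((x - 1) / l) r)) / 2 := by
  have hneg := preimage_mul_add_closedBall hl (-1) x r
  simp only [← sub_eq_add_neg, sub_neg_eq_add] at hneg
  rw [h.measureReal_eq measurableSet_closedBall, hneg, preimage_mul_add_closedBall hl]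

theorem measureReal_le_abs_le (h : IsBernoulliInvariant l μ) (hl : 0 < l) (s : ℝ) :
    μ.real {y | l * s + 1 ≤ |y|} ≤ μ.real {y | s ≤ |y|} := by
  have hpre : ∀ b : ℝ, |b| = 1 →
      μ.real ((fun y => l * y + b) ⁻¹' {y | l * s + 1 ≤ |y|}) ≤ μ.real {y | s ≤ |y|} := by
    intro b hb
    refine measureReal_mono fun y (hy : l * s + 1 ≤ |l * y + b|) => ?_
    have htri : |l * y + b| ≤ l * |y| + 1 := by
      simpa only [abs_mul, abs_of_pos hl, hb] using abs_add_le (l * y) b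
    exact le_of_mul_le_mul_left (by linarith) hl
  have hneg := hpre (-1) (by simp)
  simp only [← sub_eq_add_neg] at hneg
  have hmeas : MeasurableSet {y : ℝ | l * s + 1 ≤ |y|} :=
    measurableSet_le measurable_const (by fun_prop)
  rw [h.measureReal_eq hmeas]
  linarith [hpre 1 (by simp)]

theorem measure_le_abs_eq_zero (h : IsBernoulliInvariant l μ) (hl₀ : 0 < l) (hl₁ : l < 1) {b : ℝ}
    (hb : (1 - l)⁻¹ < b) : μ {y | b ≤ |y|} = 0 := by
  set M := (1 - l)⁻¹
  have hM : l * M + 1 = M := by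
    have : 1 - l ≠ 0 := by linarith
    simp only [M]
    field_simp
    ring
  have hiter : ∀ n : ℕ, μ.real {y | b ≤ |y|} ≤ μ.real {y | M + l⁻¹ ^ n * (b - M) ≤ |y|} := by
    intro n
    induction n with
    | zero => simp
    | succ n ih =>
      have hscale : l * (M + l⁻¹ ^ (n + 1) * (b - M)) + 1 = M + l⁻¹ ^ n * (b - M) := by
        rw [mul_add, add_right_comm, hM, pow_succ']
        field_simp
      exact ih.trans (hscale ▸ h.measureReal_le_abs_le hl₀ _)
  have hradius : Tendsto (fun n : ℕ => M + l⁻¹ ^ n * (b - M)) atTop atTop :=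
    tendsto_atTop_add_const_left _ _ <|
      (tendsto_pow_atTop_atTop_of_one_lt ((one_lt_inv₀ hl₀).2 hl₁)).atTop_mul_const (sub_pos.2 hb)
  have htail : Tendsto (fun n : ℕ => μ {y | M + l⁻¹ ^ n * (b - M) ≤ |y|}) atTop (𝓝 0) :=
    (tendsto_measure_le_norm_atTop μ).comp hradius
  exact nonpos_iff_eq_zero.1 <| ge_of_tendsto' htail fun n =>
    (ENNReal.toReal_le_toReal (by finiteness) (by finiteness)).1 (hiter n)

theorem ae_abs_le (h : IsBernoulliInvariant l μ) (hl₀ : 0 < l) (hl₁ : l < 1) :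
    ∀ᵐ y ∂μ, |y| ≤ (1 - l)⁻¹ :=
  (ae_le_const_iff_forall_gt_measure_zero _ _).2 fun _ => h.measure_le_abs_eq_zero hl₀ hl₁

theorem measureReal_closedBall_pow_le (h : IsBernoulliInvariant l μ) (hl : 0 < l) {g : ℝ → ℝ}
    {q : ℝ} (hq : 0 ≤ q) (hg : ∀ x, (g ((x + 1) / l) + g ((x - 1) / l)) / 2 ≤ q * g x)
    (hbase : ∀ x, μ.real (closedBall x 1) ≤ g x) (n : ℕ) (x : ℝ) :
    μ.real (closedBall x (l ^ n)) ≤ q ^ n * g x := by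
  induction n generalizing x with
  | zero => simpa using hbase x
  | succ n ih =>
    calc μ.real (closedBall x (l ^ (n + 1)))
        = (μ.real (closedBall ((x + 1) / l) (l ^ n))
            + μ.real (closedBall ((x - 1) / l) (l ^ n))) / 2 := by
          rw [pow_succ', h.measureReal_closedBall_mul hl]
      _ ≤ (q ^ n * g ((x + 1) / l) + q ^ n * g ((x - 1) / l)) / 2 := by gcongr <;> exact ih _
      _ = q ^ n * ((g ((x + 1) / l) + g ((x - 1) / l)) / 2) := by ring
      _ ≤ q ^ n * (q * g x) := by gcongr; exact hg x
      _ = q ^ (n + 1) * g x := by ring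

end IsBernoulliInvariant

/-- The Gaussian weight that dominates the measures of balls. Its coefficient is the solution `a` of
`-a / l ^ 2 + 2 * a ^ 2 / l ^ 4 = -a`, which makes `cosh t ≤ exp (t ^ 2 / 2)` bound the average over
the two preimages of `x` by a multiple of the same Gaussian. -/
noncomputable def gaussianWeight (l x : ℝ) : ℝ :=
  exp (-(l ^ 2 * (1 - l ^ 2) / 2 * x ^ 2))

theorem gaussianWeight_pos (l x : ℝ) : 0 < gaussianWeight l x :=
  exp_pos _

theorem gaussianWeight_le_of_abs_le {l x y : ℝ} (hl : l ^ 2 ≤ 1) (hxy : |x| ≤ |y|) :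
    gaussianWeight l y ≤ gaussianWeight l x := by
  have hcoeff : 0 ≤ l ^ 2 * (1 - l ^ 2) / 2 := by have := sub_nonneg.2 hl; positivity
  exact exp_le_exp.2 <| neg_le_neg <| mul_le_mul_of_nonneg_left (sq_le_sq.2 hxy) hcoeff

theorem gaussianWeight_le_one {l : ℝ} (hl : l ^ 2 ≤ 1) (x : ℝ) : gaussianWeight l x ≤ 1 := by
  simpa [gaussianWeight] using gaussianWeight_le_of_abs_le hl (x := 0) (y := x) (by simp)

theorem gaussianWeight_average_le {l : ℝ} (hl : l ≠ 0) (x : ℝ) :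
    (gaussianWeight l ((x + 1) / l) + gaussianWeight l ((x - 1) / l)) / 2
      ≤ exp (-((1 - l ^ 2) / 2)) * gaussianWeight l x := by
  have hplus : gaussianWeight l ((x + 1) / l)
      = exp (-((1 - l ^ 2) / 2 * (x ^ 2 + 1))) * exp (-((1 - l ^ 2) * x)) := by
    rw [gaussianWeight, ← exp_add]
    congr 1
    field_simp
    ring
  have hminus : gaussianWeight l ((x - 1) / l)
      = exp (-((1 - l ^ 2) / 2 * (x ^ 2 + 1))) * exp ((1 - l ^ 2) * x) := by
    rw [gaussianWeight, ← exp_add]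
    congr 1
    field_simp
    ring
  calc (gaussianWeight l ((x + 1) / l) + gaussianWeight l ((x - 1) / l)) / 2
      = exp (-((1 - l ^ 2) / 2 * (x ^ 2 + 1))) * cosh ((1 - l ^ 2) * x) := by
        rw [hplus, hminus, cosh_eq]
        ring
    _ ≤ exp (-((1 - l ^ 2) / 2 * (x ^ 2 + 1))) * exp (((1 - l ^ 2) * x) ^ 2 / 2) := by
        gcongr
        exact cosh_le_exp_half_sq _
    _ = exp (-((1 - l ^ 2) / 2)) * gaussianWeight l x := by
        rw [gaussianWeight, ← exp_add, ← exp_add]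
        congr 1
        ring

namespace IsBernoulliInvariant

variable {l : ℝ} {μ : Measure ℝ} [IsFiniteMeasure μ]

theorem exists_measureReal_closedBall_one_le (h : IsBernoulliInvariant l μ) (hl₀ : 0 < l)
    (hl₁ : l < 1) : ∃ C, 0 ≤ C ∧ ∀ x, μ.real (closedBall x 1) ≤ C * gaussianWeight l x := by
  set R := (1 - l)⁻¹ + 1
  have hwR := gaussianWeight_pos l R
  refine ⟨μ.real univ / gaussianWeight l R, by positivity, fun x => ?_⟩
  rcases le_or_gt |x| R with hx | hx
  · have hw : gaussianWeight l R ≤ gaussianWeight l x :=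
      gaussianWeight_le_of_abs_le (by nlinarith) (hx.trans (le_abs_self R))
    calc μ.real (closedBall x 1) ≤ μ.real univ := measureReal_mono (subset_univ _)
      _ = μ.real univ / gaussianWeight l R * gaussianWeight l R := by field_simp
      _ ≤ μ.real univ / gaussianWeight l R * gaussianWeight l x := by gcongr
  · have hnull : μ (closedBall x 1) = 0 := by
      refine measure_mono_null (fun y hy => ?_) (ae_iff.1 (h.ae_abs_le hl₀ hl₁))
      have hxy : |x| - |y| ≤ 1 := (abs_sub_abs_le_abs_sub x y).trans (mem_closedBall'.1 hy)
      exact not_le.2 (by linarith)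
    rw [measureReal_def, hnull, ENNReal.toReal_zero]
    exact mul_nonneg (by positivity) (gaussianWeight_pos l x).le

theorem exists_measure_closedBall_pow_le (h : IsBernoulliInvariant l μ) (hl₀ : 0 < l)
    (hl₁ : l < 1) : ∃ C, 0 ≤ C ∧ ∀ (n : ℕ) (x : ℝ),
      μ (closedBall x (l ^ n)) ≤ ENNReal.ofReal (C * exp (-((1 - l ^ 2) / 2)) ^ n) := by
  obtain ⟨C, hC, hbase⟩ := h.exists_measureReal_closedBall_one_le hl₀ hl₁
  set q := exp (-((1 - l ^ 2) / 2))
  have hsuper : ∀ x, (C * gaussianWeight l ((x + 1) / l) + C * gaussianWeight l ((x - 1) / l)) / 2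
      ≤ q * (C * gaussianWeight l x) := fun x => by
    linear_combination C * gaussianWeight_average_le hl₀.ne' x
  refine ⟨C, hC, fun n x => (ENNReal.le_ofReal_iff_toReal_le (by finiteness) (by positivity)).2 ?_⟩
  calc μ.real (closedBall x (l ^ n)) ≤ q ^ n * (C * gaussianWeight l x) :=
        h.measureReal_closedBall_pow_le hl₀ (exp_pos _).le hsuper hbase n x
    _ ≤ q ^ n * (C * 1) := by gcongr; exact gaussianWeight_le_one (by nlinarith) x
    _ = C * q ^ n := by ring

end IsBernoulliInvariant

theorem le_one_sub_sq_div_two_mul_log_inv {l : ℝ} (hl₀ : 0 < l) (hl₁ : l < 1) :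
    l ≤ (1 - l ^ 2) / (2 * log l⁻¹) := by
  have hlog : 0 < log l⁻¹ := log_pos ((one_lt_inv₀ hl₀).2 hl₁)
  have hsinh : log l⁻¹ ≤ (l⁻¹ - l) / 2 := by
    simpa only [sinh_log (inv_pos.2 hl₀), inv_inv] using self_le_sinh_iff.2 hlog.le
  rw [le_div_iff₀ (by positivity)]
  calc l * (2 * log l⁻¹) ≤ l * (2 * ((l⁻¹ - l) / 2)) := by gcongr
    _ = 1 - l ^ 2 := by field_simp

theorem bernoulli_convolution_dim_near_one_general {l : ℝ} (hl₀ : 0 < l) (hl₁ : l < 1)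
    {μ : Measure ℝ} [IsFiniteMeasure μ] (h : IsBernoulliInvariant l μ) {X : Set ℝ}
    (hX : μ X ≠ 0) : ENNReal.ofReal ((1 - l ^ 2) / (2 * log l⁻¹)) ≤ dimH X := by
  obtain ⟨C, hC, hball⟩ := h.exists_measure_closedBall_pow_le hl₀ hl₁
  have hexp : exp (-((1 - l ^ 2) / 2)) ≤ 1 := exp_le_one_iff.2 (by nlinarith)
  convert ofReal_logb_le_dimH_of_measure_closedBall_pow_le hl₀ hl₁ (exp_pos _) hexp hC hball hX
    using 2
  rw [logb, log_exp, log_inv, mul_neg, div_neg, neg_div, div_div]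

/-- There exist `c > 0` and `ε > 0` such that for every `1 - ε < λ < 1`, the Hausdorff
dimension of the Bernoulli convolution measure `μ_λ` is at least `1 - c(1 - λ)`:
every Borel set of full `μ_λ`-measure has Hausdorff dimension at least `1 - c(1 - λ)`. -/
theorem bernoulli_convolution_dim_near_one :
    ∃ c : ℝ, 0 < c ∧ ∃ ε : ℝ, 0 < ε ∧
      ∀ l : ℝ, 1 - ε < l → l < 1 →
        ∀ μ : Measure ℝ, IsProbabilityMeasure μ →
          μ = (1 / 2 : ℝ≥0∞) • Measure.map (fun x : ℝ => l * x - 1) μ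
            + (1 / 2 : ℝ≥0∞) • Measure.map (fun x : ℝ => l * x + 1) μ →
          ∀ X : Set ℝ, MeasurableSet X → μ X = 1 →
            ENNReal.ofReal (1 - c * (1 - l)) ≤ dimH X := by
  refine ⟨1, one_pos, 1, one_pos, fun l hl₀ hl₁ μ _ h X _ hX => ?_⟩
  rw [sub_self] at hl₀
  rw [one_mul, sub_sub_cancel]
  exact (ENNReal.ofReal_le_ofReal (le_one_sub_sq_div_two_mul_log_inv hl₀ hl₁)).trans
    (bernoulli_convolution_dim_near_one_general hl₀ hl₁ h (hX ▸ one_ne_zero))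
end
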